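/- Let (X, ν) be a probability space, T : X → X a measure-preserving transformation, and f ∈ L¹(X, ν). Then for ν-almost every x ∈ X, the averages (1/N) ∑_{n=1}^{N} μ(n) · f(T^{n} x) converge to 0 as N → ∞. (The Möbius function is a good weight with limit zero for the pointwise ergodic theorem; the measure-theoretic Sarnak conjecture.) -/

import Mathlib

/-!
The Möbius function is handled through a uniform bound for the exponential sums
`S N θ = ∑_{n ≤ N} μ(n) e(nθ)`, namely `‖S N θ‖ ≤ C N (log N)^(-11/20)` (`davenport`, a weak form of
Davenport's theorem).

**From exponential sums to almost everywhere convergence** (`ergodic_reduction`). By transference to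
`ZMod Q` and Parseval, the `L²` norm of `(1/N) ∑ μ(n) f(T^n x)` for bounded `f` is
`O((log N)^(-11/20))`. Along `N = ⌊c^k⌋` with `c > 1` the squares `k^(-11/10)` are summable, whence
almost everywhere convergence to `0` on such sequences; since `f` is bounded and `c` is arbitrarily
close to `1`, the gaps are harmless. The maximal ergodic inequality extends the result from bounded
functions to `L¹`. The exponent only needs to exceed `1/2`, which makes it possible to avoid
Siegel's theorem.

**Minor arcs** (`minor_arc`). If `θ` is close to `a/q` with `q` larger than a power of `log N`, the
identity `μ log = -μ * Λ` turns the sum into a bilinear form in `μ` and `Λ`, to which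
Cauchy–Schwarz applies.

**Major arcs** (`major_arc`). If `q ≤ (log N)^8`, sorting `n` by `gcd(n, q)` and expanding in
Dirichlet characters reduces the sum to the summatory functions of `μ χ`. These are estimated by a
Tauberian argument (`tauber`) from bounds for the derivatives of `1 / L(s, χ)` with `Re s > 1`,
uniform as `Re s → 1`. The latter follow from upper bounds for `L` and its derivatives and from
lower bounds for `L`: the `3-4-1` inequality for complex `χ`, combined, for real `χ` near the point
`1`, with an effective bound `L(1, χ) ≫ q^(-1/2-ε)` drawn from the squares in `1 * χ` and a
Pólya–Vinogradov inequality. That effective bound is good enough for `q ≤ (log N)^(6/5)`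
(`real_sum`). For larger `q` the real characters are estimated trivially: there are `O(q^ε)` of
them, each with a coefficient of size `q^(-1/2+ε)`, so that their contribution is
`O(N q^(-11/24)) = O(N (log N)^(-11/20))`.
-/

namespace MoebiusWeight

section

open MeasureTheory Filter Finset Topology

/-! ### Fourier analysis on `ZMod Q` and transference -/

/-- The additive character `x ↦ exp (2 π i x)` of `ℝ`. -/
noncomputable def e (x : ℝ) : ℂ := Complex.exp (2 * Real.pi * Complex.I * x)

lemma e_add (x y : ℝ) : e (x + y) = e x * e y := by
  simp only [e, ← Complex.exp_add]; push_cast; ring_nf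

lemma norm_e (x : ℝ) : ‖e x‖ = 1 := by
  rw [e, show 2 * (Real.pi : ℂ) * Complex.I * x = ((2 * Real.pi * x : ℝ) : ℂ) * Complex.I by
    push_cast; ring]
  exact Complex.norm_exp_ofReal_mul_I _

/-- Parseval's identity on `ZMod Q`. -/
lemma zmod_parseval (Q : ℕ) [NeZero Q] (v : ZMod Q → ℂ) :
    ∑ j : ZMod Q, ‖∑ m : ZMod Q, v m * ZMod.stdAddChar (m * j)‖ ^ 2 = Q * ∑ m, ‖v m‖ ^ 2 := by
  have key : ((∑ j : ZMod Q, ‖∑ m : ZMod Q, v m * ZMod.stdAddChar (m * j)‖ ^ 2 : ℝ) : ℂ)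
      = ((Q * ∑ m, ‖v m‖ ^ 2 : ℝ) : ℂ) := by
    push_cast
    have h1 : ∀ j : ZMod Q, ((‖∑ m : ZMod Q, v m * ZMod.stdAddChar (m * j)‖ : ℂ)) ^ 2
        = ∑ m : ZMod Q, ∑ m' : ZMod Q,
          v m * (starRingEnd ℂ) (v m') * ZMod.stdAddChar (j * (m - m')) := by
      intro j
      rw [← Complex.mul_conj', map_sum, Finset.sum_mul_sum]
      refine Finset.sum_congr rfl fun m _ => Finset.sum_congr rfl fun m' _ => ?_
      rw [(map_mul (starRingEnd ℂ)), ← AddChar.map_neg_eq_conj]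
      rw [show j * (m - m') = m * j + -(m' * j) by ring, AddChar.map_add_eq_mul]
      ring
    simp only [h1]
    rw [Finset.sum_comm, Finset.mul_sum]
    refine Finset.sum_congr rfl fun m _ => ?_
    rw [Finset.sum_comm]
    simp only [← Finset.mul_sum]
    simp only [AddChar.sum_mulShift _ (ZMod.isPrimitive_stdAddChar Q), sub_eq_zero, ZMod.card]
    simp only [Nat.cast_ite, Nat.cast_zero, mul_ite, mul_zero, Finset.sum_ite_eq, Finset.mem_univ,
      if_true, Complex.mul_conj']
    ring
  exact_mod_cast key

/-- Transference: a uniform bound for the exponential sum `∑ cₙ e(nθ)` bounds the `ℓ²` operator norm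
of the associated moving average. -/
lemma transference (c : ℕ → ℂ) (b : ℕ → ℂ) (N L : ℕ) (D : ℝ)
    (hc : ∀ θ : ℝ, ‖∑ n ∈ Icc 1 N, c n * e (n * θ)‖ ≤ D) :
    ∑ m ∈ range L, ‖∑ n ∈ Icc 1 N, c n * b (m + n)‖ ^ 2
      ≤ D ^ 2 * ∑ m ∈ range (L + N + 1), ‖b m‖ ^ 2 := by
  -- modulo `Q` the shifts `m + n` with `m < L`, `n ≤ N` do not wrap around
  set Q := L + N + 1 with hQ
  have : NeZero Q := ⟨by omega⟩
  let w : ZMod Q → ℂ := fun m => b m.val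
  let R : ZMod Q → ℂ := fun m => ∑ n ∈ Icc 1 N, c n * w (m + (n : ZMod Q))
  have hD : 0 ≤ D := (norm_nonneg _).trans (hc 0)
  have sumZ : ∀ F : ℕ → ℝ, ∑ m : ZMod Q, F m.val = ∑ m ∈ range Q, F m := by
    intro F
    symm
    refine Finset.sum_bij (fun m _ => (m : ZMod Q)) (fun _ _ => mem_univ _) ?_ ?_ ?_
    · intro a ha a' ha' h
      have := congrArg ZMod.val h
      rwa [ZMod.val_cast_of_lt (mem_range.1 ha), ZMod.val_cast_of_lt (mem_range.1 ha')] at this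
    · intro m _
      exact ⟨m.val, mem_range.2 (ZMod.val_lt m), ZMod.natCast_zmod_val m⟩
    · intro a ha
      rw [ZMod.val_cast_of_lt (mem_range.1 ha)]
  have h1 : ∑ m ∈ range L, ‖∑ n ∈ Icc 1 N, c n * b (m + n)‖ ^ 2 ≤ ∑ m : ZMod Q, ‖R m‖ ^ 2 := by
    have h2 : ∑ m : ZMod Q, ‖R m‖ ^ 2 = ∑ m ∈ range Q, ‖R (m : ZMod Q)‖ ^ 2 := by
      rw [← sumZ (fun m => ‖R (m : ZMod Q)‖ ^ 2)]
      simp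
    rw [h2]
    calc _ = ∑ m ∈ range L, ‖R (m : ZMod Q)‖ ^ 2 := by
          refine Finset.sum_congr rfl fun m hm => ?_
          congr 2
          refine Finset.sum_congr rfl fun n hn => ?_
          have : (m + n : ℕ) < Q := by
            have := mem_range.1 hm; have := (mem_Icc.1 hn).2; omega
          simp only [w, ← Nat.cast_add, ZMod.val_cast_of_lt this]
      _ ≤ _ := Finset.sum_le_sum_of_subset_of_nonneg
          (by intro a ha; simp only [mem_range] at *; omega) (fun _ _ _ => by positivity)
  have h3 : ∀ j : ZMod Q, ∑ m : ZMod Q, R m * ZMod.stdAddChar (m * j)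
      = (∑ n ∈ Icc 1 N, c n * ZMod.stdAddChar (-((n : ZMod Q) * j)))
        * ∑ m : ZMod Q, w m * ZMod.stdAddChar (m * j) := by
    intro j
    simp only [R, Finset.sum_mul]
    rw [Finset.sum_comm]
    refine Finset.sum_congr rfl fun n _ => ?_
    rw [Finset.mul_sum, ← Equiv.sum_comp (Equiv.addRight (n : ZMod Q)) (fun m => c n *
      ZMod.stdAddChar (-((n : ZMod Q) * j)) * (w m * ZMod.stdAddChar (m * j)))]
    refine Finset.sum_congr rfl fun m _ => ?_
    simp only [Equiv.coe_addRight]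
    rw [show m * j = -(n * j) + (m + n) * j by ring, AddChar.map_add_eq_mul]
    ring
  have h4 : ∀ j : ZMod Q,
      ‖∑ n ∈ Icc 1 N, c n * ZMod.stdAddChar (-((n : ZMod Q) * j))‖ ≤ D := by
    intro j
    convert hc (-(j.val : ℝ) / Q) using 3 with n
    refine congrArg _ ?_
    have : (-((n : ZMod Q) * j)) = ((-(n * j.val : ℤ) : ℤ) : ZMod Q) := by
      push_cast; simp
    rw [this, ZMod.stdAddChar_coe, e]
    congr 1
    push_cast
    ring
  have hQpos : (0 : ℝ) < Q := by exact_mod_cast Nat.pos_of_ne_zero (NeZero.ne Q)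
  have h5 : Q * ∑ m : ZMod Q, ‖R m‖ ^ 2 ≤ Q * (D ^ 2 * ∑ m : ZMod Q, ‖w m‖ ^ 2) := by
    rw [← zmod_parseval, mul_left_comm, ← zmod_parseval, Finset.mul_sum]
    refine Finset.sum_le_sum fun j _ => ?_
    rw [h3, norm_mul, mul_pow]
    gcongr
    exact h4 j
  have h6 := le_of_mul_le_mul_left h5 hQpos
  rw [show ∑ m : ZMod Q, ‖w m‖ ^ 2 = ∑ m ∈ range Q, ‖b m‖ ^ 2 from sumZ (fun m => ‖b m‖ ^ 2)] at h6
  exact h1.trans h6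

end

section

open MeasureTheory Filter Finset Topology

/-! ### The ergodic part: mean square bounds, maximal inequality, passage to `L¹` -/

section Ergodic

set_option linter.unusedSectionVars false

variable {X : Type*} [MeasurableSpace X] {ν : Measure X} [IsProbabilityMeasure ν] {T : X → X}

lemma integral_comp_mp (hT : MeasurePreserving T ν ν) {F : X → ℝ} (hF : Measurable F) :
    ∫ x, F (T x) ∂ν = ∫ x, F x ∂ν := by
  conv_rhs => rw [← hT.map_eq]
  rw [integral_map hT.measurable.aemeasurable hF.aestronglyMeasurable]

/-- The mean square of a weighted ergodic sum of a bounded function is controlled by the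
supremum of the exponential sum of the weights. -/
lemma integral_sq_le (hT : MeasurePreserving T ν ν) (c : ℕ → ℝ) (N : ℕ) (D : ℝ)
    (hc : ∀ θ : ℝ, ‖∑ n ∈ Icc 1 N, (c n : ℂ) * e (n * θ)‖ ≤ D) (g : X → ℝ) (hg : Measurable g)
    (B : ℝ) (hB : ∀ x, |g x| ≤ B) :
    ∫ x, (∑ n ∈ Icc 1 N, c n * g (T^[n] x)) ^ 2 ∂ν ≤ D ^ 2 * B ^ 2 := by
  set F : X → ℝ := fun x => (∑ n ∈ Icc 1 N, c n * g (T^[n] x)) ^ 2 with hF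
  have hFm : Measurable F := by
    refine Measurable.pow_const (Finset.measurable_sum _ fun n _ => ?_) 2
    exact (hg.comp (hT.iterate n).measurable).const_mul _
  have hFb : ∀ x, |F x| ≤ (∑ n ∈ Icc 1 N, |c n| * B) ^ 2 := by
    intro x
    simp only [hF, abs_pow]
    gcongr
    refine (abs_sum_le_sum_abs _ _).trans (sum_le_sum fun n _ => ?_)
    rw [abs_mul]
    gcongr
    exact hB _
  have hFi : ∀ m, Integrable (fun x => F (T^[m] x)) ν := fun m =>
    Integrable.of_bound (hFm.comp (hT.iterate m).measurable).aestronglyMeasurable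
      ((∑ n ∈ Icc 1 N, |c n| * B) ^ 2) (ae_of_all _ fun x => hFb _)
  have hpt : ∀ L : ℕ, ∀ x, ∑ m ∈ range L, F (T^[m] x) ≤ D ^ 2 * ((L + N + 1) * B ^ 2) := by
    intro L x
    have := transference (fun n => (c n : ℂ)) (fun m => ((g (T^[m] x) : ℝ) : ℂ)) N L D hc
    calc ∑ m ∈ range L, F (T^[m] x)
        = ∑ m ∈ range L, ‖∑ n ∈ Icc 1 N, (c n : ℂ) * ((g (T^[m + n] x) : ℝ) : ℂ)‖ ^ 2 := by
          refine sum_congr rfl fun m _ => ?_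
          have : (∑ n ∈ Icc 1 N, (c n : ℂ) * ((g (T^[m + n] x) : ℝ) : ℂ))
              = ((∑ n ∈ Icc 1 N, c n * g (T^[n] (T^[m] x)) : ℝ) : ℂ) := by
            push_cast
            refine sum_congr rfl fun n _ => ?_
            rw [← Function.iterate_add_apply, add_comm n m]
          rw [this, Complex.norm_real, Real.norm_eq_abs, sq_abs]
      _ ≤ _ := this
      _ ≤ D ^ 2 * ∑ m ∈ range (L + N + 1), B ^ 2 := by
          gcongr with m _
          rw [Complex.norm_real, Real.norm_eq_abs]
          exact hB _
      _ = _ := by simp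
  have hInt : ∀ L : ℕ, L * ∫ x, F x ∂ν ≤ D ^ 2 * ((L + N + 1) * B ^ 2) := by
    intro L
    calc L * ∫ x, F x ∂ν = ∑ m ∈ range L, ∫ x, F (T^[m] x) ∂ν := by
          rw [sum_congr rfl fun m _ => integral_comp_mp (hT.iterate m) hFm]; simp
      _ = ∫ x, ∑ m ∈ range L, F (T^[m] x) ∂ν := (integral_finsetSum _ fun m _ => hFi m).symm
      _ ≤ ∫ x, D ^ 2 * ((L + N + 1) * B ^ 2) ∂ν :=
          integral_mono (integrable_finsetSum _ fun m _ => hFi m) (integrable_const _) (hpt L)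
      _ = _ := by simp
  have hlim : Tendsto (fun L : ℕ => D ^ 2 * B ^ 2 + (D ^ 2 * B ^ 2 * (N + 1)) / (L : ℝ)) atTop
      (𝓝 (D ^ 2 * B ^ 2 + 0)) :=
    tendsto_const_nhds.add (tendsto_const_div_atTop_nhds_zero_nat _)
  rw [add_zero] at hlim
  refine ge_of_tendsto hlim ?_
  filter_upwards [eventually_gt_atTop 0] with L hL
  have hL' : (0 : ℝ) < L := by exact_mod_cast hL
  have := hInt L
  rw [← sub_nonneg]
  have h2 : D ^ 2 * B ^ 2 + D ^ 2 * B ^ 2 * (N + 1) / (L : ℝ) - ∫ x, F x ∂ν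
    = (D ^ 2 * ((L + N + 1) * B ^ 2) - L * ∫ x, F x ∂ν) / L := by
    field_simp; ring
  rw [h2]
  exact div_nonneg (by linarith) hL'.le

/-- The Garsia functions `M₀ = 0`, `M_{N+1}(x) = max 0 (φ x + M_N (T x))`, i.e. the maximum over
`n ≤ N` of the Birkhoff sums of `φ`. -/
noncomputable def garsia (T : X → X) (φ : X → ℝ) : ℕ → X → ℝ
  | 0 => fun _ => 0
  | N + 1 => fun x => max 0 (φ x + garsia T φ N (T x))

lemma garsia_nonneg (φ : X → ℝ) (N : ℕ) (x : X) : 0 ≤ garsia T φ N x := by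
  cases N with
  | zero => exact le_rfl
  | succ N => exact le_max_left _ _

lemma garsia_mono (φ : X → ℝ) (N : ℕ) (x : X) : garsia T φ N x ≤ garsia T φ (N + 1) x := by
  induction N generalizing x with
  | zero => exact le_max_left _ _
  | succ N ih =>
    simp only [garsia]
    exact max_le_max le_rfl (add_le_add le_rfl (ih (T x)))

lemma garsia_measurable (hT : Measurable T) {φ : X → ℝ} (hφ : Measurable φ) (N : ℕ) :
    Measurable (garsia T φ N) := by
  induction N with
  | zero => exact measurable_const
  | succ N ih => exact measurable_const.max (hφ.add (ih.comp hT))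

lemma garsia_integrable (hT : MeasurePreserving T ν ν) {φ : X → ℝ} (hφ : Integrable φ ν) (N : ℕ) :
    Integrable (garsia T φ N) ν := by
  induction N with
  | zero => exact integrable_zero _ _ _
  | succ N ih =>
    exact (integrable_zero _ _ _).sup (hφ.add (hT.integrable_comp_of_integrable ih))

lemma sum_le_garsia (φ : X → ℝ) (N : ℕ) (x : X) :
    ∑ i ∈ range N, φ (T^[i] x) ≤ garsia T φ N x := by
  induction N generalizing x with
  | zero => simp [garsia]
  | succ N ih =>
    rw [sum_range_succ']
    refine le_trans ?_ (le_max_right _ _)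
    have := ih (T x)
    simp only [Function.iterate_zero, id, Function.iterate_succ_apply]
    linarith

/-- The maximal ergodic inequality of weak type `(1,1)`. -/
lemma maximal_ineq (hT : MeasurePreserving T ν ν) {h : X → ℝ} (hm : Measurable h)
    (hi : Integrable h ν) (h0 : ∀ x, 0 ≤ h x) {l : ℝ} (hl : 0 < l) :
    ν {x | ∃ N : ℕ, l * N < ∑ i ∈ range N, h (T^[i] x)} ≤ ENNReal.ofReal ((∫ x, h x ∂ν) / l) := by
  set φ : X → ℝ := fun x => h x - l with hφ
  have hφm : Measurable φ := hm.sub_const _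
  have hφi : Integrable φ ν := hi.sub (integrable_const _)
  let E : ℕ → Set X := fun N => {x | 0 < garsia T φ N x}
  have hEm : ∀ N, MeasurableSet (E N) := fun N =>
    measurableSet_lt measurable_const (garsia_measurable hT.measurable hφm N)
  have hEmono : Monotone E := monotone_nat_of_le_succ fun N x hx =>
    lt_of_lt_of_le hx (garsia_mono φ N x)
  have hsub : {x | ∃ N : ℕ, l * N < ∑ i ∈ range N, h (T^[i] x)} ⊆ ⋃ N, E N := by
    rintro x ⟨N, hN⟩
    refine Set.mem_iUnion.2 ⟨N, lt_of_lt_of_le ?_ (sum_le_garsia φ N x)⟩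
    simp only [hφ, sum_sub_distrib, sum_const, card_range, nsmul_eq_mul]
    linarith
  have hE : ∀ N, ν (E N) ≤ ENNReal.ofReal ((∫ x, h x ∂ν) / l) := by
    intro N
    have hM := garsia_integrable hT hφi N
    have hMT : Integrable (fun x => garsia T φ N (T x)) ν := hT.integrable_comp_of_integrable hM
    have hpt : ∀ x, garsia T φ N x - garsia T φ N (T x) ≤ (E N).indicator φ x := by
      intro x
      by_cases hx : x ∈ E N
      · rw [Set.indicator_of_mem hx]
        cases N with
        | zero => exact (lt_irrefl (0 : ℝ) hx).elim
        | succ N =>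
          have hx' : 0 < garsia T φ (N + 1) x := hx
          have h1 : garsia T φ (N + 1) x = φ x + garsia T φ N (T x) := by
            simp only [garsia] at hx' ⊢
            rcases le_total (φ x + garsia T φ N (T x)) 0 with h | h
            · rw [max_eq_left h] at hx'; exact absurd hx' (lt_irrefl _)
            · exact max_eq_right h
          have := garsia_mono (T := T) φ N (T x)
          linarith
      · rw [Set.indicator_of_notMem hx]
        have h1 : garsia T φ N x ≤ 0 := not_lt.1 hx
        have := garsia_nonneg (T := T) φ N (T x)
        linarith
    have hInt : 0 ≤ ∫ x, (E N).indicator φ x ∂ν := by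
      calc (0 : ℝ) = ∫ x, (garsia T φ N x - garsia T φ N (T x)) ∂ν := by
            rw [integral_sub hM hMT,
              integral_comp_mp hT (garsia_measurable hT.measurable hφm N), sub_self]
        _ ≤ _ := integral_mono (hM.sub hMT) (hφi.indicator (hEm N)) hpt
    rw [integral_indicator (hEm N)] at hInt
    have h2 : ∫ x in E N, φ x ∂ν = ∫ x in E N, h x ∂ν - l * ν.real (E N) := by
      rw [hφ, integral_sub hi.integrableOn (integrable_const _).integrableOn]
      simp [mul_comm]
    have h3 : ∫ x in E N, h x ∂ν ≤ ∫ x, h x ∂ν :=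
      setIntegral_le_integral hi (ae_of_all _ h0)
    have h4 : ν.real (E N) ≤ (∫ x, h x ∂ν) / l := by
      rw [le_div_iff₀ hl]; linarith
    rw [← ofReal_measureReal]
    exact ENNReal.ofReal_le_ofReal h4
  refine (measure_mono hsub).trans ?_
  rw [hEmono.measure_iUnion]
  exact iSup_le hE

end Ergodic

end

section

open MeasureTheory Filter Finset Topology

/-- The exponential sum `∑_{n ≤ N} μ(n) e(nθ)`. -/
noncomputable def S (N : ℕ) (θ : ℝ) : ℂ :=
  ∑ n ∈ Icc 1 N, (ArithmeticFunction.moebius n : ℂ) * e (n * θ)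

/-- The uniform bound for exponential sums with Möbius coefficients (a weak form of Davenport's
theorem). Any exponent beyond `1/2` would suffice for the application. -/
def DavenportBound : Prop :=
  ∃ C : ℝ, ∀ N : ℕ, 2 ≤ N → ∀ θ : ℝ, ‖S N θ‖ ≤ C * N * (Real.log N) ^ (-(11 / 20) : ℝ)

section Ergodic

variable {X : Type*} [MeasurableSpace X] {ν : Measure X} [IsProbabilityMeasure ν] {T : X → X}

lemma abs_moebius_le_one' (n : ℕ) : |(ArithmeticFunction.moebius n : ℝ)| ≤ 1 := by
  exact_mod_cast ArithmeticFunction.abs_moebius_le_one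

/-- Along `⌊c ^ k⌋` the weighted averages of a bounded function tend to zero almost everywhere,
since their mean squares are summable. -/
lemma tendsto_lacunary (hD : DavenportBound) (hT : MeasurePreserving T ν ν) (g : X → ℝ)
    (hg : Measurable g) (B : ℝ) (hB : ∀ x, |g x| ≤ B) (c : ℝ) (hc : 1 < c) :
    ∀ᵐ x ∂ν, Tendsto (fun k : ℕ => (∑ n ∈ Icc 1 ⌊c ^ k⌋₊,
      (ArithmeticFunction.moebius n : ℝ) * g (T^[n] x)) / (⌊c ^ k⌋₊ : ℝ)) atTop (𝓝 0) := by
  obtain ⟨C, hC⟩ := hD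
  set G : ℕ → X → ℝ := fun k x => (∑ n ∈ Icc 1 ⌊c ^ k⌋₊,
      (ArithmeticFunction.moebius n : ℝ) * g (T^[n] x)) / (⌊c ^ k⌋₊ : ℝ) with hG
  have hGm : ∀ k, Measurable (G k) := fun k =>
    (Finset.measurable_sum _ fun n _ => (hg.comp (hT.iterate n).measurable).const_mul _).div_const _
  have hB0 : 0 ≤ B := by
    obtain ⟨x⟩ := ν.nonempty_of_neZero
    exact (abs_nonneg _).trans (hB x)
  have hGb : ∀ k x, |G k x ^ 2| ≤ B ^ 2 := by
    intro k x
    rw [abs_pow]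
    gcongr
    simp only [hG, abs_div, Nat.abs_cast]
    refine div_le_of_le_mul₀ (by positivity) hB0 ?_
    refine (abs_sum_le_sum_abs _ _).trans ?_
    calc _ ≤ ∑ n ∈ Icc 1 ⌊c ^ k⌋₊, B := by
          refine sum_le_sum fun n _ => ?_
          rw [abs_mul]
          calc _ ≤ 1 * B := mul_le_mul (abs_moebius_le_one' n) (hB _) (abs_nonneg _) zero_le_one
            _ = B := one_mul _
      _ = _ := by simp [mul_comm]
  have hGi : ∀ k, Integrable (fun x => G k x ^ 2) ν := fun k =>
    Integrable.of_bound ((hGm k).pow_const 2).aestronglyMeasurable (B ^ 2)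
      (ae_of_all _ (hGb k))
  have hlc : 0 < Real.log c := Real.log_pos hc
  obtain ⟨k0, hk0⟩ : ∃ k0 : ℕ, ∀ k ≥ k0, 4 ≤ c ^ k :=
    eventually_atTop.1 ((tendsto_pow_atTop_atTop_of_one_lt hc).eventually_ge_atTop 4)
  -- for `c ^ k ≥ 4` the integer part is at least `c ^ (k / 2)`
  have hbound : ∀ k ≥ k0 + 1, ∫ x, G k x ^ 2 ∂ν
      ≤ C ^ 2 * B ^ 2 * (Real.log c / 2) ^ (-(11 / 10) : ℝ) * (k : ℝ) ^ (-(11 / 10) : ℝ) := by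
    intro k hk
    have h4 := hk0 k (by omega)
    have hk1 : (1 : ℝ) ≤ k := by exact_mod_cast (by omega : 1 ≤ k)
    set N := ⌊c ^ k⌋₊ with hN
    have hN4 : 4 ≤ N := Nat.le_floor (by exact_mod_cast h4)
    have hNpos : (0 : ℝ) < N := by exact_mod_cast (by omega : 0 < N)
    have hlogN : Real.log c / 2 * k ≤ Real.log N := by
      have h5 : c ^ k ≤ (N : ℝ) ^ 2 := by
        have h6 := Nat.lt_floor_add_one (c ^ k)
        rw [← hN] at h6
        have h7 : (4 : ℝ) ≤ N := by exact_mod_cast hN4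
        nlinarith
      have h8 := Real.log_le_log (by positivity) h5
      rw [Real.log_pow, Real.log_pow] at h8
      push_cast at h8
      linarith
    have hlogpos : 0 < Real.log c / 2 * k := by positivity
    have h1 := integral_sq_le hT (fun n => (ArithmeticFunction.moebius n : ℝ)) N
      (C * N * (Real.log N) ^ (-(11 / 20) : ℝ)) (fun θ => by
        have := hC N (by omega) θ
        simpa [S] using this) g hg B hB
    have h2 : ∫ x, G k x ^ 2 ∂ν = (∫ x, (∑ n ∈ Icc 1 N,
        (ArithmeticFunction.moebius n : ℝ) * g (T^[n] x)) ^ 2 ∂ν) / (N : ℝ) ^ 2 := by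
      rw [← integral_div]
      simp only [hG, div_pow]
      rfl
    rw [h2, div_le_iff₀ (by positivity)]
    refine h1.trans ?_
    have h9 : (Real.log N) ^ (-(11 / 10) : ℝ)
        ≤ (Real.log c / 2) ^ (-(11 / 10) : ℝ) * (k : ℝ) ^ (-(11 / 10) : ℝ) := by
      rw [← Real.mul_rpow (by positivity) (by positivity)]
      exact Real.rpow_le_rpow_of_nonpos hlogpos hlogN (by norm_num)
    have h10 : ((Real.log N) ^ (-(11 / 20) : ℝ)) ^ 2 = (Real.log N) ^ (-(11 / 10) : ℝ) := by
      rw [← Real.rpow_natCast, ← Real.rpow_mul (hlogpos.le.trans hlogN)]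
      norm_num
    calc (C * N * (Real.log N) ^ (-(11 / 20) : ℝ)) ^ 2 * B ^ 2
        = C ^ 2 * B ^ 2 * N ^ 2 * (Real.log N) ^ (-(11 / 10) : ℝ) := by
          rw [mul_pow, h10]; ring
      _ ≤ C ^ 2 * B ^ 2 * N ^ 2 *
          ((Real.log c / 2) ^ (-(11 / 10) : ℝ) * (k : ℝ) ^ (-(11 / 10) : ℝ)) := by gcongr
      _ = _ := by ring
  have hsum : Summable (fun k => ∫ x, G k x ^ 2 ∂ν) := by
    have hs : Summable fun k : ℕ =>
        C ^ 2 * B ^ 2 * (Real.log c / 2) ^ (-(11 / 10) : ℝ) * (k : ℝ) ^ (-(11 / 10) : ℝ) :=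
      (Real.summable_nat_rpow.2 (by norm_num)).mul_left _
    refine Summable.of_norm_bounded_eventually_nat hs ?_
    filter_upwards [eventually_ge_atTop (k0 + 1)] with k hk
    rw [Real.norm_of_nonneg (integral_nonneg fun x => sq_nonneg _)]
    exact hbound k hk
  have hlint : ∫⁻ x, ∑' k, ENNReal.ofReal (G k x ^ 2) ∂ν ≠ ⊤ := by
    rw [lintegral_tsum fun k => ((hGm k).pow_const 2).ennreal_ofReal.aemeasurable]
    have : ∀ k, ∫⁻ x, ENNReal.ofReal (G k x ^ 2) ∂ν = ENNReal.ofReal (∫ x, G k x ^ 2 ∂ν) :=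
      fun k => (ofReal_integral_eq_lintegral_ofReal (hGi k) (ae_of_all _ fun x => sq_nonneg _)).symm
    simp only [this]
    exact hsum.tsum_ofReal_ne_top
  have hae := ae_lt_top (Measurable.tsum fun k =>
    ((hGm k).pow_const 2).ennreal_ofReal) hlint
  filter_upwards [hae] with x hx
  have h1 := ENNReal.tendsto_atTop_zero_of_tsum_ne_top hx.ne
  have h2 : Tendsto (fun k => G k x ^ 2) atTop (𝓝 0) := by
    have := (ENNReal.tendsto_toReal ENNReal.zero_ne_top).comp h1
    simpa [Function.comp_def, ENNReal.toReal_ofReal, sq_nonneg] using this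
  have h3 := h2.sqrt
  simp only [Real.sqrt_sq_eq_abs, Real.sqrt_zero] at h3
  exact (tendsto_zero_iff_abs_tendsto_zero _).2 h3

/-- For bounded `g`, convergence along `⌊c ^ k⌋` for ratios `c` tending to `1` gives convergence
along all `N`, because the sums change little between consecutive terms. -/
lemma tendsto_bounded (hD : DavenportBound) (hT : MeasurePreserving T ν ν) (g : X → ℝ)
    (hg : Measurable g) (B : ℝ) (hB : ∀ x, |g x| ≤ B) :
    ∀ᵐ x ∂ν, Tendsto (fun N : ℕ => (∑ n ∈ Icc 1 N,
      (ArithmeticFunction.moebius n : ℝ) * g (T^[n] x)) / (N : ℝ)) atTop (𝓝 0) := by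
  have hall : ∀ᵐ x ∂ν, ∀ j : ℕ, Tendsto (fun k : ℕ =>
      (∑ n ∈ Icc 1 ⌊(1 + 1 / ((j : ℝ) + 1)) ^ k⌋₊,
      (ArithmeticFunction.moebius n : ℝ) * g (T^[n] x)) / (⌊(1 + 1 / ((j : ℝ) + 1)) ^ k⌋₊ : ℝ))
      atTop (𝓝 0) :=
    ae_all_iff.2 fun j => tendsto_lacunary hD hT g hg B hB _ (by
      have : 0 < 1 / ((j : ℝ) + 1) := by positivity
      linarith)
  filter_upwards [hall] with x hx
  -- adding `B` to every term makes the partial sums monotone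
  set u : ℕ → ℝ := fun N => ∑ n ∈ Icc 1 N,
      ((ArithmeticFunction.moebius n : ℝ) * g (T^[n] x) + B) with hu
  have hmono : Monotone u := by
    refine monotone_nat_of_le_succ fun N => ?_
    simp only [hu]
    rw [sum_Icc_succ_top (by omega)]
    have h1 : |(ArithmeticFunction.moebius (N + 1) : ℝ) * g (T^[N + 1] x)| ≤ B := by
      rw [abs_mul]
      calc _ ≤ 1 * B := mul_le_mul (abs_moebius_le_one' _) (hB _) (abs_nonneg _) zero_le_one
        _ = B := one_mul _
    have := (abs_le.1 h1).1
    linarith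
  have hue : ∀ N : ℕ, 0 < N → u N / N = (∑ n ∈ Icc 1 N,
      (ArithmeticFunction.moebius n : ℝ) * g (T^[n] x)) / (N : ℝ) + B := by
    intro N hN
    have : (N : ℝ) ≠ 0 := by exact_mod_cast hN.ne'
    simp only [hu, sum_add_distrib, sum_const, Nat.card_Icc, nsmul_eq_mul]
    field_simp
    simp [mul_comm]
  have h1 := tendsto_div_of_monotone_of_tendsto_div_floor_pow u B hmono
    (fun j => 1 + 1 / ((j : ℝ) + 1)) (fun j => by
      have : 0 < 1 / ((j : ℝ) + 1) := by positivity
      linarith)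
    (by simpa using tendsto_const_nhds.add (tendsto_one_div_add_atTop_nhds_zero_nat (𝕜 := ℝ)))
    (fun j => by
      have h2 := (hx j).add (tendsto_const_nhds (x := B))
      rw [zero_add] at h2
      refine h2.congr fun k => (hue _ ?_).symm
      refine Nat.floor_pos.2 (one_le_pow₀ ?_)
      have : 0 < 1 / ((j : ℝ) + 1) := by positivity
      linarith)
  have h3 := h1.sub (tendsto_const_nhds (x := B))
  rw [sub_self] at h3
  refine h3.congr' ?_
  filter_upwards [eventually_gt_atTop 0] with N hN
  rw [hue N hN]; ring

/-- The deduction of the pointwise theorem from the exponential sum bound. -/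
theorem ergodic_reduction (hD : DavenportBound) (hT : MeasurePreserving T ν ν) (f : X → ℝ)
    (hf : Integrable f ν) :
    ∀ᵐ x ∂ν, Tendsto
      (fun N : ℕ => (1 / (N : ℝ)) *
        ∑ n ∈ Finset.Icc 1 N,
          (ArithmeticFunction.moebius n : ℝ) * f (T^[n] x))
      atTop (nhds 0) := by
  have happ : ∀ j : ℕ, ∃ g : SimpleFunc X ℝ, eLpNorm (f - ⇑g) 1 ν < ENNReal.ofReal ((1 / 4) ^ j) ∧
      MemLp g 1 ν := fun j =>
    (memLp_one_iff_integrable.2 hf).exists_simpleFunc_eLpNorm_sub_lt ENNReal.one_ne_top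
      (by simp)
  choose g hg hgL using happ
  have hgi : ∀ j, Integrable (g j) ν := fun j => memLp_one_iff_integrable.1 (hgL j)
  set f' : X → ℝ := hf.aestronglyMeasurable.mk f with hf'
  have hf'm : Measurable f' := hf.aestronglyMeasurable.stronglyMeasurable_mk.measurable
  have hff' : f =ᵐ[ν] f' := hf.aestronglyMeasurable.ae_eq_mk
  have hf'i : Integrable f' ν := hf.congr hff'
  -- the error functions, shifted by one step because the sums start at `n = 1`
  set h : ℕ → X → ℝ := fun j x => |f' (T x) - g j (T x)| with hh
  have hhm : ∀ j, Measurable (h j) := fun j =>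
    continuous_abs.measurable.comp ((hf'm.sub (g j).measurable).comp hT.measurable)
  have hhi : ∀ j, Integrable (h j) ν := fun j =>
    (hT.integrable_comp_of_integrable (hf'i.sub (hgi j))).abs
  have hhint : ∀ j, ∫ x, h j x ∂ν ≤ (1 / 4) ^ j := by
    intro j
    have e1 : ∫ x, h j x ∂ν = ∫ x, |f' x - g j x| ∂ν :=
      integral_comp_mp hT (F := fun x => |f' x - g j x|)
        (continuous_abs.measurable.comp (hf'm.sub (g j).measurable))
    have e2 : ∫ x, |f' x - g j x| ∂ν = ∫ x, ‖(f - ⇑(g j)) x‖ ∂ν := by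
      refine integral_congr_ae ?_
      filter_upwards [hff'] with x hx
      simp [hx]
    rw [e1, e2, integral_norm_eq_lintegral_enorm (hf.sub (hgi j)).aestronglyMeasurable]
    refine ENNReal.toReal_le_of_le_ofReal (by positivity) ?_
    have := (hg j).le
    rwa [eLpNorm_one_eq_lintegral_enorm] at this
  set bad : ℕ → Set X := fun j => {x | ∃ N : ℕ, (1 / 2) ^ j * (N : ℝ)
    < ∑ i ∈ range N, h j (T^[i] x)} with hbad
  have hbadm : ∀ j, ν (bad j) ≤ ENNReal.ofReal ((1 / 2) ^ j) := by
    intro j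
    refine (maximal_ineq hT (hhm j) (hhi j) (fun x => abs_nonneg _)
      (by positivity : (0 : ℝ) < (1 / 2) ^ j)).trans (ENNReal.ofReal_le_ofReal ?_)
    rw [div_le_iff₀ (by positivity), ← mul_pow]
    norm_num
    simpa using hhint j
  have hbc : ∑' j, ν (bad j) ≠ ⊤ := by
    refine ne_top_of_le_ne_top ?_ (ENNReal.tsum_le_tsum hbadm)
    exact (summable_geometric_of_lt_one (by norm_num) (by norm_num)).tsum_ofReal_ne_top
  have hae1 := ae_eventually_notMem hbc
  have hae2 : ∀ᵐ x ∂ν, ∀ n : ℕ, f (T^[n] x) = f' (T^[n] x) :=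
    ae_all_iff.2 fun n => (hT.iterate n).quasiMeasurePreserving.ae hff'
  have hae3 : ∀ᵐ x ∂ν, ∀ j : ℕ, Tendsto (fun N : ℕ => (∑ n ∈ Icc 1 N,
      (ArithmeticFunction.moebius n : ℝ) * g j (T^[n] x)) / (N : ℝ)) atTop (𝓝 0) :=
    ae_all_iff.2 fun j => by
      obtain ⟨B, hB⟩ := (g j).exists_forall_norm_le
      exact tendsto_bounded hD hT (g j) (g j).measurable B hB
  filter_upwards [hae1, hae2, hae3] with x h1 h2 h3
  rw [Metric.tendsto_atTop]
  intro ε hε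
  obtain ⟨j, hjx, hj⟩ : ∃ j : ℕ, x ∉ bad j ∧ (1 / 2 : ℝ) ^ j < ε / 2 := by
    have := (tendsto_pow_atTop_nhds_zero_of_lt_one (by norm_num : (0 : ℝ) ≤ 1 / 2)
      (by norm_num)).eventually_lt_const (half_pos hε)
    exact (h1.and this).exists
  obtain ⟨N0, hN0⟩ := Metric.tendsto_atTop.1 (h3 j) (ε / 2) (half_pos hε)
  refine ⟨max N0 1, fun N hN => ?_⟩
  have hN1 : (0 : ℝ) < N := by exact_mod_cast (lt_of_lt_of_le one_pos (le_trans (le_max_right _ _) hN))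
  have e1 := hN0 N (le_trans (le_max_left _ _) hN)
  rw [Real.dist_eq, sub_zero] at e1 ⊢
  have e2 : ∑ i ∈ range N, h j (T^[i] x) ≤ (1 / 2) ^ j * N := by
    by_contra hcon
    exact hjx ⟨N, not_le.1 hcon⟩
  have e3 : |∑ n ∈ Icc 1 N, (ArithmeticFunction.moebius n : ℝ) * (f (T^[n] x) - g j (T^[n] x))|
      ≤ (1 / 2) ^ j * N := by
    refine le_trans ?_ e2
    have e6 : ∑ i ∈ range N, h j (T^[i] x) = ∑ n ∈ Icc 1 N, |f' (T^[n] x) - g j (T^[n] x)| := by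
      rw [show Icc 1 N = Ico 1 (N + 1) by ext; simp, sum_Ico_eq_sum_range]
      refine sum_congr (by simp) fun i _ => ?_
      rw [add_comm 1 i]
      simp only [hh, Function.iterate_succ_apply']
    rw [e6]
    refine (abs_sum_le_sum_abs _ _).trans (sum_le_sum fun n _ => ?_)
    rw [abs_mul, h2]
    exact mul_le_of_le_one_left (abs_nonneg _) (abs_moebius_le_one' n)
  have e4 : (1 / (N : ℝ)) * ∑ n ∈ Icc 1 N, (ArithmeticFunction.moebius n : ℝ) * f (T^[n] x)
      = (∑ n ∈ Icc 1 N, (ArithmeticFunction.moebius n : ℝ) * g j (T^[n] x)) / N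
        + (∑ n ∈ Icc 1 N, (ArithmeticFunction.moebius n : ℝ) * (f (T^[n] x) - g j (T^[n] x))) / N := by
    simp only [mul_sub, sum_sub_distrib]
    ring
  rw [e4]
  refine (abs_add_le _ _).trans_lt ?_
  have e5 : |(∑ n ∈ Icc 1 N, (ArithmeticFunction.moebius n : ℝ) * (f (T^[n] x) - g j (T^[n] x))) / N|
      ≤ (1 / 2) ^ j := by
    rw [abs_div, abs_of_pos hN1, div_le_iff₀ hN1]
    exact e3
  linarith

end Ergodic

end

section

open Filter Finset Topology
open scoped ArithmeticFunction.vonMangoldt ArithmeticFunction.Moebius ArithmeticFunction.zeta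

/-! ### Minor arcs -/

lemma e_intCast (n : ℤ) : e n = 1 := by
  rw [e, Complex.exp_eq_one_iff]
  exact ⟨n, by push_cast; ring⟩

lemma e_zero : e 0 = 1 := by simp [e]

lemma e_nat_mul (n : ℕ) (x : ℝ) : e (n * x) = e x ^ n := by
  simp only [e, ← Complex.exp_nat_mul]; push_cast; ring_nf

lemma e_neg (x : ℝ) : e (-x) = (starRingEnd ℂ) (e x) := by
  simp only [e, ← Complex.exp_conj]
  congr 1
  simp [map_ofNat (starRingEnd ℂ) 2]

/-- The chord length bound `|e(x) - 1| ≥ 4 ‖x‖` where `‖x‖` is the distance to the integers. -/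
lemma four_mul_le_norm_e_sub_one (x : ℝ) : 4 * |x - round x| ≤ ‖e x - 1‖ := by
  set y := x - round x with hy
  have hxy : e x = e y := by
    have : x = y + (round x : ℤ) := by rw [hy]; ring
    rw [this, e_add, e_intCast, mul_one]
  have hy2 : |y| ≤ 1 / 2 := abs_sub_round x
  have h1 : ‖e y - 1‖ = 2 * |Real.sin (Real.pi * y)| := by
    have := Complex.norm_exp_I_mul_ofReal_sub_one (2 * Real.pi * y)
    rw [show (2 * Real.pi * y / 2 : ℝ) = Real.pi * y by ring, norm_mul, Real.norm_eq_abs,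
      Real.norm_eq_abs, abs_two] at this
    rw [← this, e]
    congr 3
    push_cast; ring
  have h2 : 2 * |y| ≤ |Real.sin (Real.pi * y)| := by
    have h3 := Real.mul_le_sin (x := Real.pi * |y|) (by positivity)
      (by nlinarith [Real.pi_pos])
    have h4 : 2 / Real.pi * (Real.pi * |y|) = 2 * |y| := by field_simp
    rw [h4] at h3
    refine h3.trans ?_
    rcases le_total 0 y with h | h
    · rw [abs_of_nonneg h]; exact le_abs_self _
    · rw [abs_of_nonpos h, mul_neg, Real.sin_neg]; exact neg_le_abs _
  rw [hxy, h1]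
  linarith

lemma norm_geom_le {z : ℂ} (hz : ‖z‖ = 1) (a b : ℕ) :
    ‖∑ m ∈ Ico a b, z ^ m‖ * ‖z - 1‖ ≤ 2 := by
  rw [← norm_mul]
  rcases le_total a b with h | h
  · rw [geom_sum_Ico_mul z h]
    refine (norm_sub_le _ _).trans ?_
    simp [hz]
    norm_num
  · simp [Ico_eq_empty_of_le h]

/-- `|∑_{m ≤ M} m e(mφ)| ≤ M / δ` if `φ` is at distance at least `δ` from the integers. -/
lemma norm_sum_mul_e_le (M : ℕ) (φ δ : ℝ) (hδ : 0 < δ) (h : δ ≤ |φ - round φ|) :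
    ‖∑ m ∈ Ioc 0 M, (m : ℂ) * e (m * φ)‖ ≤ M / δ := by
  set z := e φ
  have hz : ‖z‖ = 1 := norm_e φ
  have h1 : ∑ m ∈ Ioc 0 M, (m : ℂ) * e (m * φ) = ∑ a ∈ Ioc 0 M, ∑ m ∈ Ico a (M + 1), z ^ m := by
    have : ∀ m ∈ Ioc 0 M, (m : ℂ) * e (m * φ) = ∑ a ∈ Ioc 0 M, if a ≤ m then z ^ m else 0 := by
      intro m hm
      rw [e_nat_mul, ← sum_filter, sum_const, nsmul_eq_mul]
      congr 2
      have : {a ∈ Ioc 0 M | a ≤ m} = Ioc 0 m := by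
        ext a; simp only [mem_filter, mem_Ioc] at hm ⊢; omega
      rw [this]; simp
    rw [sum_congr rfl this, sum_comm]
    refine sum_congr rfl fun a ha => ?_
    rw [← sum_filter]
    refine sum_congr ?_ fun _ _ => rfl
    ext m; simp only [mem_filter, mem_Ioc, mem_Ico] at ha ⊢; omega
  have h4 : 4 * δ ≤ ‖z - 1‖ := by
    have := four_mul_le_norm_e_sub_one φ
    linarith
  have hpos : 0 < ‖z - 1‖ := by linarith
  rw [h1]
  refine (norm_sum_le _ _).trans ?_
  calc ∑ a ∈ Ioc 0 M, ‖∑ m ∈ Ico a (M + 1), z ^ m‖ ≤ ∑ a ∈ Ioc 0 M, 1 / δ := by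
        refine sum_le_sum fun a _ => ?_
        have h5 := norm_geom_le hz a (M + 1)
        rw [le_div_iff₀ hδ]
        have h6 : 0 ≤ ‖∑ m ∈ Ico a (M + 1), z ^ m‖ := norm_nonneg _
        nlinarith
    _ = _ := by simp; ring

lemma norm_sum_mul_e_le_sq (M : ℕ) (φ : ℝ) :
    ‖∑ m ∈ Ioc 0 M, (m : ℂ) * e (m * φ)‖ ≤ M ^ 2 := by
  refine (norm_sum_le _ _).trans ?_
  calc ∑ m ∈ Ioc 0 M, ‖(m : ℂ) * e (m * φ)‖ ≤ ∑ m ∈ Ioc 0 M, (M : ℝ) := by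
        refine sum_le_sum fun m hm => ?_
        rw [norm_mul, norm_e, mul_one, Complex.norm_natCast]
        exact_mod_cast (mem_Ioc.1 hm).2
    _ = _ := by simp; ring

/-- The number of `j < k` for which `jθ` is within `δ` of an integer: blocks of length `q / 2` give
points that are `1 / (2 q)`-separated modulo one. -/
lemma card_near_le (θ δ : ℝ) (hδ : 0 ≤ δ) (a : ℤ) (q : ℕ) (hq : 2 ≤ q) (haq : IsCoprime a (q : ℤ))
    (hθ : |θ - a / q| ≤ 1 / (q : ℝ) ^ 2) (k : ℕ) :
    ((#{j ∈ range k | |((j : ℕ) : ℝ) * θ - round (((j : ℕ) : ℝ) * θ)| ≤ δ} : ℕ) : ℝ)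
      ≤ (3 * k / q + 1) * (4 * δ * q + 1) := by
  set B := q / 2 with hB
  have hB1 : 1 ≤ B := by omega
  have hq0 : (0 : ℝ) < q := by exact_mod_cast (by omega : 0 < q)
  set x : ℕ → ℝ := fun j => (j : ℝ) * θ - round ((j : ℝ) * θ) with hx
  let Φ : ℕ → ℕ × ℕ := fun j => (j / B, ⌊(x j + δ) * (2 * q)⌋₊)
  have hsep : ∀ j j' : ℕ, j / B = j' / B → j' < j → 1 / (2 * q : ℝ) ≤ |x j - x j'| := by
    intro j j' hjj hlt
    set r : ℤ := round ((j : ℝ) * θ) - round ((j' : ℝ) * θ)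
    set i : ℕ := j - j' with hi
    have hi0 : 0 < i := by omega
    have hiB : i < B := by
      have h1 := Nat.div_add_mod j B
      have h2 := Nat.div_add_mod j' B
      have h3 := Nat.mod_lt j (show B > 0 by omega)
      rw [hjj] at h1
      omega
    have hxi : x j - x j' = i * θ - r := by
      simp only [hx, r, hi]
      rw [Nat.cast_sub hlt.le]; push_cast; ring
    have hne : (i : ℤ) * a - r * q ≠ 0 := by
      intro h0
      have hdvd : (q : ℤ) ∣ i * a := ⟨r, by linarith⟩
      have := haq.symm.dvd_of_dvd_mul_right hdvd
      have := Int.le_of_dvd (by exact_mod_cast hi0) this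
      omega
    have h1 : (1 : ℝ) ≤ |(i : ℝ) * a - r * q| := by
      exact_mod_cast Int.one_le_abs hne
    have h2 : (i : ℝ) * θ - r = ((i : ℝ) * a - r * q) / q + i * (θ - a / q) := by
      field_simp; ring
    have h3 : |(i : ℝ) * (θ - a / q)| ≤ 1 / (2 * q) := by
      rw [abs_mul, Nat.abs_cast]
      have hi2 : (i : ℝ) ≤ q / 2 := by
        rw [le_div_iff₀ two_pos]; exact_mod_cast (by omega : i * 2 ≤ q)
      calc (i : ℝ) * |θ - a / q| ≤ (q / 2) * (1 / (q : ℝ) ^ 2) := by gcongr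
        _ = _ := by field_simp
    have h4 : 1 / (q : ℝ) ≤ |((i : ℝ) * a - r * q) / q| := by
      rw [abs_div, Nat.abs_cast]; gcongr
    rw [hxi, h2]
    have h5 := abs_sub_abs_le_abs_sub (((i : ℝ) * a - r * q) / q) (-(i * (θ - a / q)))
    rw [sub_neg_eq_add, abs_neg] at h5
    have h6 : 1 / (q : ℝ) = 1 / (2 * q) + 1 / (2 * q) := by field_simp; norm_num
    linarith
  have hcard : #{j ∈ range k | |x j| ≤ δ} ≤ #(range (k / B + 1) ×ˢ range (⌊4 * δ * q⌋₊ + 1)) := by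
    refine card_le_card_of_injOn Φ ?_ ?_
    · intro j hj
      simp only [coe_filter, mem_range, Set.mem_ofPred_eq] at hj
      simp only [coe_product, Set.mem_prod, mem_coe, mem_range, Φ]
      refine ⟨Nat.lt_succ_of_le (Nat.div_le_div_right hj.1.le), Nat.lt_succ_of_le ?_⟩
      refine Nat.floor_le_floor ?_
      have := (abs_le.1 hj.2).2
      nlinarith
    · have key : ∀ j j' : ℕ, |x j| ≤ δ → |x j'| ≤ δ → Φ j = Φ j' → ¬ j' < j := by
        intro j j' hj hj' hΦ hlt
        simp only [Φ, Prod.mk.injEq] at hΦ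
        have h1 := hsep j j' hΦ.1 hlt
        have n1 : 0 ≤ (x j + δ) * (2 * q) := by
          have := (abs_le.1 hj).1
          have : 0 ≤ x j + δ := by linarith
          positivity
        have n2 : 0 ≤ (x j' + δ) * (2 * q) := by
          have := (abs_le.1 hj').1
          have : 0 ≤ x j' + δ := by linarith
          positivity
        have f1 := Nat.floor_le n1
        have f2 := Nat.floor_le n2
        have g1 := Nat.lt_floor_add_one ((x j + δ) * (2 * q))
        have g2 := Nat.lt_floor_add_one ((x j' + δ) * (2 * q))
        rw [hΦ.2] at f1 g1
        have h2 : |(x j - x j') * (2 * q)| < 1 := by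
          rw [abs_lt]; constructor <;> nlinarith
        rw [abs_mul, abs_of_pos (by positivity : (0 : ℝ) < 2 * q)] at h2
        have h3 : 1 / (2 * q : ℝ) * (2 * q) = 1 := by field_simp
        nlinarith
      intro j hj j' hj' hΦ
      simp only [coe_filter, mem_range, Set.mem_ofPred_eq] at hj hj'
      rcases lt_trichotomy j j' with h | h | h
      · exact absurd h (key j' j hj'.2 hj.2 hΦ.symm)
      · exact h
      · exact absurd h (key j j' hj.2 hj'.2 hΦ)
  calc ((#{j ∈ range k | |x j| ≤ δ} : ℕ) : ℝ)
      ≤ ((k / B + 1 : ℕ) : ℝ) * ((⌊4 * δ * q⌋₊ + 1 : ℕ) : ℝ) := by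
        rw [card_product, card_range, card_range] at hcard
        exact_mod_cast hcard
    _ ≤ (3 * k / q + 1) * (4 * δ * q + 1) := by
        push_cast
        gcongr
        · calc ((k / B : ℕ) : ℝ) ≤ (k : ℝ) / B := Nat.cast_div_le
            _ ≤ (k : ℝ) / (q / 3) := by
              gcongr
              rw [div_le_iff₀ (by norm_num)]
              exact_mod_cast (by omega : q ≤ B * 3)
            _ = _ := by field_simp
        · exact Nat.floor_le (by positivity)

end

section

open Filter Finset Topology
open scoped ArithmeticFunction.vonMangoldt ArithmeticFunction.Moebius ArithmeticFunction.zeta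

lemma sum_inv_le_log (N : ℕ) : ∑ m ∈ Ioc 0 N, (1 / (m : ℝ)) ≤ 1 + Real.log N := by
  have h := harmonic_le_one_add_log N
  rw [harmonic_eq_sum_Icc] at h
  push_cast at h
  calc ∑ m ∈ Ioc 0 N, (1 / (m : ℝ)) = ∑ m ∈ Icc 1 N, ((m : ℝ))⁻¹ := by
        refine sum_congr (by ext; simp; omega) fun m _ => one_div _
    _ ≤ _ := h

/-- The sum of `|∑_{m ≤ N/k} m e(m j θ)|` over `j < k`, split according to whether `jθ` is within
`k √U / N` of an integer. -/
lemma sum_W_le (N U k q : ℕ) (θ : ℝ) (a : ℤ) (hU : 1 ≤ U) (hk : U < k) (hq : 2 ≤ q)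
    (hUq : U ≤ q) (hqN : q * U ≤ N) (haq : IsCoprime a (q : ℤ))
    (hθ : |θ - a / q| ≤ 1 / (q : ℝ) ^ 2) :
    ∑ j ∈ range k, ‖∑ m ∈ Ioc 0 (N / k), (m : ℂ) * e (m * (j * θ))‖
      ≤ (N : ℝ) ^ 2 * (12 * √U / N + 9 * (1 / (k : ℝ)) / √U) := by
  have hU0 : (1 : ℝ) ≤ U := by exact_mod_cast hU
  have hk0 : (0 : ℝ) < k := by exact_mod_cast (by omega : 0 < k)
  have hN0 : (0 : ℝ) < N := by exact_mod_cast (by nlinarith : 0 < N)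
  have hq0 : (0 : ℝ) < q := by exact_mod_cast (by omega : 0 < q)
  have hs1 : 1 ≤ √(U : ℝ) := Real.one_le_sqrt.2 hU0
  have hs0 : 0 < √(U : ℝ) := by linarith
  have hss : √(U : ℝ) * √(U : ℝ) = U := Real.mul_self_sqrt (by linarith)
  set s := √(U : ℝ) with hs
  set δ : ℝ := k * s / N with hδ
  have hδ0 : 0 < δ := by positivity
  have hM : ((N / k : ℕ) : ℝ) ≤ N / k := Nat.cast_div_le
  set near := {j ∈ range k | |((j : ℕ) : ℝ) * θ - round (((j : ℕ) : ℝ) * θ)| ≤ δ} with hnear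
  have hcard := card_near_le θ δ hδ0.le a q hq haq hθ k
  have h1 : ∀ j ∈ range k, ‖∑ m ∈ Ioc 0 (N / k), (m : ℂ) * e (m * (j * θ))‖
      ≤ (if |((j : ℕ) : ℝ) * θ - round (((j : ℕ) : ℝ) * θ)| ≤ δ then ((N : ℝ) / k) ^ 2 else 0)
        + (N / k) / δ := by
    intro j _
    split_ifs with h
    · refine (norm_sum_mul_e_le_sq _ _).trans ?_
      have : ((N / k : ℕ) : ℝ) ^ 2 ≤ (N / k : ℝ) ^ 2 := by gcongr
      have : 0 ≤ (N / k : ℝ) / δ := by positivity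
      linarith
    · refine (norm_sum_mul_e_le _ _ δ hδ0 (not_le.1 h).le).trans ?_
      rw [zero_add]; gcongr
  refine (sum_le_sum h1).trans ?_
  rw [sum_add_distrib, ← sum_filter, sum_const, sum_const, card_range, nsmul_eq_mul, nsmul_eq_mul]
  have h2 : (k : ℝ) * (N / k / δ) = (N : ℝ) ^ 2 * ((1 / k) / s) := by
    rw [hδ]; field_simp
  have h3 : (#near : ℝ) * ((N : ℝ) / k) ^ 2
      ≤ (N : ℝ) ^ 2 * (12 * s / N + 8 * ((1 / k) / s)) := by
    have e1 : (1 : ℝ) / q ≤ 1 / s := by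
      have : s ≤ q := by
        have : (U : ℝ) ≤ q := by exact_mod_cast hUq
        nlinarith
      gcongr
    have e2 : s * q / N ≤ 1 / s := by
      rw [div_le_div_iff₀ hN0 hs0]
      have : (q : ℝ) * U ≤ N := by exact_mod_cast hqN
      nlinarith
    have e3 : (1 : ℝ) / k ≤ 1 / s := by
      have : (U : ℝ) ≤ k := by exact_mod_cast hk.le
      have : s ≤ k := by nlinarith
      gcongr
    calc (#near : ℝ) * ((N : ℝ) / k) ^ 2
        ≤ ((3 * k / q + 1) * (4 * δ * q + 1)) * ((N : ℝ) / k) ^ 2 := by gcongr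
      _ = (N : ℝ) ^ 2 * (12 * s / N + (1 / k) * (3 * (1 / q) + 4 * (s * q / N) + 1 / k)) := by
          rw [hδ]; field_simp; ring
      _ ≤ (N : ℝ) ^ 2 * (12 * s / N + (1 / k) * (3 * (1 / s) + 4 * (1 / s) + 1 / s)) := by gcongr
      _ = _ := by ring
  calc _ ≤ (N : ℝ) ^ 2 * (12 * s / N + 8 * ((1 / k) / s)) + (N : ℝ) ^ 2 * ((1 / k) / s) :=
        add_le_add h3 h2.le
    _ = _ := by ring

lemma norm_W_abs (M k k' : ℕ) (θ : ℝ) (h : k' ≤ k) :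
    ‖∑ m ∈ Ioc 0 M, (m : ℂ) * e (m * (((k' : ℝ) - k) * θ))‖
      = ‖∑ m ∈ Ioc 0 M, (m : ℂ) * e (m * (((k - k' : ℕ) : ℝ) * θ))‖ := by
  rw [← Complex.norm_conj, map_sum]
  congr 1
  refine sum_congr rfl fun m _ => ?_
  rw [map_mul, Complex.conj_natCast, ← e_neg]
  congr 2
  rw [Nat.cast_sub h]; ring

/-- The bilinear (type II) estimate on the minor arcs. -/
lemma typeII (N U q : ℕ) (θ : ℝ) (a : ℤ) (hU : 1 ≤ U) (hq : 2 ≤ q)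
    (hUq : U ≤ q) (hqN : q * U ≤ N) (haq : IsCoprime a (q : ℤ))
    (hθ : |θ - a / q| ≤ 1 / (q : ℝ) ^ 2) (α β : ℕ → ℝ) (B : ℝ) (hα : ∀ m, |α m| ≤ 1)
    (hβ : ∀ k ∈ Ioc U (N / U), |β k| ≤ B) :
    ‖∑ m ∈ Ioc 0 N, (α m : ℂ) * ∑ k ∈ Ioc U (N / U),
        (if m * k ≤ N then (β k : ℂ) * e (m * (k * θ)) else 0)‖ ^ 2
      ≤ 42 * B ^ 2 * (1 + Real.log N) ^ 2 * N ^ 2 / √U := by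
  set R := N / U with hR
  set I : ℕ → ℂ := fun m => ∑ k ∈ Ioc U R,
        (if m * k ≤ N then (β k : ℂ) * e (m * (k * θ)) else 0) with hI
  have hU0 : (1 : ℝ) ≤ U := by exact_mod_cast hU
  have hN1 : 1 ≤ N := by nlinarith
  have hN0 : (0 : ℝ) < N := by exact_mod_cast hN1
  have hlog : 0 ≤ Real.log N := Real.log_natCast_nonneg N
  have hs0 : 0 < √(U : ℝ) := Real.sqrt_pos.2 (by linarith)
  have hss : √(U : ℝ) * √(U : ℝ) = U := Real.mul_self_sqrt (by linarith)
  -- Cauchy–Schwarz with weights `m`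
  have hCS : ‖∑ m ∈ Ioc 0 N, (α m : ℂ) * I m‖ ^ 2
      ≤ (∑ m ∈ Ioc 0 N, (1 / (m : ℝ))) * ∑ m ∈ Ioc 0 N, (m : ℝ) * ‖I m‖ ^ 2 := by
    have h1 : ‖∑ m ∈ Ioc 0 N, (α m : ℂ) * I m‖
        ≤ ∑ m ∈ Ioc 0 N, √(1 / (m : ℝ)) * (√m * ‖I m‖) := by
      refine (norm_sum_le _ _).trans (sum_le_sum fun m hm => ?_)
      have hm0 : (0 : ℝ) < m := by exact_mod_cast (mem_Ioc.1 hm).1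
      rw [← mul_assoc, ← Real.sqrt_mul (by positivity), one_div, inv_mul_cancel₀ hm0.ne',
        Real.sqrt_one, one_mul, norm_mul, Complex.norm_real, Real.norm_eq_abs]
      exact mul_le_of_le_one_left (norm_nonneg _) (hα m)
    calc _ ≤ (∑ m ∈ Ioc 0 N, √(1 / (m : ℝ)) * (√m * ‖I m‖)) ^ 2 := by gcongr
      _ ≤ (∑ m ∈ Ioc 0 N, √(1 / (m : ℝ)) ^ 2) * ∑ m ∈ Ioc 0 N, (√m * ‖I m‖) ^ 2 :=
          sum_mul_sq_le_sq_mul_sq _ _ _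
      _ = _ := by
          congr 1
          · refine sum_congr rfl fun m _ => Real.sq_sqrt (by positivity)
          · refine sum_congr rfl fun m _ => ?_
            rw [mul_pow, Real.sq_sqrt (by positivity)]
  -- expand the square and bring the sum over `m` inside
  have hexp : ((∑ m ∈ Ioc 0 N, (m : ℝ) * ‖I m‖ ^ 2 : ℝ) : ℂ)
      = ∑ k ∈ Ioc U R, ∑ k' ∈ Ioc U R, (β k : ℂ) * (β k' : ℂ)
        * ∑ m ∈ Ioc 0 (N / max k k'), (m : ℂ) * e (m * (((k : ℝ) - k') * θ)) := by
    push_cast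
    have h1 : ∀ m ∈ Ioc 0 N, (m : ℂ) * (‖I m‖ : ℂ) ^ 2 = ∑ k ∈ Ioc U R, ∑ k' ∈ Ioc U R,
        (if m * max k k' ≤ N then (β k : ℂ) * (β k' : ℂ) * ((m : ℂ) * e (m * (((k : ℝ) - k') * θ)))
          else 0) := by
      intro m _
      rw [← Complex.mul_conj', hI, map_sum, sum_mul_sum, mul_sum]
      refine sum_congr rfl fun k _ => ?_
      rw [mul_sum]
      refine sum_congr rfl fun k' _ => ?_
      have hiff : m * max k k' ≤ N ↔ m * k ≤ N ∧ m * k' ≤ N := by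
        rw [← Nat.mul_max_mul_left, max_le_iff]
      by_cases c1 : m * k ≤ N <;> by_cases c2 : m * k' ≤ N <;> simp [hiff, c1, c2]
      rw [← e_neg, show (m : ℝ) * (((k : ℝ) - k') * θ) = m * (k * θ) + -(m * (k' * θ)) by ring,
        e_add]
      ring
    rw [sum_congr rfl h1, sum_comm]
    refine sum_congr rfl fun k hk => ?_
    rw [sum_comm]
    refine sum_congr rfl fun k' hk' => ?_
    rw [← sum_filter, mul_sum]
    refine sum_congr ?_ fun _ _ => rfl
    ext m
    have hpos : 0 < max k k' := lt_max_of_lt_left (by have := (mem_Ioc.1 hk).1; omega)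
    simp only [mem_filter, mem_Ioc, Nat.le_div_iff_mul_le hpos]
    constructor
    · rintro ⟨⟨h1, h2⟩, h3⟩; exact ⟨h1, h3⟩
    · rintro ⟨h1, h3⟩; exact ⟨⟨h1, le_trans (Nat.le_mul_of_pos_right m hpos) h3⟩, h3⟩
  set W : ℕ → ℕ → ℝ := fun k j => ‖∑ m ∈ Ioc 0 (N / k), (m : ℂ) * e (m * (j * θ))‖ with hW
  have hWnn : ∀ k j, 0 ≤ W k j := fun k j => norm_nonneg _
  have hrow : ∀ k ∈ Ioc U R, ∑ k' ∈ Ioc U R, (if k' ≤ k then W k (k - k') else 0)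
      ≤ (N : ℝ) ^ 2 * (12 * √U / N + 9 * (1 / (k : ℝ)) / √U) := by
    intro k hk
    refine le_trans ?_ (sum_W_le N U k q θ a hU (mem_Ioc.1 hk).1 hq hUq hqN haq hθ)
    rw [← sum_filter]
    refine le_trans (le_of_eq ?_) (sum_le_sum_of_subset_of_nonneg
      (s := image (fun k' => k - k') {k' ∈ Ioc U R | k' ≤ k}) ?_ fun j _ _ => hWnn k j)
    · rw [sum_image]
      intro x hx y hy hxy
      simp only [coe_filter, Set.mem_ofPred_eq] at hx hy hxy
      omega
    · intro j hj
      simp only [mem_image, mem_filter, mem_Ioc] at hj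
      obtain ⟨k', h1, h2⟩ := hj
      rw [mem_range]; omega
  have hB0 : 0 ≤ B ^ 2 := sq_nonneg B
  have hmain : ∑ m ∈ Ioc 0 N, (m : ℝ) * ‖I m‖ ^ 2
      ≤ B ^ 2 * (2 * ∑ k ∈ Ioc U R, (N : ℝ) ^ 2 * (12 * √U / N + 9 * (1 / (k : ℝ)) / √U)) := by
    have hnn : 0 ≤ ∑ m ∈ Ioc 0 N, (m : ℝ) * ‖I m‖ ^ 2 := sum_nonneg fun m _ => by positivity
    have e1 : ∑ m ∈ Ioc 0 N, (m : ℝ) * ‖I m‖ ^ 2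
        = ‖((∑ m ∈ Ioc 0 N, (m : ℝ) * ‖I m‖ ^ 2 : ℝ) : ℂ)‖ := by
      rw [Complex.norm_real, Real.norm_of_nonneg hnn]
    rw [e1, hexp]
    calc _ ≤ ∑ k ∈ Ioc U R, ∑ k' ∈ Ioc U R, B ^ 2 * ((if k' ≤ k then W k (k - k') else 0)
            + (if k ≤ k' then W k' (k' - k) else 0)) := by
          refine (norm_sum_le _ _).trans (sum_le_sum fun k hk => ?_)
          refine (norm_sum_le _ _).trans (sum_le_sum fun k' hk' => ?_)
          rw [norm_mul, norm_mul, Complex.norm_real, Complex.norm_real, Real.norm_eq_abs,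
            Real.norm_eq_abs]
          have hb : |β k| * |β k'| ≤ B ^ 2 := by
            rw [sq]
            exact mul_le_mul (hβ k hk) (hβ k' hk') (abs_nonneg _) ((abs_nonneg _).trans (hβ k hk))
          refine mul_le_mul hb ?_ (norm_nonneg _) hB0
          rcases le_total k' k with h | h
          · rw [if_pos h, max_eq_left h]
            have : ‖∑ m ∈ Ioc 0 (N / k), (m : ℂ) * e (m * (((k : ℝ) - k') * θ))‖ = W k (k - k') := by
              simp only [hW]; rw [Nat.cast_sub h]
            rw [this]
            have : 0 ≤ (if k ≤ k' then W k' (k' - k) else 0) := by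
              split_ifs; exacts [hWnn _ _, le_rfl]
            linarith
          · rw [if_pos h, max_eq_right h, norm_W_abs _ _ _ _ h]
            have : 0 ≤ (if k' ≤ k then W k (k - k') else 0) := by
              split_ifs; exacts [hWnn _ _, le_rfl]
            simp only [hW] at this ⊢
            linarith
      _ = B ^ 2 * (∑ k ∈ Ioc U R, ∑ k' ∈ Ioc U R, (if k' ≤ k then W k (k - k') else 0)
            + ∑ k ∈ Ioc U R, ∑ k' ∈ Ioc U R, (if k' ≤ k then W k (k - k') else 0)) := by
          simp only [← mul_sum, sum_add_distrib]
          congr 2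
          rw [sum_comm]
      _ ≤ _ := by
          gcongr
          rw [two_mul]
          exact add_le_add (sum_le_sum hrow) (sum_le_sum hrow)
  have hsum : ∑ k ∈ Ioc U R, (N : ℝ) ^ 2 * (12 * √U / N + 9 * (1 / (k : ℝ)) / √U)
      ≤ (N : ℝ) ^ 2 * (21 * (1 + Real.log N) / √U) := by
    rw [← mul_sum]
    gcongr
    rw [sum_add_distrib, sum_const, nsmul_eq_mul, ← sum_div, ← mul_sum]
    have c1 : ((#(Ioc U R) : ℕ) : ℝ) ≤ N / U := by
      rw [Nat.card_Ioc]
      calc ((R - U : ℕ) : ℝ) ≤ (R : ℝ) := by exact_mod_cast Nat.sub_le _ _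
        _ ≤ _ := Nat.cast_div_le
    have c2 : ∑ k ∈ Ioc U R, (1 / (k : ℝ)) ≤ 1 + Real.log N := by
      refine le_trans (sum_le_sum_of_subset_of_nonneg ?_ fun _ _ _ => by positivity)
        (sum_inv_le_log N)
      intro k hk
      rw [mem_Ioc] at hk ⊢
      exact ⟨by omega, hk.2.trans (Nat.div_le_self _ _)⟩
    calc _ ≤ (N / U : ℝ) * (12 * √U / N) + 9 * (1 + Real.log N) / √U := by gcongr
      _ = 12 / √U + 9 * (1 + Real.log N) / √U := by
          congr 1
          rw [show (N / U : ℝ) = N / (√U * √U) by rw [hss]]; field_simp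
      _ ≤ 12 * (1 + Real.log N) / √U + 9 * (1 + Real.log N) / √U := by gcongr; linarith
      _ = _ := by ring
  calc _ ≤ _ := hCS
    _ ≤ (1 + Real.log N) * (B ^ 2 * (2 * ((N : ℝ) ^ 2 * (21 * (1 + Real.log N) / √U)))) := by
        refine mul_le_mul (sum_inv_le_log N) (hmain.trans ?_) (sum_nonneg fun m _ => by positivity)
          (by linarith)
        gcongr
    _ = _ := by ring

end

section

open Filter Finset Topology
open scoped ArithmeticFunction.vonMangoldt ArithmeticFunction.Moebius ArithmeticFunction.zeta

/-- `μ · log = - μ * Λ`. -/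
lemma moebius_mul_log (n : ℕ) : (μ n : ℝ) * Real.log n
    = -∑ x ∈ n.divisorsAntidiagonal, (μ x.1 : ℝ) * Λ x.2 := by
  set F : ArithmeticFunction ℝ := ⟨fun n => (μ n : ℝ) * Real.log n, by simp⟩ with hF
  have h1 : F * (ζ : ArithmeticFunction ℝ) = -Λ := by
    ext m
    rw [ArithmeticFunction.coe_mul_zeta_apply]
    exact ArithmeticFunction.sum_moebius_mul_log_eq
  have h2 : F = -((μ : ArithmeticFunction ℝ) * Λ) := by
    have : F * (ζ : ArithmeticFunction ℝ) * (μ : ArithmeticFunction ℝ) = F := by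
      rw [mul_assoc, ArithmeticFunction.coe_zeta_mul_coe_moebius, mul_one]
    rw [← this, h1, mul_comm (μ : ArithmeticFunction ℝ) Λ]
    ext m
    simp only [ArithmeticFunction.mul_apply, ArithmeticFunction.neg_apply, neg_mul,
      sum_neg_distrib]
  have h3 := congrArg (fun G : ArithmeticFunction ℝ => G n) h2
  simpa [hF, ArithmeticFunction.mul_apply] using h3

lemma sum_log_div_le (N : ℕ) : ∑ n ∈ Ioc 0 N, (Real.log N - Real.log n) ≤ N := by
  rcases Nat.eq_zero_or_pos N with rfl | hN
  · simp
  -- `N ^ N / N! ≤ exp N`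
  have h1 : (N : ℝ) ^ N / N.factorial ≤ Real.exp N := by
    have := Real.pow_div_factorial_le_exp (N : ℝ) (by positivity) N
    exact this
  have h2 : ∑ n ∈ Ioc 0 N, Real.log n = Real.log N.factorial := by
    rw [← Finset.prod_Ico_id_eq_factorial, Nat.cast_prod, Real.log_prod]
    · refine sum_congr (by ext; simp; omega) fun _ _ => rfl
    · intro i hi; have := (mem_Ico.1 hi).1; positivity
  have h3 := Real.log_le_log (by positivity) h1
  rw [Real.log_exp, Real.log_div (by positivity) (by positivity), Real.log_pow] at h3
  rw [sum_sub_distrib, h2]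
  simpa using h3

lemma sum_Ioc_antidiag (N : ℕ) (F : ℕ → ℕ → ℂ) :
    ∑ n ∈ Ioc 0 N, ∑ x ∈ n.divisorsAntidiagonal, F x.1 x.2
      = ∑ m ∈ Ioc 0 N, ∑ k ∈ Ioc 0 N, if m * k ≤ N then F m k else 0 := by
  rw [← sum_product', ]
  trans ∑ n ∈ Ioc 0 N, ∑ x ∈ Ioc 0 N ×ˢ Ioc 0 N with x.1 * x.2 = n, F x.1 x.2
  · refine sum_congr rfl fun n hn => ?_
    simp only [mem_Ioc] at hn
    rw [Nat.divisorsAntidiagonal_eq_prod_filter_of_le hn.1.ne' hn.2]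
  · simp_rw [sum_filter]
    rw [sum_comm]
    exact sum_congr rfl fun _ _ => (by simp_all)

/-- The bound on the minor arcs, with the parameter `U` still free. -/
lemma minor_arc (N U q : ℕ) (θ : ℝ) (a : ℤ) (hU : 1 ≤ U) (hq : 2 ≤ q)
    (hUq : U ≤ q) (hqN : q * U ≤ N) (haq : IsCoprime a (q : ℤ))
    (hθ : |θ - a / q| ≤ 1 / (q : ℝ) ^ 2) :
    ‖S N θ‖ * Real.log N ≤ N * (1 + (Real.log 4 + 4) * (1 + Real.log U)
        + Real.log U * (1 + Real.log U)) + 7 * (Real.log N * (1 + Real.log N) * N) / √√U := by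
  have hU0 : (1 : ℝ) ≤ U := by exact_mod_cast hU
  have hN1 : 1 ≤ N := by nlinarith
  have hUN : U ≤ N := by nlinarith
  have hN0 : (0 : ℝ) < N := by exact_mod_cast hN1
  have hlog : 0 ≤ Real.log N := Real.log_natCast_nonneg N
  have hlogU : 0 ≤ Real.log U := Real.log_natCast_nonneg U
  have hs0 : 0 < √(U : ℝ) := Real.sqrt_pos.2 (by linarith)
  have hIcc : Icc 1 N = Ioc 0 N := by ext; simp; omega
  set F : ℕ → ℕ → ℂ := fun m k => (μ m : ℂ) * ((Λ k : ℂ) * e (m * (k * θ))) with hF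
  have hFn : ∀ m k, ‖F m k‖ ≤ Λ k := by
    intro m k
    simp only [hF]
    rw [norm_mul, norm_mul, norm_e, mul_one, Complex.norm_real, Real.norm_of_nonneg
      ArithmeticFunction.vonMangoldt_nonneg]
    refine mul_le_of_le_one_left ArithmeticFunction.vonMangoldt_nonneg ?_
    have := abs_moebius_le_one' m
    rw [← Complex.norm_intCast] at this
    exact this
  -- the three pieces: `m ≤ U`, then `k ≤ U < m`, then both variables larger than `U`
  set P1 : ℂ := ∑ m ∈ Ioc 0 U, ∑ k ∈ Ioc 0 N, if m * k ≤ N then F m k else 0 with hP1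
  set P2 : ℂ := ∑ m ∈ Ioc U N, ∑ k ∈ Ioc 0 U, if m * k ≤ N then F m k else 0 with hP2
  set P3 : ℂ := ∑ m ∈ Ioc U N, ∑ k ∈ Ioc U N, if m * k ≤ N then F m k else 0 with hP3
  have hsplit : ∀ f : ℕ → ℂ, ∑ k ∈ Ioc 0 N, f k = ∑ k ∈ Ioc 0 U, f k + ∑ k ∈ Ioc U N, f k :=
    fun f => (sum_Ioc_consecutive f (Nat.zero_le U) hUN).symm
  have hid : S N θ * (Real.log N : ℂ)
      = ∑ n ∈ Ioc 0 N, (μ n : ℂ) * e (n * θ) * ((Real.log N - Real.log n : ℝ) : ℂ)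
        - (P1 + P2 + P3) := by
    have h1 : ∑ n ∈ Ioc 0 N, (μ n : ℂ) * e (n * θ) * ((Real.log n : ℝ) : ℂ) = -(P1 + P2 + P3) := by
      have h2 : P1 + P2 + P3 = ∑ m ∈ Ioc 0 N, ∑ k ∈ Ioc 0 N, if m * k ≤ N then F m k else 0 := by
        rw [hsplit, add_assoc, hP1, hP2, hP3, ← sum_add_distrib]
        congr 1
        refine sum_congr rfl fun m _ => (hsplit _).symm
      rw [h2, ← sum_Ioc_antidiag, ← sum_neg_distrib]
      refine sum_congr rfl fun n hn => ?_
      have h3 : ((μ n : ℂ)) * ((Real.log n : ℝ) : ℂ)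
          = -∑ x ∈ n.divisorsAntidiagonal, (μ x.1 : ℂ) * (Λ x.2 : ℂ) := by
        have := congrArg (fun r : ℝ => (r : ℂ)) (moebius_mul_log n)
        simp only [Complex.ofReal_mul, Complex.ofReal_neg, Complex.ofReal_sum,
          Complex.ofReal_intCast] at this
        exact this
      rw [mul_right_comm, h3, neg_mul, sum_mul]
      congr 1
      refine sum_congr rfl fun x hx => ?_
      have : n = x.1 * x.2 := (Nat.mem_divisorsAntidiagonal.1 hx).1.symm
      simp only [hF]
      rw [this]; push_cast
      rw [mul_assoc, mul_assoc (x.1 : ℝ)]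
    rw [sub_eq_add_neg, ← h1, ← sum_add_distrib, S, hIcc, sum_mul]
    refine sum_congr rfl fun n _ => ?_
    push_cast; ring
  have b0 : ‖∑ n ∈ Ioc 0 N, (μ n : ℂ) * e (n * θ) * ((Real.log N - Real.log n : ℝ) : ℂ)‖ ≤ N := by
    refine (norm_sum_le _ _).trans (le_trans (sum_le_sum fun n hn => ?_) (sum_log_div_le N))
    have hn' := mem_Ioc.1 hn
    have hle : Real.log n ≤ Real.log N :=
      Real.log_le_log (by exact_mod_cast hn'.1) (by exact_mod_cast hn'.2)
    rw [norm_mul, norm_mul, norm_e, mul_one, Complex.norm_real, Real.norm_of_nonneg (by linarith)]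
    refine mul_le_of_le_one_left (by linarith) ?_
    have := abs_moebius_le_one' n
    rw [← Complex.norm_intCast] at this
    exact this
  have b1 : ‖P1‖ ≤ N * ((Real.log 4 + 4) * (1 + Real.log U)) := by
    have hl4 : 0 < Real.log 4 := Real.log_pos (by norm_num)
    calc ‖P1‖ ≤ ∑ m ∈ Ioc 0 U, (Real.log 4 + 4) * (N * (1 / (m : ℝ))) := by
          refine (norm_sum_le _ _).trans (sum_le_sum fun m hm => ?_)
          have hm0 := (mem_Ioc.1 hm).1
          refine (norm_sum_le _ _).trans ?_
          calc ∑ k ∈ Ioc 0 N, ‖if m * k ≤ N then F m k else 0‖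
              ≤ ∑ k ∈ Ioc 0 N, if m * k ≤ N then Λ k else 0 := by
                refine sum_le_sum fun k _ => ?_
                split_ifs
                · exact hFn m k
                · simp
            _ = Chebyshev.psi ((N / m : ℕ) : ℝ) := by
                rw [← sum_filter, Chebyshev.psi, Nat.floor_natCast]
                refine sum_congr ?_ fun _ _ => rfl
                ext k
                simp only [mem_filter, mem_Ioc, Nat.le_div_iff_mul_le hm0, mul_comm k m]
                constructor
                · rintro ⟨⟨h1, h2⟩, h3⟩; exact ⟨h1, h3⟩
                · rintro ⟨h1, h3⟩; exact ⟨⟨h1, le_trans (Nat.le_mul_of_pos_left k hm0) h3⟩, h3⟩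
            _ ≤ (Real.log 4 + 4) * ((N / m : ℕ) : ℝ) :=
                Chebyshev.psi_le_const_mul_self (by positivity)
            _ ≤ _ := by
                gcongr
                rw [mul_one_div]
                exact Nat.cast_div_le
      _ = (Real.log 4 + 4) * (N * ∑ m ∈ Ioc 0 U, 1 / (m : ℝ)) := by simp only [mul_sum]
      _ ≤ (Real.log 4 + 4) * (N * (1 + Real.log U)) := by
          gcongr; exact sum_inv_le_log U
      _ = _ := by ring
  have b2 : ‖P2‖ ≤ N * (Real.log U * (1 + Real.log U)) := by
    rw [hP2, sum_comm]
    calc _ ≤ ∑ k ∈ Ioc 0 U, Real.log U * (N * (1 / (k : ℝ))) := by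
          refine (norm_sum_le _ _).trans (sum_le_sum fun k hk => ?_)
          have hk0 := mem_Ioc.1 hk
          refine (norm_sum_le _ _).trans ?_
          calc ∑ m ∈ Ioc U N, ‖if m * k ≤ N then F m k else 0‖
              ≤ ∑ m ∈ Ioc U N, if m * k ≤ N then Real.log U else 0 := by
                refine sum_le_sum fun m _ => ?_
                split_ifs
                · refine (hFn m k).trans (ArithmeticFunction.vonMangoldt_le_log.trans ?_)
                  exact Real.log_le_log (by exact_mod_cast hk0.1) (by exact_mod_cast hk0.2)
                · simp
            _ ≤ ∑ m ∈ Ioc 0 (N / k), Real.log U := by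
                rw [← sum_filter]
                refine sum_le_sum_of_subset_of_nonneg ?_ fun _ _ _ => hlogU
                intro m hm
                simp only [mem_filter, mem_Ioc, Nat.le_div_iff_mul_le hk0.1] at hm ⊢
                exact ⟨by omega, hm.2⟩
            _ = Real.log U * ((N / k : ℕ) : ℝ) := by simp [mul_comm]
            _ ≤ _ := by
                gcongr
                rw [mul_one_div]
                exact Nat.cast_div_le
      _ = Real.log U * (N * ∑ k ∈ Ioc 0 U, 1 / (k : ℝ)) := by simp only [mul_sum]
      _ ≤ Real.log U * (N * (1 + Real.log U)) := by
          gcongr; exact sum_inv_le_log U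
      _ = _ := by ring
  have b3 : ‖P3‖ ≤ 7 * (Real.log N * (1 + Real.log N) * N) / √√U := by
    have h1 := typeII N U q θ a hU hq hUq hqN haq hθ
      (fun m => if U < m then (μ m : ℝ) else 0) (fun k => Λ k) (Real.log N)
      (fun m => by
        show |if U < m then (μ m : ℝ) else 0| ≤ 1
        split_ifs
        · exact abs_moebius_le_one' m
        · simp)
      (fun k hk => by
        have hk' := mem_Ioc.1 hk
        rw [abs_of_nonneg ArithmeticFunction.vonMangoldt_nonneg]
        refine ArithmeticFunction.vonMangoldt_le_log.trans (Real.log_le_log ?_ ?_)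
        · exact_mod_cast (by omega : 0 < k)
        · exact_mod_cast hk'.2.trans (Nat.div_le_self _ _))
    have h2 : P3 = ∑ m ∈ Ioc 0 N, ((if U < m then (μ m : ℝ) else 0 : ℝ) : ℂ) * ∑ k ∈ Ioc U (N / U),
        (if m * k ≤ N then (Λ k : ℂ) * e (m * (k * θ)) else 0) := by
      rw [hsplit]
      rw [show ∑ m ∈ Ioc 0 U, ((if U < m then (μ m : ℝ) else 0 : ℝ) : ℂ) * ∑ k ∈ Ioc U (N / U),
        (if m * k ≤ N then (Λ k : ℂ) * e (m * (k * θ)) else 0) = 0 from sum_eq_zero fun m hm => by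
          rw [if_neg (by have := (mem_Ioc.1 hm).2; omega)]; simp, zero_add]
      refine sum_congr rfl fun m hm => ?_
      have hm' := mem_Ioc.1 hm
      rw [if_pos hm'.1, mul_sum]
      symm
      refine (sum_subset (Ioc_subset_Ioc_right (Nat.div_le_self _ _)) ?_).trans ?_
      · intro k hk hk2
        have hk' := mem_Ioc.1 hk
        have : N / U < k := by
          by_contra hcon
          exact hk2 (mem_Ioc.2 ⟨hk'.1, not_lt.1 hcon⟩)
        have h3 : ¬ m * k ≤ N := by
          have := (Nat.div_lt_iff_lt_mul (by omega : 0 < U)).1 this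
          nlinarith
        rw [if_neg h3, mul_zero]
      · refine sum_congr rfl fun k _ => ?_
        rw [mul_ite, mul_zero]
        simp only [hF]
        push_cast
        rfl
    rw [← h2] at h1
    refine le_of_sq_le_sq ?_ (by positivity) |>.trans le_rfl
    refine h1.trans ?_
    rw [div_pow, Real.sq_sqrt hs0.le]
    gcongr
    nlinarith [sq_nonneg (Real.log N * (1 + Real.log N) * N)]
  calc ‖S N θ‖ * Real.log N = ‖S N θ * (Real.log N : ℂ)‖ := by
        rw [norm_mul, Complex.norm_real, Real.norm_of_nonneg hlog]
    _ ≤ N + (‖P1‖ + ‖P2‖ + ‖P3‖) := by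
        rw [hid]
        refine (norm_sub_le _ _).trans (add_le_add b0 (norm_add₃_le))
    _ ≤ _ := by nlinarith

end

section

open Filter Finset Topology MeasureTheory FourierTransform

/-! ### A quantitative Tauberian theorem -/

/-- Over an interval of length at most `1`, an integrable function whose Fourier transform decays
like `|ξ|^(-3/4)` has a bounded integral, by Fourier inversion. -/
lemma norm_average_le : ∃ C : ℝ, 0 < C ∧ ∀ (g : ℝ → ℂ) (W : ℝ), Integrable g →
    (∀ ξ, ‖𝓕 g ξ‖ ≤ W * (1 + |ξ|) ^ (-(3 / 4) : ℝ)) → ∀ h u : ℝ, 0 < h → h ≤ 1 →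
    ‖∫ x in u..(u + h), g x‖ ≤ C * W := by
  have hInt : Integrable (fun ξ : ℝ => (1 + ‖ξ‖) ^ (-(7 / 4) : ℝ)) :=
    integrable_one_add_norm (by norm_num)
  refine ⟨2 * (1 + ∫ ξ : ℝ, (1 + ‖ξ‖) ^ (-(7 / 4) : ℝ)), ?_, ?_⟩
  · have : 0 ≤ ∫ ξ : ℝ, (1 + ‖ξ‖) ^ (-(7 / 4) : ℝ) := integral_nonneg fun ξ => by positivity
    positivity
  intro g W hg hW h u hh hh1
  have hW0 : 0 ≤ W := by
    have := (norm_nonneg _).trans (hW 0)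
    simpa using this
  set ind : ℝ → ℂ := (Set.Ico (-h) 0).indicator 1 with hind
  have hindint : Integrable ind := by
    rw [hind, integrable_indicator_iff measurableSet_Ico]
    exact integrableOn_const (by simp) (by simp)
  -- `G` is the moving integral of `g`; its transform decays like `|ξ|^(-7/4)`, so inversion applies
  set G : ℝ → ℂ := convolution g ind (ContinuousLinearMap.mul ℂ ℂ) volume with hG
  have hGeq : ∀ u, G u = ∫ x in u..(u + h), g x := by
    intro u
    rw [hG, convolution_def, intervalIntegral.integral_of_le (by linarith),
      ← integral_indicator measurableSet_Ioc]
    congr 1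
    ext t
    simp only [ContinuousLinearMap.mul_apply', hind, Set.indicator_apply, Set.mem_Ico, Set.mem_Ioc,
      Pi.one_apply]
    by_cases h1 : u < t ∧ t ≤ u + h
    · rw [if_pos h1, if_pos ⟨by linarith [h1.2], by linarith [h1.1]⟩, mul_one]
    · rw [if_neg h1, if_neg, mul_zero]
      rintro ⟨h2, h3⟩
      exact h1 ⟨by linarith, by linarith⟩
  have hGint : Integrable G := hg.integrable_convolution _ hindint
  have hGcont : Continuous G := by
    have hi : ∀ a b, IntervalIntegrable g volume a b := fun a b => hg.intervalIntegrable
    have h1 : G = fun u => (∫ x in (0 : ℝ)..(u + h), g x) - ∫ x in (0 : ℝ)..u, g x := by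
      ext u
      rw [hGeq, intervalIntegral.integral_interval_sub_left (hi _ _) (hi _ _)]
    rw [h1]
    exact ((intervalIntegral.continuous_primitive hi 0).comp (by fun_prop)).sub
      (intervalIntegral.continuous_primitive hi 0)
  have hFind : ∀ ξ, ‖𝓕 ind ξ‖ ≤ 2 / (1 + |ξ|) := by
    intro ξ
    by_cases hξ : |ξ| ≤ 1
    · have h1 : ‖𝓕 ind ξ‖ ≤ h := by
        rw [Real.fourier_eq]
        refine (norm_integral_le_integral_norm _).trans ?_
        have : ∀ v, ‖𝐞 (-inner ℝ v ξ) • ind v‖ = (Set.Ico (-h) 0).indicator 1 v := by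
          intro v
          rw [Circle.norm_smul, hind]
          by_cases hv : v ∈ Set.Ico (-h) 0 <;> simp [hv]
        simp_rw [this]
        rw [integral_indicator measurableSet_Ico]
        simp [hh.le]
      rw [le_div_iff₀ (by positivity)]
      nlinarith [norm_nonneg (𝓕 ind ξ), abs_nonneg ξ]
    · push Not at hξ
      have hξ0 : ξ ≠ 0 := by rintro rfl; simp at hξ; linarith
      have hc : (-(2 * Real.pi * ξ) * Complex.I : ℂ) ≠ 0 := by
        simp [hξ0, Real.pi_ne_zero]
      have h1 : 𝓕 ind ξ = ∫ v in (-h)..0, Complex.exp ((-(2 * Real.pi * ξ) * Complex.I : ℂ) * v) := by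
        rw [Real.fourier_eq, intervalIntegral.integral_of_le (by linarith),
          ← integral_Ico_eq_integral_Ioc, ← integral_indicator measurableSet_Ico]
        congr 1
        ext v
        rw [hind]
        by_cases hv : v ∈ Set.Ico (-h) 0
        · simp only [hv, Set.indicator_of_mem, Pi.one_apply, Circle.smul_def, smul_eq_mul, mul_one,
            Real.fourierChar_apply]
          congr 1
          simp
          ring
        · simp [hv]
      rw [h1, integral_exp_mul_complex hc, norm_div]
      have h2 : ‖(-(2 * Real.pi * ξ) * Complex.I : ℂ)‖ = 2 * Real.pi * |ξ| := by
        simp [abs_of_pos Real.pi_pos]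
      rw [h2]
      have h3 : ∀ v : ℝ, ‖Complex.exp ((-(2 * Real.pi * ξ) * Complex.I : ℂ) * v)‖ = 1 := by
        intro v
        rw [show (-(2 * Real.pi * ξ) * Complex.I : ℂ) * v
          = ((-(2 * Real.pi * ξ) * v : ℝ) : ℂ) * Complex.I by push_cast; ring]
        exact Complex.norm_exp_ofReal_mul_I _
      have h4 := norm_sub_le (Complex.exp ((-(2 * Real.pi * ξ) * Complex.I : ℂ) * (0 : ℝ)))
        (Complex.exp ((-(2 * Real.pi * ξ) * Complex.I : ℂ) * ((-h : ℝ) : ℂ)))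
      rw [h3, h3] at h4
      rw [div_le_div_iff₀ (by positivity) (by positivity)]
      nlinarith [Real.pi_gt_three, abs_nonneg ξ]
  have hFG : ∀ ξ, ‖𝓕 G ξ‖ ≤ 2 * W * (1 + ‖ξ‖) ^ (-(7 / 4) : ℝ) := by
    intro ξ
    rw [hG, Real.fourier_mul_convolution_eq hg hindint, norm_mul]
    have h1 : (0 : ℝ) < 1 + |ξ| := by positivity
    calc ‖𝓕 g ξ‖ * ‖𝓕 ind ξ‖ ≤ (W * (1 + |ξ|) ^ (-(3 / 4) : ℝ)) * (2 / (1 + |ξ|)) := by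
          gcongr
          · exact hW ξ
          · exact hFind ξ
      _ = _ := by
          rw [Real.norm_eq_abs, show (-(7 / 4) : ℝ) = -(3 / 4) - 1 by norm_num,
            Real.rpow_sub_one h1.ne']
          ring
  have hFGc : Continuous (𝓕 G) := VectorFourier.fourierIntegral_continuous Real.continuous_fourierChar
    (by exact continuous_inner) hGint
  have hFGint : Integrable (𝓕 G) :=
    (hInt.const_mul (2 * W)).mono' hFGc.aestronglyMeasurable (Eventually.of_forall hFG)
  rw [← hGeq, ← hGint.fourierInv_fourier_eq hFGint hGcont.continuousAt, Real.fourierInv_eq]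
  refine (norm_integral_le_integral_norm _).trans ?_
  calc ∫ v, ‖𝐞 (inner ℝ v u) • 𝓕 G v‖ ≤ ∫ v : ℝ, 2 * W * (1 + ‖v‖) ^ (-(7 / 4) : ℝ) := by
        refine integral_mono_of_nonneg (Eventually.of_forall fun _ => norm_nonneg _)
          (hInt.const_mul _) (Eventually.of_forall fun v => ?_)
        simp only [Circle.norm_smul]
        exact hFG v
    _ ≤ _ := by
        rw [integral_const_mul]
        nlinarith

end

section

open Filter Finset Topology MeasureTheory FourierTransform

/-- The summatory function of `b`, as a function of a real variable. -/
noncomputable def psum (b : ℕ → ℂ) (v : ℝ) : ℂ := ∑ n ∈ Icc 1 ⌊v⌋₊, b n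

lemma psum_of_lt_one (b : ℕ → ℂ) {v : ℝ} (hv : v < 1) : psum b v = 0 := by
  rw [psum, Nat.floor_eq_zero.2 hv]; simp

lemma norm_psum_le (b : ℕ → ℂ) (k : ℕ) (hb : ∀ n, ‖b n‖ ≤ Real.log n ^ k) {v : ℝ} (hv : 1 ≤ v) :
    ‖psum b v‖ ≤ v * Real.log v ^ k := by
  have hl : 0 ≤ Real.log v := Real.log_nonneg hv
  calc ‖psum b v‖ ≤ ∑ n ∈ Icc 1 ⌊v⌋₊, Real.log v ^ k := by
        refine (norm_sum_le _ _).trans (sum_le_sum fun n hn => (hb n).trans ?_)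
        have h1 := mem_Icc.1 hn
        have h2 : (n : ℝ) ≤ v := (Nat.le_floor_iff (by linarith)).1 h1.2
        have h3 : (0 : ℝ) < n := by exact_mod_cast h1.1
        have h4 : 0 ≤ Real.log n := Real.log_natCast_nonneg n
        gcongr
    _ = ⌊v⌋₊ * Real.log v ^ k := by simp
    _ ≤ _ := by gcongr; exact Nat.floor_le (by linarith)

lemma measurable_psum (b : ℕ → ℂ) : Measurable (psum b) := by
  have : psum b = (fun m : ℕ => ∑ n ∈ Icc 1 m, b n) ∘ fun v : ℝ => ⌊v⌋₊ := rfl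
  rw [this]
  exact (measurable_of_countable _).comp Nat.measurable_floor

/-- The Dirichlet series of `b`, divided by `s`, is on each vertical line the Fourier transform of
the normalized summatory function. -/
lemma fourier_psum (b : ℕ → ℂ) (k : ℕ) (hb : ∀ n, ‖b n‖ ≤ Real.log n ^ k) {σ : ℝ} (hσ : 1 < σ)
    (hsum : ∀ s : ℂ, 1 < s.re → LSeriesSummable b s) :
    Integrable (fun u : ℝ => Real.exp (-σ * u) • psum b (Real.exp u)) ∧
    ∀ ξ : ℝ, 𝓕 (fun u : ℝ => Real.exp (-σ * u) • psum b (Real.exp u)) ξ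
      = LSeries b (σ + 2 * Real.pi * ξ * Complex.I) / (σ + 2 * Real.pi * ξ * Complex.I) := by
  set r : ℝ := (1 + σ) / 2 with hr
  set ε : ℝ := (σ - 1) / 2 / (k + 1) with hε
  have hε0 : 0 < ε := by rw [hε]; have : 0 < σ - 1 := by linarith
                         positivity
  have hεk : ε * k ≤ (σ - 1) / 2 := by
    rw [hε, div_mul_eq_mul_div, div_le_iff₀ (by positivity)]
    nlinarith
  have hlog : ∀ v : ℝ, 1 ≤ v → v * Real.log v ^ k ≤ (1 / ε ^ k) * v ^ r := by
    intro v hv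
    have h1 : Real.log v ^ k ≤ (v ^ ε / ε) ^ k :=
      pow_le_pow_left₀ (Real.log_nonneg hv) (Real.log_le_rpow_div (by linarith) hε0) k
    have h2 : (v ^ ε) ^ k ≤ v ^ ((σ - 1) / 2) := by
      rw [← Real.rpow_natCast, ← Real.rpow_mul (by linarith)]
      exact Real.rpow_le_rpow_of_exponent_le hv hεk
    calc v * Real.log v ^ k ≤ v * (v ^ ((σ - 1) / 2) / ε ^ k) := by
          rw [div_pow] at h1
          gcongr
          exact h1.trans (by gcongr)
      _ = (1 / ε ^ k) * (v ^ (1 : ℝ) * v ^ ((σ - 1) / 2)) := by rw [Real.rpow_one]; ring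
      _ = _ := by
          rw [← Real.rpow_add (by linarith)]; congr 2; rw [hr]; ring
  set g : ℝ → ℂ := fun u : ℝ => Real.exp (-σ * u) • psum b (Real.exp u) with hg
  have hgm : Measurable g := by
    have := measurable_psum b
    have h2 : Measurable fun u : ℝ => psum b (Real.exp u) := this.comp Real.measurable_exp
    have h3 : Measurable fun u : ℝ => Real.exp (-σ * u) := by fun_prop
    exact h3.smul h2
  refine ⟨?_, ?_⟩
  · have hz : g = (Set.Ici 0).indicator g := by
      ext u
      by_cases hu : u ∈ Set.Ici (0 : ℝ)
      · simp [hu]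
      · rw [Set.indicator_of_notMem hu]
        have : u < 0 := by simpa using hu
        simp only [hg]
        rw [psum_of_lt_one b (by rwa [Real.exp_lt_one_iff]), smul_zero]
    rw [hz, integrable_indicator_iff measurableSet_Ici, integrableOn_Ici_iff_integrableOn_Ioi]
    have h1 := (exp_neg_integrableOn_Ioi 0 (b := σ - r) (by rw [hr]; linarith)).const_mul (1 / ε ^ k)
    refine h1.mono' hgm.aestronglyMeasurable ?_
    refine (ae_restrict_iff' measurableSet_Ioi).2 (Eventually.of_forall fun u hu => ?_)
    have hu0 : (0 : ℝ) < u := hu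
    have he : 1 ≤ Real.exp u := Real.one_le_exp hu0.le
    simp only [hg, norm_smul, Real.norm_eq_abs, Real.abs_exp]
    calc Real.exp (-σ * u) * ‖psum b (Real.exp u)‖
        ≤ Real.exp (-σ * u) * ((1 / ε ^ k) * Real.exp u ^ r) := by
          gcongr
          exact (norm_psum_le b k hb he).trans (hlog _ he)
      _ = (1 / ε ^ k) * (Real.exp (-σ * u) * Real.exp (u * r)) := by rw [Real.exp_mul u]; ring
      _ = _ := by rw [← Real.exp_add]; congr 2; ring
  · intro ξ
    set s : ℂ := σ + 2 * Real.pi * ξ * Complex.I with hs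
    have hsre : s.re = σ := by simp [hs]
    have hsim : s.im = 2 * Real.pi * ξ := by simp [hs]
    have hs0 : s ≠ 0 := by
      intro h; have := congrArg Complex.re h; rw [hsre] at this; simp at this; linarith
    have h1 := mellin_eq_fourier (fun t : ℝ => psum b t⁻¹) (s := s)
    rw [hsre, hsim, mul_div_cancel_left₀ _ (by positivity)] at h1
    have h2 : (fun u : ℝ => Real.exp (-σ * u) • psum b (Real.exp (-u))⁻¹) = g := by
      ext u; rw [hg, Real.exp_neg, inv_inv]
    rw [h2] at h1
    rw [← h1, mellin_comp_inv, mellin]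
    have hO : (fun n ↦ ∑ k ∈ Icc 1 n, b k) =O[atTop] fun n : ℕ ↦ (n : ℝ) ^ r := by
      refine Asymptotics.IsBigO.of_bound (1 / ε ^ k) ?_
      filter_upwards [eventually_ge_atTop 1] with n hn
      have hn' : (1 : ℝ) ≤ n := by exact_mod_cast hn
      have := (norm_psum_le b k hb hn').trans (hlog n hn')
      rw [psum, Nat.floor_natCast] at this
      rwa [Real.norm_of_nonneg (by positivity)]
    have h3 := LSeries_eq_mul_integral b (r := r) (by rw [hr]; linarith) (s := s)
      (by rw [hsre, hr]; linarith) (hsum s (by rw [hsre]; exact hσ)) hO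
    rw [h3, mul_div_cancel_left₀ _ hs0]
    have h4 : ∫ t in Set.Ioi (0 : ℝ), (t : ℂ) ^ (-s - 1) • psum b t
        = ∫ t in Set.Ioi (1 : ℝ), (t : ℂ) ^ (-s - 1) • psum b t := by
      rw [← integral_Ici_eq_integral_Ioi (x := (1 : ℝ))]
      refine setIntegral_eq_of_subset_of_forall_sdiff_eq_zero measurableSet_Ioi ?_ ?_
      · intro t ht; exact lt_of_lt_of_le (one_pos : (0 : ℝ) < 1) (Set.mem_Ici.1 ht)
      · intro t ht
        rw [psum_of_lt_one b (by simpa using ht.2), smul_zero]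
    rw [h4]
    refine setIntegral_congr_fun measurableSet_Ioi fun t _ => ?_
    simp only [psum, smul_eq_mul]
    rw [mul_comm]
    congr 2
    ring

end

section

open Filter Finset Topology MeasureTheory FourierTransform

/-- A quantitative Tauberian theorem: bounds for a Dirichlet series on vertical lines close to
`Re s = 1` give bounds for the summatory function of its coefficients. -/
lemma tauber_log (k : ℕ) : ∃ C : ℝ, 0 < C ∧ ∀ b : ℕ → ℂ, (∀ n, ‖b n‖ ≤ Real.log n ^ k) →
    (∀ s : ℂ, 1 < s.re → LSeriesSummable b s) → ∀ W : ℝ, 0 < W →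
    (∀ s : ℂ, 1 < s.re → s.re ≤ 2 → ‖LSeries b s‖ ≤ W * (2 + |s.im|) ^ (1 / 4 : ℝ)) →
    ∀ x : ℕ, 3 ≤ x → ‖∑ n ∈ Icc 1 x, b n‖ ≤ C * x * √(W * Real.log x ^ k) := by
  obtain ⟨C₀, hC₀, hav⟩ := norm_average_le
  refine ⟨Real.exp 1 * (4 * C₀ + (2 ^ (k + 1) + 2)), by positivity, ?_⟩
  intro b hb hsum W hW1 hW x hx
  have hx0 : (3 : ℝ) ≤ x := by exact_mod_cast hx
  set l : ℝ := Real.log x with hl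
  have hl1 : 1 ≤ l := by
    rw [hl, Real.le_log_iff_exp_le (by linarith)]
    linarith [Real.exp_one_lt_d9]
  set L : ℝ := l ^ k with hL
  have hL1 : 1 ≤ L := one_le_pow₀ hl1
  have hps : ∑ n ∈ Icc 1 x, b n = psum b x := by rw [psum, Nat.floor_natCast]
  have htriv : ‖psum b x‖ ≤ x * L := norm_psum_le b k hb (by linarith)
  rw [hps]
  have he1 : 1 ≤ Real.exp 1 := Real.one_le_exp (by norm_num)
  -- if `L ≤ W`, the trivial bound `x * L` suffices
  rcases le_or_gt L W with hLW | hLW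
  · have h1 : L ≤ √(W * L) := by
      apply Real.le_sqrt_of_sq_le; nlinarith
    have h2 : (1 : ℝ) ≤ Real.exp 1 * (4 * C₀ + (2 ^ (k + 1) + 2)) := by
      have : (0 : ℝ) < 2 ^ (k + 1) := by positivity
      nlinarith
    calc _ ≤ 1 * x * L := by linarith
      _ ≤ _ := by gcongr
  set σ : ℝ := 1 + 1 / l with hσ
  have hσ1 : 1 < σ := by rw [hσ]; have : 0 < 1 / l := by positivity
                         linarith
  have hσ2 : σ ≤ 2 := by
    rw [hσ]; have : 1 / l ≤ 1 := by rw [div_le_one (by linarith)]; exact hl1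
    linarith
  obtain ⟨hgi, hgF⟩ := fourier_psum b k hb hσ1 hsum
  set g : ℝ → ℂ := fun u : ℝ => Real.exp (-σ * u) • psum b (Real.exp u) with hg
  have hF : ∀ ξ, ‖𝓕 g ξ‖ ≤ (4 * W) * (1 + |ξ|) ^ (-(3 / 4) : ℝ) := by
    intro ξ
    rw [hgF]
    set s : ℂ := σ + 2 * Real.pi * ξ * Complex.I with hs
    have hsre : s.re = σ := by simp [hs]
    have hsim : s.im = 2 * Real.pi * ξ := by simp [hs]
    have h1 := hW s (by rw [hsre]; exact hσ1) (by rw [hsre]; exact hσ2)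
    have hξ := abs_nonneg ξ
    have habs : |s.im| = 2 * Real.pi * |ξ| := by
      rw [hsim, abs_mul, abs_of_pos (by positivity)]
    have h2 : (1 + |ξ|) / 2 ≤ ‖s‖ := by
      have h3 := Complex.abs_re_le_norm s
      have h4 := Complex.abs_im_le_norm s
      rw [hsre, abs_of_pos (by linarith)] at h3
      rw [habs] at h4
      nlinarith [Real.pi_gt_three]
    have h5 : (2 + |s.im|) ^ (1 / 4 : ℝ) ≤ 2 * (1 + |ξ|) ^ (1 / 4 : ℝ) := by
      have : (2 : ℝ) = 16 ^ (1 / 4 : ℝ) := by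
        rw [show (16 : ℝ) = 2 ^ (4 : ℝ) by norm_num, ← Real.rpow_mul (by norm_num)]; norm_num
      nth_rw 2 [this]
      rw [← Real.mul_rpow (by norm_num) (by positivity)]
      refine Real.rpow_le_rpow (by positivity) ?_ (by norm_num)
      rw [habs]
      nlinarith [Real.pi_lt_four]
    have h6 : (0 : ℝ) < 1 + |ξ| := by positivity
    rw [norm_div, div_le_iff₀ (by linarith)]
    calc _ ≤ W * (2 * (1 + |ξ|) ^ (1 / 4 : ℝ)) := h1.trans (by gcongr)
      _ = (4 * W) * (1 + |ξ|) ^ (-(3 / 4) : ℝ) * ((1 + |ξ|) / 2) := by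
          rw [show (1 / 4 : ℝ) = -(3 / 4) + 1 by norm_num, Real.rpow_add_one h6.ne']; ring
      _ ≤ _ := by gcongr
  set h : ℝ := √(W / L) with hh
  have hh0 : 0 < h := Real.sqrt_pos.2 (by positivity)
  have hh1 : h ≤ 1 := by
    rw [hh, Real.sqrt_le_iff, one_pow, div_le_one (by linarith)]
    exact ⟨by norm_num, hLW.le⟩
  have hhL : h * L = √(W * L) := by
    rw [hh, ← Real.sqrt_sq (show 0 ≤ L by linarith), ← Real.sqrt_mul (by positivity),
      Real.sqrt_sq (by linarith)]
    congr 1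
    field_simp
  have hhW : W = h * √(W * L) := by
    rw [hh, ← Real.sqrt_mul (by positivity), show W / L * (W * L) = W ^ 2 by field_simp,
      Real.sqrt_sq (by linarith)]
  -- the average of `g` over `[l, l + h]` is controlled by Fourier inversion, and `g l` is close to
  -- it; the choice `h = √(W / L)` balances the two errors
  have havg := hav g (4 * W) hgi hF h l hh0 hh1
  have hexpl : Real.exp l = x := Real.exp_log (by linarith)
  have hdiff : ∀ v, l ≤ v → v ≤ l + h → ‖g v - g l‖ ≤ (2 ^ (k + 1) + 2) * (h * L) := by
    intro v hv1 hv2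
    have e1 : Real.exp (-σ * v) ≤ 1 / x := by
      rw [one_div, ← hexpl, ← Real.exp_neg, Real.exp_le_exp]
      nlinarith
    have e2 : ‖psum b (Real.exp v) - psum b x‖ ≤ x * (2 * h) * (2 ^ k * L) := by
      have hev : (x : ℝ) ≤ Real.exp v := by rw [← hexpl]; exact Real.exp_le_exp.2 hv1
      have hfl : x ≤ ⌊Real.exp v⌋₊ := Nat.le_floor hev
      have : psum b (Real.exp v) - psum b x = ∑ n ∈ Ioc x ⌊Real.exp v⌋₊, b n := by
        rw [psum, psum, Nat.floor_natCast, sub_eq_iff_eq_add']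
        have hI : ∀ m, Icc 1 m = Ioc 0 m := by intro m; ext; simp; omega
        rw [hI, hI]
        exact (sum_Ioc_consecutive _ (Nat.zero_le _) hfl).symm
      rw [this]
      calc _ ≤ ∑ n ∈ Ioc x ⌊Real.exp v⌋₊, 2 ^ k * L := by
            refine (norm_sum_le _ _).trans (sum_le_sum fun n hn => (hb n).trans ?_)
            have hn' := mem_Ioc.1 hn
            have h3 : (n : ℝ) ≤ Real.exp v := (Nat.le_floor_iff (by positivity)).1 hn'.2
            have hn0 : (0 : ℝ) < n := by exact_mod_cast (by omega : 0 < n)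
            have h4 : Real.log n ≤ 2 * l := by
              rw [Real.log_le_iff_le_exp hn0]
              exact h3.trans (Real.exp_le_exp.2 (by linarith))
            rw [hL, ← mul_pow]
            exact pow_le_pow_left₀ (Real.log_natCast_nonneg n) h4 k
        _ = ((⌊Real.exp v⌋₊ : ℝ) - x) * (2 ^ k * L) := by
            rw [sum_const, Nat.card_Ioc, nsmul_eq_mul, Nat.cast_sub hfl]
        _ ≤ _ := by
            gcongr
            have h5 : (⌊Real.exp v⌋₊ : ℝ) ≤ Real.exp v := Nat.floor_le (by positivity)
            have h6 : Real.exp v ≤ x * Real.exp h := by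
              rw [← hexpl, ← Real.exp_add]; exact Real.exp_le_exp.2 hv2
            have h7 : Real.exp h ≤ 1 + 2 * h := by
              have := Real.abs_exp_sub_one_le (x := h) (by rw [abs_of_pos hh0]; exact hh1)
              rw [abs_of_pos hh0] at this
              linarith [le_abs_self (Real.exp h - 1)]
            nlinarith
    have e3 : |Real.exp (-σ * v) - Real.exp (-σ * l)| ≤ 1 / x * (2 * h) := by
      have h1 : Real.exp (-σ * l) ≤ 1 / x := by
        rw [one_div, ← hexpl, ← Real.exp_neg, Real.exp_le_exp]
        nlinarith
      have h2 : Real.exp (-σ * v) = Real.exp (-σ * l) * Real.exp (-σ * (v - l)) := by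
        rw [← Real.exp_add]; congr 1; ring
      have h3 := Real.add_one_le_exp (-σ * (v - l))
      have h4 : Real.exp (-σ * (v - l)) ≤ 1 := by
        rw [Real.exp_le_one_iff]; nlinarith
      have h5 := Real.exp_pos (-σ * l)
      rw [h2, abs_sub_comm, abs_of_nonneg (by nlinarith)]
      have h6 : 1 - Real.exp (-σ * (v - l)) ≤ 2 * h := by nlinarith
      calc _ = Real.exp (-σ * l) * (1 - Real.exp (-σ * (v - l))) := by ring
        _ ≤ _ := by gcongr
    have e4 : g v - g l = Real.exp (-σ * v) • (psum b (Real.exp v) - psum b x)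
        + (Real.exp (-σ * v) - Real.exp (-σ * l)) • psum b x := by
      simp only [hg, hexpl, smul_sub, sub_smul]; ring
    rw [e4]
    calc _ ≤ 1 / x * (x * (2 * h) * (2 ^ k * L)) + 1 / x * (2 * h) * (x * L) := by
          refine (norm_add_le _ _).trans (add_le_add ?_ ?_)
          · rw [norm_smul, Real.norm_eq_abs, Real.abs_exp]; gcongr
          · rw [norm_smul, Real.norm_eq_abs]; gcongr
      _ = _ := by
          have : (x : ℝ) ≠ 0 := by positivity
          field_simp; ring
  have hgl : h * ‖g l‖ ≤ C₀ * (4 * W) + (2 ^ (k + 1) + 2) * (h * L) * h := by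
    have h1 : ∫ _ in l..(l + h), g l = (h : ℂ) * g l := by
      rw [intervalIntegral.integral_const]; simp
    have h2 : (h : ℂ) * g l = (∫ v in l..(l + h), g v) - ∫ v in l..(l + h), (g v - g l) := by
      rw [← h1, ← intervalIntegral.integral_sub hgi.intervalIntegrable
        (hgi.intervalIntegrable.sub intervalIntegrable_const)]
      simp
    have h3 : ‖∫ v in l..(l + h), (g v - g l)‖ ≤ (2 ^ (k + 1) + 2) * (h * L) * |l + h - l| := by
      refine intervalIntegral.norm_integral_le_of_norm_le_const fun v hv => ?_
      rw [Set.uIoc_of_le (by linarith)] at hv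
      exact hdiff v hv.1.le hv.2
    rw [add_sub_cancel_left, abs_of_pos hh0] at h3
    calc h * ‖g l‖ = ‖(h : ℂ) * g l‖ := by
          rw [norm_mul, Complex.norm_real, Real.norm_of_nonneg hh0.le]
      _ ≤ _ := by rw [h2]; exact (norm_sub_le _ _).trans (add_le_add havg h3)
  have hgl2 : ‖g l‖ ≤ (4 * C₀ + (2 ^ (k + 1) + 2)) * √(W * L) := by
    have : h * ‖g l‖ ≤ h * ((4 * C₀ + (2 ^ (k + 1) + 2)) * √(W * L)) := by
      refine hgl.trans (le_of_eq ?_)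
      nth_rw 1 [hhW]
      rw [hhL]; ring
    exact le_of_mul_le_mul_left this hh0
  have hgl3 : ‖psum b x‖ = Real.exp 1 * x * ‖g l‖ := by
    simp only [hg]
    rw [hexpl, norm_smul, Real.norm_eq_abs, Real.abs_exp, ← hexpl, ← Real.exp_add, ← mul_assoc,
      ← Real.exp_add]
    have : 1 + l + -σ * l = 0 := by
      rw [hσ]; field_simp; ring
    rw [this, Real.exp_zero, one_mul]
  rw [hgl3]
  calc _ ≤ Real.exp 1 * x * ((4 * C₀ + (2 ^ (k + 1) + 2)) * √(W * L)) := by gcongr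
    _ = _ := by ring

end

section

open Filter Finset Topology MeasureTheory

/-- Partial summation as an inequality. -/
lemma abel_le (f g : ℕ → ℂ) (a b : ℕ) (hab : a ≤ b) (P : ℝ)
    (hP : ∀ m, a ≤ m → m ≤ b → ‖∑ n ∈ Ico a m, f n‖ ≤ P) :
    ‖∑ n ∈ Ico a b, f n * g n‖ ≤ P * (‖g b‖ + ∑ n ∈ Ico a b, ‖g (n + 1) - g n‖) := by
  have hid : ∑ n ∈ Ico a b, f n * g n = (∑ n ∈ Ico a b, f n) * g b
      - ∑ n ∈ Ico a b, (∑ m ∈ Ico a (n + 1), f m) * (g (n + 1) - g n) := by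
    clear hP
    induction b, hab using Nat.le_induction with
    | base => simp
    | succ b hb ih =>
      rw [sum_Ico_succ_top hb, ih, sum_Ico_succ_top hb (fun n => _ * _), sum_Ico_succ_top hb f]
      ring
  rw [hid, mul_add, mul_sum]
  refine (norm_sub_le _ _).trans (add_le_add ?_ ?_)
  · rw [norm_mul]
    exact mul_le_mul_of_nonneg_right (hP b hab le_rfl) (norm_nonneg _)
  · refine (norm_sum_le _ _).trans (sum_le_sum fun n hn => ?_)
    have := mem_Ico.1 hn
    rw [norm_mul]
    exact mul_le_mul_of_nonneg_right (hP _ (by omega) (by omega)) (norm_nonneg _)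

/-- `abel_le` for a real antitone nonnegative weight. -/
lemma abel_antitone_le (f : ℕ → ℂ) (g : ℕ → ℝ) (a b : ℕ) (hab : a ≤ b) (P : ℝ)
    (hP : ∀ m, a ≤ m → m ≤ b → ‖∑ n ∈ Ico a m, f n‖ ≤ P)
    (hg : ∀ n, a ≤ n → g (n + 1) ≤ g n) (hg0 : ∀ n, a ≤ n → 0 ≤ g n) :
    ‖∑ n ∈ Ico a b, f n * (g n : ℂ)‖ ≤ P * g a := by
  refine (abel_le f (fun n => (g n : ℂ)) a b hab P hP).trans (le_of_eq ?_)
  have h1 : ∀ n ∈ Ico a b, ‖((g (n + 1) : ℝ) : ℂ) - (g n : ℂ)‖ = -(g (n + 1) - g n) := by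
    intro n hn
    have := hg n (mem_Ico.1 hn).1
    rw [← Complex.ofReal_sub, Complex.norm_real, Real.norm_eq_abs, abs_of_nonpos (by linarith)]
  rw [sum_congr rfl h1, sum_neg_distrib, sum_Ico_sub g hab, Complex.norm_real,
    Real.norm_of_nonneg (hg0 b hab)]
  ring

lemma logMul_iterate_apply (a : ℕ → ℂ) (k n : ℕ) :
    LSeries.logMul^[k] a n = ((Real.log n : ℝ) : ℂ) ^ k * a n := by
  induction k with
  | zero => simp
  | succ k ih =>
    rw [Function.iterate_succ_apply', LSeries.logMul, ih, pow_succ, ← Complex.natCast_log]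
    ring

lemma abscissa_le_one {a : ℕ → ℂ} (ha : ∀ n, ‖a n‖ ≤ 1) : LSeries.abscissaOfAbsConv a ≤ 1 :=
  LSeries.abscissaOfAbsConv_le_of_le_const ⟨1, fun n _ => ha n⟩

lemma abscissa_lt {a : ℕ → ℂ} (ha : ∀ n, ‖a n‖ ≤ 1) {s : ℂ} (hs : 1 < s.re) :
    LSeries.abscissaOfAbsConv a < s.re :=
  (abscissa_le_one ha).trans_lt (by exact_mod_cast hs)

lemma log_pow_le (k : ℕ) {x : ℝ} (hx : 1 ≤ x) : Real.log x ^ k ≤ k.factorial * x := by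
  have h1 := Real.pow_div_factorial_le_exp (Real.log x) (Real.log_nonneg hx) k
  rw [Real.exp_log (by linarith), div_le_iff₀ (by positivity)] at h1
  linarith

/-- Bounds for the derivatives of a Dirichlet series near `Re s = 1` save powers of the logarithm
in the summatory function of its coefficients. -/
lemma tauber (k : ℕ) : ∃ C : ℝ, 0 < C ∧ ∀ a : ℕ → ℂ, (∀ n, ‖a n‖ ≤ 1) → ∀ W : ℝ, 1 ≤ W →
    (∀ s : ℂ, 1 < s.re → s.re ≤ 2 →
      ‖iteratedDeriv k (LSeries a) s‖ ≤ W * (2 + |s.im|) ^ (1 / 4 : ℝ)) →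
    ∀ N : ℕ, 9 ≤ N → ∀ x ≤ N,
      ‖∑ n ∈ Icc 1 x, a n‖ ≤ C * (N * √W / √(Real.log N ^ k)) := by
  obtain ⟨C, hC, htau⟩ := tauber_log k
  refine ⟨√(k.factorial : ℝ) + 2 ^ (k + 1) * C, by positivity, ?_⟩
  intro a ha W hW1 hW N hN x hxN
  -- up to sign, `b n = (log n)^k a n` has the `k`-th derivative as its Dirichlet series; the weight
  -- is removed by partial summation on `(√N, x]`, and `n ≤ √N` is estimated trivially
  set b : ℕ → ℂ := LSeries.logMul^[k] a with hb
  have hb1 : ∀ n, ‖b n‖ ≤ Real.log n ^ k := by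
    intro n
    rw [hb, logMul_iterate_apply, norm_mul, norm_pow, Complex.norm_real,
      Real.norm_of_nonneg (Real.log_natCast_nonneg n)]
    exact mul_le_of_le_one_right (pow_nonneg (Real.log_natCast_nonneg n) k) (ha n)
  have hbs : ∀ s : ℂ, 1 < s.re → LSeriesSummable b s := fun s hs =>
    LSeriesSummable_of_abscissaOfAbsConv_lt_re (by
      rw [hb, LSeries.absicssaOfAbsConv_logPowMul]; exact abscissa_lt ha hs)
  have hbW : ∀ s : ℂ, 1 < s.re → s.re ≤ 2 → ‖LSeries b s‖ ≤ W * (2 + |s.im|) ^ (1 / 4 : ℝ) := by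
    intro s hs hs2
    have := hW s hs hs2
    rw [LSeries_iteratedDeriv k (abscissa_lt ha hs), norm_mul, norm_pow, norm_neg, norm_one,
      one_pow, one_mul] at this
    exact this
  have hmain := htau b hb1 hbs W (by linarith) hbW
  have hN0 : (9 : ℝ) ≤ N := by exact_mod_cast hN
  set l : ℝ := Real.log N with hl
  have hl1 : 1 ≤ l := by
    rw [hl, Real.le_log_iff_exp_le (by linarith)]
    linarith [Real.exp_one_lt_d9]
  have hsq : 0 < √(l ^ k) := Real.sqrt_pos.2 (by positivity)
  have hW2 : 1 ≤ √W := Real.one_le_sqrt.2 hW1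
  set R : ℕ := Nat.sqrt N with hR
  have hR3 : 3 ≤ R := Nat.le_sqrt.2 (by omega)
  have hRN : R ≤ N := Nat.sqrt_le_self N
  have hRR : (R : ℝ) ≤ √N := Real.nat_sqrt_le_real_sqrt
  have htriv : ∀ y ≤ R, ‖∑ n ∈ Icc 1 y, a n‖ ≤ √(k.factorial : ℝ) * (N * √W / √(l ^ k)) := by
    intro y hy
    have h1 : ‖∑ n ∈ Icc 1 y, a n‖ ≤ √N := by
      calc _ ≤ ∑ n ∈ Icc 1 y, (1 : ℝ) := (norm_sum_le _ _).trans (sum_le_sum fun n _ => ha n)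
        _ = y := by simp
        _ ≤ R := by exact_mod_cast hy
        _ ≤ _ := hRR
    refine h1.trans ?_
    rw [← mul_div_assoc, le_div_iff₀ hsq]
    calc √(N : ℝ) * √(l ^ k) ≤ √N * √(k.factorial * N) := by
          gcongr
          exact log_pow_le k (by linarith)
      _ = √(k.factorial : ℝ) * N := by
          rw [Real.sqrt_mul (by positivity)]
          have := Real.mul_self_sqrt (show (0 : ℝ) ≤ N by linarith)
          linear_combination √(k.factorial : ℝ) * this
      _ ≤ _ := by
          have : (N : ℝ) ≤ N * √W := le_mul_of_one_le_right (by linarith) hW2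
          gcongr
  rcases le_or_gt x R with hxR | hxR
  · refine (htriv x hxR).trans ?_
    have : 0 ≤ 2 ^ (k + 1) * C * (N * √W / √(l ^ k)) := by positivity
    nlinarith
  have hI : ∀ m, Icc 1 m = Ico 1 (m + 1) := by intro m; ext; simp
  have hsplit : ∑ n ∈ Icc 1 x, a n = ∑ n ∈ Icc 1 R, a n + ∑ n ∈ Ico (R + 1) (x + 1), a n := by
    rw [hI, hI, sum_Ico_consecutive _ (by omega) (by omega)]
  have hlogn : ∀ n, R + 1 ≤ n → l / 2 ≤ Real.log n := by
    intro n hn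
    have h1 : N < n * n := (Nat.sqrt_lt).1 (by omega)
    have h2 : (N : ℝ) ≤ (n : ℝ) ^ 2 := by rw [sq]; exact_mod_cast h1.le
    have h3 := Real.log_le_log (by linarith) h2
    rw [Real.log_pow] at h3
    push_cast at h3
    linarith
  have htail : ‖∑ n ∈ Ico (R + 1) (x + 1), a n‖ ≤ (2 * (C * N * √(W * l ^ k))) * (2 ^ k / l ^ k) := by
    have h1 : ∑ n ∈ Ico (R + 1) (x + 1), a n
        = ∑ n ∈ Ico (R + 1) (x + 1), b n * (((Real.log n ^ k)⁻¹ : ℝ) : ℂ) := by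
      refine sum_congr rfl fun n hn => ?_
      have h2 := hlogn n (mem_Ico.1 hn).1
      have h4 : 0 < Real.log n := by linarith
      have h3 : ((Real.log n : ℝ) : ℂ) ≠ 0 := Complex.ofReal_ne_zero.2 h4.ne'
      rw [hb, logMul_iterate_apply, Complex.ofReal_inv, Complex.ofReal_pow, mul_right_comm,
        mul_inv_cancel₀ (pow_ne_zero k h3), one_mul]
    have hpart : ∀ m, R ≤ m → m ≤ N → ‖∑ n ∈ Icc 1 m, b n‖ ≤ C * N * √(W * l ^ k) := by
      intro m hm hmN
      have hm3 : 3 ≤ m := by omega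
      refine (hmain m hm3).trans ?_
      have : Real.log m ≤ l := Real.log_le_log (by exact_mod_cast (by omega : 0 < m))
        (by exact_mod_cast hmN)
      have h0 := Real.log_natCast_nonneg m
      gcongr
    rw [h1]
    refine (abel_antitone_le b (fun n => (Real.log n ^ k)⁻¹) (R + 1) (x + 1) (by omega)
      (2 * (C * N * √(W * l ^ k))) ?_ ?_ ?_).trans ?_
    · intro m hm1 hm2
      obtain ⟨m, rfl⟩ : ∃ m', m = m' + 1 := ⟨m - 1, by omega⟩
      have : ∑ n ∈ Ico (R + 1) (m + 1), b n = ∑ n ∈ Icc 1 m, b n - ∑ n ∈ Icc 1 R, b n := by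
        rw [hI, hI, eq_sub_iff_add_eq', sum_Ico_consecutive _ (by omega) (by omega)]
      rw [this, two_mul]
      exact (norm_sub_le _ _).trans (add_le_add (hpart m (by omega) (by omega))
        (hpart R le_rfl hRN))
    · intro n hn
      have h2 := hlogn n hn
      have : Real.log n ≤ Real.log (n + 1 : ℕ) :=
        Real.log_le_log (by exact_mod_cast (by omega : 0 < n)) (by push_cast; linarith)
      have h0 : 0 < Real.log n := by linarith
      gcongr
    · intro n hn
      exact inv_nonneg.2 (pow_nonneg (Real.log_natCast_nonneg n) k)
    · gcongr
      have h2 := hlogn (R + 1) le_rfl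
      rw [show (2 : ℝ) ^ k / l ^ k = ((l / 2) ^ k)⁻¹ by rw [div_pow, inv_div]]
      gcongr
  rw [hsplit]
  refine (norm_add_le _ _).trans ?_
  rw [add_mul]
  refine add_le_add (htriv R le_rfl) (htail.trans (le_of_eq ?_))
  rw [Real.sqrt_mul (by linarith)]
  have hsq2 : l ^ k = √(l ^ k) * √(l ^ k) := (Real.mul_self_sqrt (by positivity)).symm
  have : 2 ^ k / l ^ k = 2 ^ k / √(l ^ k) / √(l ^ k) := by
    nth_rw 1 [hsq2]; rw [div_div]
  rw [this]
  field_simp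
  ring

end

section

open Filter Finset Topology MeasureTheory

/-! ### Upper bounds for `L`-series and their derivatives to the right of `Re s = 1` -/

/-- The smooth function `u ↦ (log u)^j u^{-s}`, whose values at the integers are the coefficients
of the `j`-th derivative of `ζ`, up to sign. -/
noncomputable def logCpow (j : ℕ) (s : ℂ) (u : ℝ) : ℂ := ((Real.log u : ℝ) : ℂ) ^ j * (u : ℂ) ^ (-s)

lemma norm_logCpow (j : ℕ) (s : ℂ) {u : ℝ} (hu : 1 ≤ u) :
    ‖logCpow j s u‖ = Real.log u ^ j * u ^ (-s.re) := by
  rw [logCpow, norm_mul, norm_pow, Complex.norm_real, Real.norm_of_nonneg (Real.log_nonneg hu),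
    Complex.norm_cpow_eq_rpow_re_of_pos (by linarith), Complex.neg_re]

lemma hasDerivAt_logCpow (j : ℕ) {s : ℂ} (hs : s ≠ 0) {u : ℝ} (hu : 0 < u) :
    HasDerivAt (logCpow j s) (j * logCpow (j - 1) (s + 1) u - s * logCpow j (s + 1) u) u := by
  have h1 := (((Real.hasDerivAt_log hu.ne').ofReal_comp).pow j).mul
    (hasDerivAt_ofReal_cpow_const hu.ne' (neg_ne_zero.2 hs))
  refine h1.congr_deriv ?_
  have hu' : (u : ℂ) ≠ 0 := Complex.ofReal_ne_zero.2 hu.ne'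
  have h2 : (u : ℂ) ^ (-s) = (u : ℂ) ^ (-(s + 1)) * u := by
    rw [show -s = -(s + 1) + 1 by ring, Complex.cpow_add _ _ hu', Complex.cpow_one]
  simp only [logCpow]
  rw [show -s - 1 = -(s + 1) by ring, h2, Complex.ofReal_inv]
  simp only [Pi.pow_apply]
  rw [show (j : ℂ) * (Real.log u : ℂ) ^ (j - 1) * (u : ℂ)⁻¹ * ((u : ℂ) ^ (-(s + 1)) * u)
    = j * (Real.log u : ℂ) ^ (j - 1) * (u : ℂ) ^ (-(s + 1)) * ((u : ℂ)⁻¹ * u) by ring,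
    inv_mul_cancel₀ hu']
  ring

lemma log_pow_le_sqrt (j : ℕ) {u : ℝ} (hu : 1 ≤ u) :
    Real.log u ^ j ≤ 2 ^ j * j.factorial * √u := by
  have h1 := log_pow_le j (Real.one_le_sqrt.2 hu)
  rw [Real.log_sqrt (by linarith), div_pow, div_le_iff₀ (by positivity)] at h1
  linarith

/-- The size of the derivative of `logCpow` in the strip `1 < Re s ≤ 2`. -/
lemma norm_deriv_logCpow_le (j : ℕ) {s : ℂ} (hs : 1 < s.re) (hs2 : s.re ≤ 2) {u : ℝ} (hu : 1 ≤ u) :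
    ‖(j * logCpow (j - 1) (s + 1) u - s * logCpow j (s + 1) u : ℂ)‖
      ≤ 2 ^ (j + 1) * j.factorial * (2 + |s.im|) / (u * √u) := by
  have hu0 : 0 < u := by linarith
  have hp : u ^ (-(s + 1).re) ≤ (u * u)⁻¹ := by
    rw [← sq, ← Real.rpow_natCast u 2, ← Real.rpow_neg hu0.le]
    refine Real.rpow_le_rpow_of_exponent_le hu ?_
    simp
    linarith
  have hsn : ‖s‖ ≤ 2 + |s.im| := by
    refine (Complex.norm_le_abs_re_add_abs_im s).trans ?_
    rw [abs_of_pos (by linarith : 0 < s.re)]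
    linarith
  have hj : (j : ℝ) * Real.log u ^ (j - 1) ≤ 2 ^ j * j.factorial * √u := by
    rcases j with _ | j
    · simp
    · rw [Nat.add_sub_cancel]
      have := log_pow_le_sqrt j hu
      calc ((j + 1 : ℕ) : ℝ) * Real.log u ^ j ≤ (j + 1 : ℕ) * (2 ^ j * j.factorial * √u) := by gcongr
        _ = 2 ^ j * (j + 1).factorial * √u := by rw [Nat.factorial_succ]; push_cast; ring
        _ ≤ _ := by
          gcongr
          · norm_num
          · omega
  have hlog := Real.log_nonneg hu
  have hsq : 0 < √u := Real.sqrt_pos.2 hu0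
  calc _ ≤ (j : ℝ) * Real.log u ^ (j - 1) * (u * u)⁻¹ + ‖s‖ * (Real.log u ^ j * (u * u)⁻¹) := by
        refine (norm_sub_le _ _).trans ?_
        rw [norm_mul, norm_mul, norm_logCpow _ _ hu, norm_logCpow _ _ hu, Complex.norm_natCast,
          ← mul_assoc]
        gcongr
    _ ≤ (2 ^ j * j.factorial * √u) * (u * u)⁻¹
        + (2 + |s.im|) * ((2 ^ j * j.factorial * √u) * (u * u)⁻¹) := by
        gcongr
        exact log_pow_le_sqrt j hu
    _ = (2 ^ j * j.factorial) * (3 + |s.im|) * (√u * (u * u)⁻¹) := by ring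
    _ = (2 ^ j * j.factorial) * (3 + |s.im|) / (u * √u) := by
        rw [div_eq_mul_inv]
        congr 1
        have := Real.mul_self_sqrt hu0.le
        field_simp
        nlinarith
    _ ≤ _ := by
        have : 0 ≤ |s.im| := abs_nonneg _
        have : (3 + |s.im|) ≤ 2 * (2 + |s.im|) := by linarith
        calc (2 : ℝ) ^ j * j.factorial * (3 + |s.im|) / (u * √u)
            ≤ 2 ^ j * j.factorial * (2 * (2 + |s.im|)) / (u * √u) := by gcongr
          _ = _ := by ring

lemma norm_logCpow_sub_le (j : ℕ) {s : ℂ} (hs : 1 < s.re) (hs2 : s.re ≤ 2) {n : ℕ} (hn : 1 ≤ n)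
    {u : ℝ} (hu : u ∈ Set.Icc (n : ℝ) (n + 1)) :
    ‖logCpow j s u - logCpow j s n‖ ≤ 2 ^ (j + 1) * j.factorial * (2 + |s.im|) / (n * √n) := by
  have hn' : (1 : ℝ) ≤ n := by exact_mod_cast hn
  have hs0 : s ≠ 0 := by rintro rfl; simp at hs; linarith
  have h0 : 0 ≤ 2 ^ (j + 1) * j.factorial * (2 + |s.im|) / (n * √(n : ℝ)) := by positivity
  have := norm_image_sub_le_of_norm_deriv_le_segment' (f := logCpow j s)
    (C := 2 ^ (j + 1) * j.factorial * (2 + |s.im|) / (n * √n))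
    (fun x hx => (hasDerivAt_logCpow j hs0 (by linarith [hx.1] : 0 < x)).hasDerivWithinAt)
    (fun x hx => (norm_deriv_logCpow_le j hs hs2 (by linarith [hx.1] : 1 ≤ x)).trans (by
      have := hx.1
      have hx0 : 0 ≤ x := by linarith
      gcongr)) u hu
  refine this.trans ?_
  nlinarith [hu.2]

lemma sum_inv_mul_sqrt_le {Y M : ℕ} (hY : 1 ≤ Y) (hYM : Y ≤ M) :
    ∑ n ∈ Ico Y M, 1 / ((n : ℝ) * √n) ≤ 4 / √Y := by
  have h1 : ∀ n ∈ Ico Y M, 1 / ((n : ℝ) * √n) ≤ -(4 / √((n + 1 : ℕ) : ℝ) - 4 / √(n : ℝ)) := by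
    intro n hn
    have hn1 : (1 : ℝ) ≤ n := by exact_mod_cast hY.trans (mem_Ico.1 hn).1
    have ha : 1 ≤ √(n : ℝ) := Real.one_le_sqrt.2 hn1
    have ha2 := Real.mul_self_sqrt (show (0 : ℝ) ≤ n by linarith)
    have hb2 := Real.mul_self_sqrt (show (0 : ℝ) ≤ (n + 1 : ℕ) by positivity)
    have hb0 : 0 ≤ √((n + 1 : ℕ) : ℝ) := Real.sqrt_nonneg _
    generalize √((n + 1 : ℕ) : ℝ) = b at *
    push_cast at hb2
    generalize √(n : ℝ) = a at *
    rw [← ha2] at hb2 ⊢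
    have hab : b ≤ 3 / 2 * a := by nlinarith
    have hba : a < b := by nlinarith
    have hb : 0 < b := by linarith
    have ha0 : 0 < a := by linarith
    have : 1 / (a * b * (a + b)) = 1 / a - 1 / b := by
      field_simp
      nlinarith
    have h3 : 1 / (a * a * a) ≤ 4 * (1 / (a * b * (a + b))) := by
      rw [mul_one_div, div_le_div_iff₀ (by positivity) (by positivity)]
      have : b * (a + b) ≤ (3 / 2 * a) * (a + 3 / 2 * a) := by gcongr
      nlinarith [mul_pos ha0 ha0]
    calc _ ≤ _ := h3
      _ = _ := by rw [this]; ring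
  refine (sum_le_sum h1).trans ?_
  rw [sum_neg_distrib, sum_Ico_sub (fun n : ℕ => 4 / √(n : ℝ)) hYM]
  have : 0 ≤ 4 / √(M : ℝ) := by positivity
  linarith

lemma term_logMul (j : ℕ) (h : ℕ → ℂ) (s : ℂ) {n : ℕ} (hn : 1 ≤ n) :
    LSeries.term (LSeries.logMul^[j] h) s n = h n * logCpow j s n := by
  rw [LSeries.term_of_ne_zero (by omega), logMul_iterate_apply, logCpow, Complex.cpow_neg,
    div_eq_mul_inv]
  push_cast
  ring

lemma norm_logCpow_nat_le (j : ℕ) {s : ℂ} (hs : 1 < s.re) {n : ℕ} (hn : 1 ≤ n) :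
    ‖logCpow j s n‖ ≤ Real.log n ^ j * (1 / n) := by
  have hn' : (1 : ℝ) ≤ n := by exact_mod_cast hn
  rw [norm_logCpow _ _ hn']
  have := Real.log_nonneg hn'
  gcongr
  rw [one_div, ← Real.rpow_neg_one]
  exact Real.rpow_le_rpow_of_exponent_le hn' (by linarith)

/-- The trivial bound for the initial segment of a derivative of an `L`-series. -/
lemma head_le (j : ℕ) {h : ℕ → ℂ} (hh : ∀ n, ‖h n‖ ≤ 1) {s : ℂ} (hs : 1 < s.re) {Y : ℕ}
    (hY : 1 ≤ Y) :
    ‖∑ n ∈ Ico 1 Y, h n * logCpow j s n‖ ≤ (1 + Real.log Y) ^ (j + 1) := by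
  have hY' : (1 : ℝ) ≤ Y := by exact_mod_cast hY
  have hl := Real.log_nonneg hY'
  calc _ ≤ ∑ n ∈ Ico 1 Y, (1 + Real.log Y) ^ j * (1 / (n : ℝ)) := by
        refine (norm_sum_le _ _).trans (sum_le_sum fun n hn => ?_)
        obtain ⟨h1, h2⟩ := mem_Ico.1 hn
        rw [norm_mul]
        have h3 := norm_logCpow_nat_le j hs h1
        have hn' : (1 : ℝ) ≤ n := by exact_mod_cast h1
        have hln := Real.log_nonneg hn'
        have : Real.log n ≤ 1 + Real.log Y := by
          have := Real.log_le_log (by linarith) (show (n : ℝ) ≤ Y by exact_mod_cast h2.le)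
          linarith
        calc _ ≤ 1 * (Real.log n ^ j * (1 / n)) := by gcongr; exact hh n
          _ ≤ _ := by rw [one_mul]; gcongr
    _ ≤ (1 + Real.log Y) ^ j * ∑ n ∈ Ioc 0 Y, 1 / (n : ℝ) := by
        rw [← mul_sum]
        gcongr
        intro n hn
        simp at hn ⊢
        omega
    _ ≤ (1 + Real.log Y) ^ j * (1 + Real.log Y) := by
        gcongr
        exact sum_inv_le_log Y
    _ = _ := by ring

/-- Choice of the truncation point `Y ≈ X²` and of the constant in `(log X)^{j+1} ≪ X^ε`. -/
lemma exists_truncation (j : ℕ) {ε : ℝ} (hε : 0 < ε) : ∃ D : ℝ, 1 ≤ D ∧ ∀ X : ℝ, 2 ≤ X →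
    ∃ Y : ℕ, 1 ≤ Y ∧ X ≤ √Y ∧ (1 + Real.log Y) ^ (j + 1) ≤ D * X ^ ε := by
  set δ := ε / (j + 1) with hδ
  have hδ0 : 0 < δ := by positivity
  refine ⟨(1 + 3 / δ) ^ (j + 1), one_le_pow₀ (le_add_of_nonneg_right (by positivity)), fun X hX => ?_⟩
  have hX0 : 0 < X := by linarith
  refine ⟨⌈X ^ 2⌉₊, Nat.one_le_ceil_iff.2 (by positivity), ?_, ?_⟩
  · exact Real.le_sqrt_of_sq_le (Nat.le_ceil _)
  · have h1 : (⌈X ^ 2⌉₊ : ℝ) ≤ X ^ 3 := by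
      have := Nat.ceil_lt_add_one (show 0 ≤ X ^ 2 by positivity)
      nlinarith
    have h2 : Real.log (⌈X ^ 2⌉₊ : ℝ) ≤ 3 * Real.log X := by
      have := Real.log_le_log (by exact_mod_cast Nat.one_le_ceil_iff.2 (by positivity)) h1
      rwa [Real.log_pow] at this
    have h3 := Real.log_le_rpow_div hX0.le hδ0
    have h4 : 1 ≤ X ^ δ := Real.one_le_rpow (by linarith) hδ0.le
    have h5 : 1 + Real.log (⌈X ^ 2⌉₊ : ℝ) ≤ (1 + 3 / δ) * X ^ δ := by
      calc _ ≤ X ^ δ + 3 * (X ^ δ / δ) := by linarith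
        _ = _ := by ring
    calc _ ≤ ((1 + 3 / δ) * X ^ δ) ^ (j + 1) := by
          gcongr
      _ = _ := by
          rw [mul_pow, ← Real.rpow_natCast (X ^ δ), ← Real.rpow_mul hX0.le, hδ]
          congr 2
          push_cast
          field_simp

lemma lseries_norm_le_of_partial {a : ℕ → ℂ} {s : ℂ} (hsum : LSeriesSummable a s) (B : ℝ) (Y : ℕ)
    (h : ∀ M, Y ≤ M → ‖∑ n ∈ Ico 1 M, LSeries.term a s n‖ ≤ B) : ‖LSeries a s‖ ≤ B := by
  have h1 := (LSeriesSummable.LSeriesHasSum hsum).tendsto_sum_nat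
  refine le_of_tendsto h1.norm ?_
  filter_upwards [eventually_ge_atTop (Y + 1)] with M hM
  rw [range_eq_Ico, sum_eq_sum_Ico_succ_bot (by omega), LSeries.term_zero, zero_add]
  exact h M (by omega)

/-- Derivatives of `L`-series with bounded partial sums of coefficients are `≪ X^ε` up to the line
`Re s = 1`, where `X = P (2 + |Im s|)` is the analytic conductor. -/
lemma upper_bound (j : ℕ) {ε : ℝ} (hε : 0 < ε) : ∃ D : ℝ, 1 ≤ D ∧ ∀ P : ℝ, 1 ≤ P → ∀ h : ℕ → ℂ,
    (∀ n, ‖h n‖ ≤ 1) → (∀ a b, ‖∑ n ∈ Ico a b, h n‖ ≤ P) → ∀ s : ℂ, 1 < s.re → s.re ≤ 2 →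
    ‖LSeries (LSeries.logMul^[j] h) s‖ ≤ D * (P * (2 + |s.im|)) ^ ε := by
  obtain ⟨D, hD1, hD⟩ := exists_truncation j hε
  set K : ℝ := 2 ^ (j + 1) * j.factorial with hK
  have hK0 : 0 < K := by positivity
  refine ⟨D + 5 * K, by linarith, fun P hP h hh hsum s hs hs2 => ?_⟩
  have him := abs_nonneg s.im
  set X := P * (2 + |s.im|) with hX
  have hX2 : 2 ≤ X := by nlinarith
  obtain ⟨Y, hY1, hYX, hYD⟩ := hD X hX2
  have hX1 : 1 ≤ X ^ ε := Real.one_le_rpow (by linarith) hε.le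
  have hY0 : 0 < √(Y : ℝ) := by linarith
  refine lseries_norm_le_of_partial (LSeriesSummable_of_abscissaOfAbsConv_lt_re ?_) _ Y ?_
  · rw [LSeries.absicssaOfAbsConv_logPowMul]
    exact abscissa_lt hh hs
  intro M hM
  rw [sum_congr rfl fun n hn => term_logMul j h s (mem_Ico.1 hn).1,
    ← sum_Ico_consecutive _ hY1 hM]
  have htail : ‖∑ n ∈ Ico Y M, h n * logCpow j s n‖ ≤ 5 * K := by
    refine (abel_le h (fun n => logCpow j s n) Y M hM P fun m _ _ => hsum _ _).trans ?_
    have hM1 : (1 : ℝ) ≤ M := by exact_mod_cast hY1.trans hM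
    have hsM : √(Y : ℝ) ≤ √M := Real.sqrt_le_sqrt (by exact_mod_cast hM)
    have h1 : ‖logCpow j s M‖ ≤ K * (2 + |s.im|) / √Y := by
      refine (norm_logCpow_nat_le j hs (hY1.trans hM)).trans ?_
      have := log_pow_le_sqrt j hM1
      calc _ ≤ (2 ^ j * j.factorial * √(M : ℝ)) * (1 / M) := by gcongr
        _ = (2 ^ j * j.factorial) / √M := by
          have h0 : 0 < √(M : ℝ) := by linarith
          have := Real.mul_self_sqrt (show (0 : ℝ) ≤ M by linarith)
          field_simp
          nlinarith
        _ ≤ _ := by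
          have : (0 : ℝ) < 2 ^ j * j.factorial := by positivity
          have h4 : (2 : ℝ) ^ j * j.factorial ≤ K * (2 + |s.im|) := by
            rw [hK, pow_succ]
            nlinarith
          gcongr
    have h2 : ∑ n ∈ Ico Y M, ‖logCpow j s (n + 1 : ℕ) - logCpow j s n‖
        ≤ K * (2 + |s.im|) * (4 / √Y) := by
      calc _ ≤ ∑ n ∈ Ico Y M, K * (2 + |s.im|) * (1 / ((n : ℝ) * √n)) := by
            refine sum_le_sum fun n hn => ?_
            have := norm_logCpow_sub_le j hs hs2 (hY1.trans (mem_Ico.1 hn).1)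
              (u := (n + 1 : ℕ)) ⟨by push_cast; linarith, by push_cast; linarith⟩
            rwa [mul_one_div]
        _ ≤ _ := by
            rw [← mul_sum]
            gcongr
            exact sum_inv_mul_sqrt_le hY1 hM
    calc _ ≤ P * (K * (2 + |s.im|) / √Y + K * (2 + |s.im|) * (4 / √Y)) := by gcongr
      _ = 5 * K * (X / √Y) := by rw [hX]; ring
      _ ≤ 5 * K * 1 := by
          gcongr
          exact (div_le_one hY0).2 hYX
      _ = _ := mul_one _
  calc _ ≤ D * X ^ ε + 5 * K := (norm_add_le _ _).trans (add_le_add ((head_le j hh hs hY1).trans hYD) htail)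
    _ ≤ _ := by nlinarith

end

section

open Filter Finset Topology MeasureTheory

/-- An explicit primitive of `u ↦ (log u)^j u^{-s}` with its size. -/
lemma exists_primitive (j : ℕ) : ∃ C : ℝ, 1 ≤ C ∧ ∀ s : ℂ, s ≠ 1 → ∃ Φ : ℝ → ℂ,
    (∀ u, 0 < u → HasDerivAt Φ (logCpow j s u) u) ∧
    ∀ u, 1 ≤ u → ‖Φ u‖ ≤ C * (1 + 1 / ‖s - 1‖) ^ (j + 1) * (1 + Real.log u) ^ j * u ^ (1 - s.re) := by
  induction j with
  | zero =>
    refine ⟨1, le_rfl, fun s hs => ?_⟩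
    have hs1 : s - 1 ≠ 0 := sub_ne_zero.2 hs
    refine ⟨fun u => -(s - 1)⁻¹ * logCpow 0 (s - 1) u, fun u hu => ?_, fun u hu => ?_⟩
    · refine ((hasDerivAt_logCpow 0 hs1 hu).const_mul (-(s - 1)⁻¹)).congr_deriv ?_
      rw [sub_add_cancel]
      push_cast
      field_simp
      ring
    · rw [norm_mul, norm_logCpow _ _ hu, norm_neg, norm_inv]
      simp only [pow_zero, one_mul, mul_one, zero_add, pow_one, Complex.sub_re, Complex.one_re,
        neg_sub, one_div]
      have : 0 ≤ u ^ (1 - s.re) := by positivity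
      nlinarith
  | succ j ih =>
    obtain ⟨C, hC, ih⟩ := ih
    refine ⟨1 + (j + 1) * C, by nlinarith [(Nat.cast_nonneg j : (0 : ℝ) ≤ j)], fun s hs => ?_⟩
    obtain ⟨Φ, h1, h2⟩ := ih s hs
    have hs1 : s - 1 ≠ 0 := sub_ne_zero.2 hs
    refine ⟨fun u => -(s - 1)⁻¹ * logCpow (j + 1) (s - 1) u + (j + 1) * (s - 1)⁻¹ * Φ u,
      fun u hu => ?_, fun u hu => ?_⟩
    · refine (((hasDerivAt_logCpow (j + 1) hs1 hu).const_mul (-(s - 1)⁻¹)).add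
        ((h1 u hu).const_mul ((j + 1) * (s - 1)⁻¹))).congr_deriv ?_
      rw [sub_add_cancel, Nat.add_sub_cancel]
      push_cast
      field_simp
      ring
    · refine (norm_add_le _ _).trans ?_
      rw [norm_mul, norm_mul, norm_mul, norm_logCpow _ _ hu, norm_neg, norm_inv, Complex.sub_re,
        Complex.one_re, neg_sub]
      have hj : ‖(j + 1 : ℂ)‖ = j + 1 := by
        rw [← Nat.cast_succ, Complex.norm_natCast]; push_cast; ring
      rw [hj]
      have hl := Real.log_nonneg hu
      set z := ‖s - 1‖⁻¹ with hz
      have hz0 : 0 ≤ z := by positivity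
      rw [one_div, ← hz]
      have h3 := h2 u hu
      rw [one_div, ← hz] at h3
      have hp : 0 ≤ u ^ (1 - s.re) := by positivity
      set p := u ^ (1 - s.re)
      set l := Real.log u
      have e1 : z * (l ^ (j + 1) * p) ≤ (1 + z) ^ (j + 2) * ((1 + l) ^ (j + 1) * p) := by
        have : z ≤ (1 + z) ^ (j + 2) := by
          calc z ≤ 1 + z := by linarith
            _ ≤ _ := le_self_pow₀ (by linarith) (by omega)
        gcongr
        linarith
      have e2 : (j + 1) * z * ‖Φ u‖ ≤ (j + 1) * (1 + z) * (C * (1 + z) ^ (j + 1) * (1 + l) ^ (j + 1) * p) := by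
        have : (1 + l) ^ j ≤ (1 + l) ^ (j + 1) := pow_le_pow_right₀ (by linarith) (by omega)
        calc _ ≤ (j + 1) * z * (C * (1 + z) ^ (j + 1) * (1 + l) ^ j * p) := by gcongr
          _ ≤ _ := by
            gcongr
            linarith
      calc _ ≤ _ := add_le_add e1 e2
        _ = _ := by ring

/-- Derivatives of `ζ` to the right of the line `Re s = 1`. -/
lemma zeta_upper_bound (j : ℕ) {ε : ℝ} (hε : 0 < ε) : ∃ D : ℝ, 1 ≤ D ∧ ∀ s : ℂ, 1 < s.re →
    s.re ≤ 2 → ‖LSeries (LSeries.logMul^[j] 1) s‖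
      ≤ D * (1 + 1 / ‖s - 1‖) ^ (j + 1) * (2 + |s.im|) ^ ε := by
  obtain ⟨D, hD1, hD⟩ := exists_truncation j hε
  obtain ⟨C, hC1, hC⟩ := exists_primitive j
  set K : ℝ := 2 ^ (j + 1) * j.factorial with hK
  have hK0 : 0 < K := by positivity
  refine ⟨D + 4 * K + 1 + C * D, by nlinarith, fun s hs hs2 => ?_⟩
  have him := abs_nonneg s.im
  set X := 2 + |s.im| with hX
  have hX2 : 2 ≤ X := by linarith
  obtain ⟨Y, hY1, hYX, hYD⟩ := hD X hX2
  have hX1 : 1 ≤ X ^ ε := Real.one_le_rpow (by linarith) hε.le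
  have hY0 : 0 < √(Y : ℝ) := by linarith
  obtain ⟨Φ, hΦ1, hΦ2⟩ := hC s (by rintro rfl; simp at hs)
  set Z := (1 + 1 / ‖s - 1‖) ^ (j + 1) with hZ
  have hZ1 : 1 ≤ Z := one_le_pow₀ (by have : 0 ≤ 1 / ‖s - 1‖ := by positivity
                                      linarith)
  have hY' : (1 : ℝ) ≤ Y := by exact_mod_cast hY1
  have hev : ∀ᶠ M : ℕ in atTop, ‖Φ M‖ ≤ 1 := by
    have h1 := (isLittleO_log_rpow_rpow_atTop (j : ℝ) (show 0 < s.re - 1 by linarith)).def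
      (show 0 < (C * Z * 2 ^ j)⁻¹ by positivity)
    filter_upwards [tendsto_natCast_atTop_atTop.eventually h1, eventually_ge_atTop 3] with M h2 h3
    have hM : (3 : ℝ) ≤ M := by exact_mod_cast h3
    refine (hΦ2 M (by linarith)).trans ?_
    have hl1 : 1 ≤ Real.log M := by
      rw [Real.le_log_iff_exp_le (by linarith)]
      linarith [Real.exp_one_lt_d9]
    rw [Real.rpow_natCast, Real.norm_of_nonneg (by positivity),
      Real.norm_of_nonneg (by positivity), inv_mul_eq_div, le_div_iff₀ (by positivity)] at h2
    have h4 : (M : ℝ) ^ (1 - s.re) = ((M : ℝ) ^ (s.re - 1))⁻¹ := by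
      rw [← Real.rpow_neg (by linarith), neg_sub]
    rw [h4, ← div_eq_mul_inv, div_le_one (by positivity)]
    refine le_trans ?_ h2
    calc C * Z * (1 + Real.log M) ^ j ≤ C * Z * (2 * Real.log M) ^ j := by
          gcongr
          linarith
      _ = _ := by ring
  obtain ⟨M0, hM0⟩ := eventually_atTop.1 hev
  refine lseries_norm_le_of_partial (LSeriesSummable_of_abscissaOfAbsConv_lt_re ?_) _ (max Y M0) ?_
  · rw [LSeries.absicssaOfAbsConv_logPowMul]
    exact abscissa_lt (by simp) hs
  intro M hMM
  have hM : Y ≤ M := (le_max_left _ _).trans hMM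
  have hMM0 := hM0 M ((le_max_right _ _).trans hMM)
  rw [sum_congr rfl fun n hn => term_logMul j 1 s (mem_Ico.1 hn).1,
    ← sum_Ico_consecutive _ hY1 hM]
  have htail : ‖∑ n ∈ Ico Y M, (1 : ℕ → ℂ) n * logCpow j s n‖ ≤ 4 * K + (1 + ‖Φ Y‖) := by
    have h1 : ∑ n ∈ Ico Y M, (1 : ℕ → ℂ) n * logCpow j s n
        = -(∑ n ∈ Ico Y M, (Φ (n + 1 : ℕ) - Φ n - logCpow j s n)) + (Φ M - Φ Y) := by
      rw [sum_sub_distrib, sum_Ico_sub (fun n : ℕ => Φ n) hM]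
      simp
    rw [h1]
    refine (norm_add_le _ _).trans (add_le_add ?_ ((norm_sub_le _ _).trans (by gcongr)))
    rw [norm_neg]
    calc _ ≤ ∑ n ∈ Ico Y M, K * X * (1 / ((n : ℝ) * √n)) := by
          refine (norm_sum_le _ _).trans (sum_le_sum fun n hn => ?_)
          have hn1 := hY1.trans (mem_Ico.1 hn).1
          have hn' : (1 : ℝ) ≤ n := by exact_mod_cast hn1
          have := norm_image_sub_le_of_norm_deriv_le_segment' (a := n) (b := n + 1)
            (f := fun u => Φ u - u * logCpow j s n) (f' := fun u => logCpow j s u - logCpow j s n)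
            (C := K * X / (n * √n))
            (fun x hx => by
              have h3 := (hΦ1 x (by linarith [hx.1])).sub
                ((((hasDerivAt_id x).ofReal_comp).mul_const (logCpow j s n)))
              simp only [id] at h3
              exact (h3.congr_deriv (by simp)).hasDerivWithinAt)
            (fun x hx => norm_logCpow_sub_le j hs hs2 hn1 ⟨hx.1, hx.2.le⟩) (n + 1)
            ⟨by linarith, le_rfl⟩
          rw [mul_one_div]
          calc _ = ‖Φ (n + 1) - ((n + 1 : ℝ) : ℂ) * logCpow j s n - (Φ n - (n : ℝ) * logCpow j s n)‖ := by
                push_cast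
                congr 1
                ring
            _ ≤ _ := this
            _ = _ := by ring
      _ ≤ K * X * (4 / √Y) := by
          rw [← mul_sum]
          gcongr
          exact sum_inv_mul_sqrt_le hY1 hM
      _ = 4 * K * (X / √Y) := by ring
      _ ≤ 4 * K * 1 := by
          gcongr
          exact (div_le_one hY0).2 hYX
      _ = _ := mul_one _
  have hΦY : ‖Φ Y‖ ≤ C * Z * (D * X ^ ε) := by
    refine (hΦ2 Y hY').trans ?_
    have hl := Real.log_nonneg hY'
    have h1 : (Y : ℝ) ^ (1 - s.re) ≤ 1 := Real.rpow_le_one_of_one_le_of_nonpos hY' (by linarith)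
    have h2 : (1 + Real.log Y) ^ j ≤ D * X ^ ε :=
      (pow_le_pow_right₀ (by linarith) (by omega)).trans hYD
    calc _ ≤ C * Z * (1 + Real.log Y) ^ j * 1 := by gcongr
      _ ≤ _ := by rw [mul_one]; gcongr
  have hhead := (head_le j (h := 1) (by simp) hs hY1).trans hYD
  have hZX : 1 ≤ Z * X ^ ε := one_le_mul_of_one_le_of_one_le hZ1 hX1
  have hXZ : X ^ ε ≤ Z * X ^ ε := le_mul_of_one_le_left (by linarith) hZ1
  calc _ ≤ D * X ^ ε + (4 * K + (1 + C * Z * (D * X ^ ε))) :=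
        (norm_add_le _ _).trans (add_le_add hhead (htail.trans (by gcongr)))
    _ ≤ D * (Z * X ^ ε) + (4 * K * (Z * X ^ ε) + (Z * X ^ ε + C * Z * (D * X ^ ε))) := by
        have : 4 * K ≤ 4 * K * (Z * X ^ ε) := le_mul_of_one_le_right (by positivity) hZX
        gcongr
    _ = _ := by ring

end

section

open Filter Finset Topology MeasureTheory

lemma sum_range_zmod {q : ℕ} [NeZero q] (h : ZMod q → ℂ) (a : ℕ) :
    ∑ i ∈ range q, h ((a + i : ℕ) : ZMod q) = ∑ x, h x := by
  rw [← Equiv.sum_comp (Equiv.addLeft (a : ZMod q)) h]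
  refine sum_bij' (fun i _ => (i : ZMod q)) (fun x _ => x.val) (fun _ _ => mem_univ _)
    (fun x _ => mem_range.2 (ZMod.val_lt x)) (fun i hi => ZMod.val_cast_of_lt (mem_range.1 hi))
    (fun x _ => ZMod.natCast_zmod_val x) (fun i _ => by simp)

/-- Partial sums of a mean-zero periodic function are bounded by the period. -/
lemma norm_sum_periodic_le {q : ℕ} [NeZero q] (h : ZMod q → ℂ) (hh : ∀ x, ‖h x‖ ≤ 1)
    (h0 : ∑ x, h x = 0) (a b : ℕ) : ‖∑ n ∈ Ico a b, h (n : ZMod q)‖ ≤ q := by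
  induction hk : b - a using Nat.strong_induction_on generalizing a with
  | _ k ih =>
    have hq := Nat.pos_of_neZero q
    rcases lt_or_ge (b - a) q with hlt | hge
    · calc _ ≤ ∑ n ∈ Ico a b, (1 : ℝ) := (norm_sum_le _ _).trans (sum_le_sum fun n _ => hh _)
        _ = (b - a : ℕ) := by simp
        _ ≤ q := by exact_mod_cast hlt.le
    · rw [← sum_Ico_consecutive _ (show a ≤ a + q by omega) (show a + q ≤ b by omega)]
      have : ∑ n ∈ Ico a (a + q), h (n : ZMod q) = 0 := by
        rw [sum_Ico_eq_sum_range, Nat.add_sub_cancel_left, sum_range_zmod h a, h0]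
      rw [this, zero_add]
      exact ih (b - (a + q)) (by omega) (a + q) rfl

lemma norm_char_nat_le {q : ℕ} (χ : DirichletCharacter ℂ q) (n : ℕ) : ‖χ n‖ ≤ 1 := χ.norm_le_one _

lemma char_upper_bound (j : ℕ) {ε : ℝ} (hε : 0 < ε) : ∃ D : ℝ, 1 ≤ D ∧ ∀ q : ℕ, q ≠ 0 →
    ∀ χ : DirichletCharacter ℂ q, χ ≠ 1 → ∀ s : ℂ, 1 < s.re → s.re ≤ 2 →
    ‖LSeries (LSeries.logMul^[j] (fun n => χ n)) s‖ ≤ D * (q * (2 + |s.im|)) ^ ε := by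
  obtain ⟨D, hD1, hD⟩ := upper_bound j hε
  refine ⟨D, hD1, fun q hq χ hχ s hs hs2 => ?_⟩
  have : NeZero q := ⟨hq⟩
  refine hD q (by exact_mod_cast Nat.pos_of_ne_zero hq) _ (norm_char_nat_le χ)
    (fun a b => norm_sum_periodic_le χ (χ.norm_le_one) (MulChar.sum_eq_zero_of_ne_one hχ) a b) s hs hs2

/-- The principal character is the sum of a mean-zero periodic function and the constant `φ(q) / q`,
so its series is bounded by the non-principal bound and the one for `ζ`. -/
lemma principal_upper_bound {ε : ℝ} (hε : 0 < ε) : ∃ D : ℝ, 1 ≤ D ∧ ∀ q : ℕ, q ≠ 0 →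
    ∀ s : ℂ, 1 < s.re → s.re ≤ 2 →
    ‖LSeries (fun n => (1 : DirichletCharacter ℂ q) n) s‖
      ≤ D * (1 + 1 / ‖s - 1‖) * (q * (2 + |s.im|)) ^ ε := by
  obtain ⟨D, hD1, hD⟩ := upper_bound 0 hε
  obtain ⟨E, hE1, hE⟩ := zeta_upper_bound 0 hε
  refine ⟨D + E, by linarith, fun q hq s hs hs2 => ?_⟩
  have : NeZero q := ⟨hq⟩
  have hq1 : (1 : ℝ) ≤ q := by exact_mod_cast Nat.pos_of_ne_zero hq
  set ρ : ℝ := q.totient / q with hρ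
  have hρ0 : 0 ≤ ρ := by positivity
  have hρ1 : ρ ≤ 1 := by
    rw [hρ, div_le_one (by linarith)]
    exact_mod_cast Nat.totient_le q
  set h : ZMod q → ℂ := fun x => (1 : DirichletCharacter ℂ q) x - ρ with hh
  have hb : ∀ x, ‖h x‖ ≤ 1 := by
    intro x
    simp only [hh]
    by_cases hx : IsUnit x
    · rw [MulChar.one_apply hx, ← Complex.ofReal_one, ← Complex.ofReal_sub, Complex.norm_real,
        Real.norm_of_nonneg (by linarith)]
      linarith
    · rw [MulChar.map_nonunit _ hx, zero_sub, norm_neg, Complex.norm_real, Real.norm_of_nonneg hρ0]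
      exact hρ1
  have h0 : ∑ x, h x = 0 := by
    simp only [hh]
    rw [sum_sub_distrib, MulChar.sum_one_eq_card_units, ZMod.card_units_eq_totient, sum_const,
      card_univ, ZMod.card, nsmul_eq_mul, hρ]
    push_cast
    have : (q : ℂ) ≠ 0 := by exact_mod_cast hq
    field_simp
    simp
  have hd := hD q hq1 (fun n => h n) (fun n => hb n) (norm_sum_periodic_le h hb h0) s hs hs2
  have he := hE s hs hs2
  simp only [Function.iterate_zero, id_eq, zero_add, pow_one] at hd he
  have hsplit : LSeries (fun n => (1 : DirichletCharacter ℂ q) n) s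
      = LSeries (fun n => h n) s + ρ * LSeries 1 s := by
    have e1 : (fun n : ℕ => (1 : DirichletCharacter ℂ q) n) = (fun n : ℕ => h n) + (ρ : ℂ) • (1 : ℕ → ℂ) := by
      ext n
      simp [hh]
    have hs1 : LSeriesSummable (fun n : ℕ => h n) s :=
      LSeriesSummable_of_abscissaOfAbsConv_lt_re (abscissa_lt (fun n => hb n) hs)
    have hs2 : LSeriesSummable (1 : ℕ → ℂ) s :=
      LSeriesSummable_of_abscissaOfAbsConv_lt_re (abscissa_lt (by simp) hs)
    rw [e1, LSeries_add hs1 (hs2.smul _), LSeries_smul]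
  have him := abs_nonneg s.im
  set X := q * (2 + |s.im|) with hX
  have hXX : (2 + |s.im|) ^ ε ≤ X ^ ε := by
    apply Real.rpow_le_rpow (by linarith) _ hε.le
    rw [hX]
    nlinarith
  have hz : 0 ≤ 1 / ‖s - 1‖ := by positivity
  have hX0 : 0 ≤ X ^ ε := by positivity
  rw [hsplit]
  calc _ ≤ D * X ^ ε + 1 * (E * (1 + 1 / ‖s - 1‖) * X ^ ε) := by
        refine (norm_add_le _ _).trans (add_le_add hd ?_)
        rw [norm_mul, Complex.norm_real, Real.norm_of_nonneg hρ0]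
        gcongr
        exact he.trans (by gcongr)
    _ ≤ D * (1 + 1 / ‖s - 1‖) * X ^ ε + 1 * (E * (1 + 1 / ‖s - 1‖) * X ^ ε) := by
        gcongr
        nlinarith
    _ = _ := by ring

/-- The trivial bound for an `L`-series with bounded coefficients. -/
lemma lseries_le_inv : ∃ C : ℝ, 1 ≤ C ∧ ∀ a : ℕ → ℂ, (∀ n, ‖a n‖ ≤ 1) → ∀ s : ℂ, 1 < s.re →
    s.re ≤ 2 → ‖LSeries a s‖ ≤ C / (s.re - 1) := by
  obtain ⟨E, hE1, hE⟩ := zeta_upper_bound 0 one_pos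
  refine ⟨4 * E, by linarith, fun a ha s hs hs2 => ?_⟩
  have h1 := hE s.re (by simpa using hs) (by simpa using hs2)
  have hsum : LSeriesSummable (1 : ℕ → ℂ) s.re :=
    LSeriesSummable_of_abscissaOfAbsConv_lt_re (abscissa_lt (by simp) (by simpa using hs))
  have h2 : ∀ n, LSeries.term (1 : ℕ → ℂ) s.re n = ((‖LSeries.term (1 : ℕ → ℂ) s n‖ : ℝ) : ℂ) := by
    intro n
    rcases eq_or_ne n 0 with rfl | hn
    · simp
    · rw [LSeries.term_of_ne_zero hn, LSeries.term_of_ne_zero hn, norm_div,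
        Complex.norm_natCast_cpow_of_pos (Nat.pos_of_ne_zero hn)]
      simp [Complex.ofReal_cpow]
  have hsn : Summable fun n => ‖LSeries.term (1 : ℕ → ℂ) s n‖ := by
    have := hsum
    unfold LSeriesSummable at this
    rw [funext h2] at this
    exact Complex.summable_ofReal.1 this
  have h3 : ‖LSeries a s‖ ≤ ∑' n, ‖LSeries.term (1 : ℕ → ℂ) s n‖ := by
    refine tsum_of_norm_bounded hsn.hasSum fun n => ?_
    exact LSeries.norm_term_le s (by simpa using ha n)
  have h4 : LSeries 1 (s.re : ℂ) = ((∑' n, ‖LSeries.term (1 : ℕ → ℂ) s n‖ : ℝ) : ℂ) := by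
    rw [LSeries, tsum_congr h2, Complex.ofReal_tsum]
  have h5 : ∑' n, ‖LSeries.term (1 : ℕ → ℂ) s n‖ ≤ ‖LSeries 1 (s.re : ℂ)‖ := by
    rw [h4, Complex.norm_real]
    exact le_abs_self _
  refine h3.trans (h5.trans (h1.trans ?_))
  have hx : 0 < s.re - 1 := by linarith
  simp only [zero_add, pow_one, Complex.ofReal_im, abs_zero, add_zero, Real.rpow_one]
  rw [← Complex.ofReal_one, ← Complex.ofReal_sub, Complex.norm_real, Real.norm_of_nonneg hx.le,
    le_div_iff₀ hx]
  have : E * (1 + 1 / (s.re - 1)) * 2 * (s.re - 1) = 2 * E * ((s.re - 1) + 1) := by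
    field_simp
  rw [this]
  nlinarith

end

section

open Filter Finset Topology MeasureTheory

/-! ### Gauss sums and a Pólya–Vinogradov inequality -/

/-- The Gauss sum `∑ χ(x) e(bx/q)`. -/
noncomputable def gauss {q : ℕ} [NeZero q] (χ : DirichletCharacter ℂ q) (b : ZMod q) : ℂ :=
  ∑ x, χ x * ZMod.stdAddChar (b * x)

/-- The number of solutions of `b z = 0` modulo `q`. -/
def ann {q : ℕ} [NeZero q] (b : ZMod q) : ℕ := #{z : ZMod q | b * z = 0}

lemma ann_neg {q : ℕ} [NeZero q] (b : ZMod q) : ann (-b) = ann b := by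
  simp [ann]

lemma ann_le {q : ℕ} [NeZero q] (b : ZMod q) (g : ℕ) (hg : 0 < g) (c : ZMod q) (hc : (g : ZMod q) = c * b) :
    ann b ≤ g := by
  refine le_trans (card_le_card ?_) (IsAddCyclic.card_nsmul_eq_zero_le (α := ZMod q) hg)
  intro z hz
  simp only [mem_filter, mem_univ, true_and] at hz ⊢
  rw [nsmul_eq_mul, hc, mul_assoc, hz, mul_zero]

lemma ann_le_gcd {q : ℕ} [NeZero q] (b : ZMod q) : ann b ≤ b.val.gcd q := by
  refine ann_le b _ (Nat.gcd_pos_of_pos_right _ (Nat.pos_of_neZero q))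
    ((b.val.gcdA q : ℤ) : ZMod q) ?_
  have h := congrArg (Int.cast : ℤ → ZMod q) (Nat.gcd_eq_gcd_ab b.val q)
  push_cast at h
  rw [h]
  simp [mul_comm]

lemma gauss_mul_unit {q : ℕ} [NeZero q] (χ : DirichletCharacter ℂ q) (b : ZMod q) (v : (ZMod q)ˣ) :
    ‖gauss χ (b * v)‖ = ‖gauss χ b‖ := by
  have h : χ v * gauss χ (b * v) = gauss χ b := by
    rw [gauss, gauss, mul_sum, ← Equiv.sum_comp (Units.mulLeft v) (fun x => χ x * ZMod.stdAddChar (b * x))]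
    refine sum_congr rfl fun x _ => ?_
    simp only [Units.mulLeft_apply, map_mul]
    rw [mul_assoc b, mul_assoc (χ v)]
  rw [← h, norm_mul]
  have : ‖χ v‖ = 1 := DirichletCharacter.unit_norm_eq_one χ v
  rw [this, one_mul]

lemma card_fiber_le {q : ℕ} [NeZero q] (b m : ZMod q) : #{x : ZMod q | b * x = m} ≤ ann b := by
  rcases (univ.filter fun x : ZMod q => b * x = m).eq_empty_or_nonempty with h | ⟨x0, hx0⟩
  · rw [h]; simp
  · simp only [mem_filter, mem_univ, true_and] at hx0
    refine card_le_card_of_injOn (fun x => x - x0) ?_ (fun x _ y _ h => by simpa using h)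
    intro x hx
    simp only [coe_filter, mem_univ, true_and, Set.mem_ofPred_eq] at hx ⊢
    rw [mul_sub, hx, hx0, sub_self]

/-- Gauss sums of arbitrary (not necessarily primitive) characters: average `|G(bv)|²` over all
residues `v`, the value being constant on units. -/
lemma gauss_bound {q : ℕ} [NeZero q] (χ : DirichletCharacter ℂ q) (b : ZMod q) :
    ‖gauss χ b‖ ^ 2 ≤ q * ann b := by
  set v : ZMod q → ℂ := fun m => ∑ x with b * x = m, χ x with hv
  have h1 := zmod_parseval q v
  have h2 : ∀ j : ZMod q, ∑ m, v m * ZMod.stdAddChar (m * j) = gauss χ (b * j) := by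
    intro j
    rw [gauss, ← sum_fiberwise univ (fun x => b * x) (fun x => χ x * ZMod.stdAddChar (b * j * x))]
    refine sum_congr rfl fun m _ => ?_
    simp only [hv]
    rw [sum_mul]
    refine sum_congr rfl fun x hx => ?_
    rw [← (mem_filter.1 hx).2, mul_right_comm]
  simp only [h2] at h1
  have hunit : ∀ x : ZMod q, ‖χ x‖ = if IsUnit x then 1 else 0 := by
    intro x
    split_ifs with h
    · obtain ⟨u, rfl⟩ := h
      exact DirichletCharacter.unit_norm_eq_one χ u
    · rw [MulChar.map_nonunit _ h, norm_zero]
  have hφ : ∑ x : ZMod q, ‖χ x‖ = q.totient := by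
    rw [sum_congr rfl fun x _ => hunit x, ← ZMod.card_units_eq_totient, sum_boole]
    norm_cast
    rw [← Fintype.card_subtype]
    exact Fintype.card_congr (Submonoid.unitsTypeEquivIsUnitSubmonoid (M := ZMod q)).symm.toEquiv
  have h3 : ∑ m, ‖v m‖ ^ 2 ≤ ann b * q.totient := by
    have h4 : ∀ m, ‖v m‖ ≤ ∑ x with b * x = m, ‖χ x‖ := fun m => norm_sum_le _ _
    have h5 : ∀ m, ‖v m‖ ≤ ann b := by
      intro m
      refine (h4 m).trans ?_
      calc _ ≤ ∑ x with b * x = m, (1 : ℝ) := sum_le_sum fun x _ => χ.norm_le_one x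
        _ = #{x : ZMod q | b * x = m} := by simp
        _ ≤ _ := by exact_mod_cast card_fiber_le b m
    calc _ ≤ ∑ m, ann b * ∑ x with b * x = m, ‖χ x‖ := by
          refine sum_le_sum fun m _ => ?_
          rw [sq]
          exact mul_le_mul (h5 m) (h4 m) (norm_nonneg _) (Nat.cast_nonneg _)
      _ = ann b * q.totient := by
          rw [← mul_sum, sum_fiberwise univ (fun x => b * x) fun x => ‖χ x‖, hφ]
  have h4 : (q.totient : ℝ) * ‖gauss χ b‖ ^ 2 ≤ ∑ j : ZMod q, ‖gauss χ (b * j)‖ ^ 2 := by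
    rw [← hφ, sum_mul]
    refine sum_le_sum fun x _ => ?_
    rw [hunit]
    split_ifs with h
    · obtain ⟨u, rfl⟩ := h
      rw [gauss_mul_unit, one_mul]
    · rw [zero_mul]
      positivity
  have hφ0 : (0 : ℝ) < q.totient := by exact_mod_cast Nat.totient_pos.2 (Nat.pos_of_neZero q)
  have : (q.totient : ℝ) * ‖gauss χ b‖ ^ 2 ≤ q.totient * (q * ann b) := by
    rw [h1] at h4
    calc _ ≤ _ := h4
      _ ≤ q * (ann b * q.totient) := by gcongr
      _ = _ := by ring
  exact le_of_mul_le_mul_left this hφ0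

lemma char_eq_sum_gauss {q : ℕ} [NeZero q] (χ : DirichletCharacter ℂ q) (n : ZMod q) :
    q * χ n = ∑ b : ZMod q, gauss χ (-b) * ZMod.stdAddChar (b * n) := by
  simp only [gauss, sum_mul]
  rw [sum_comm]
  have h : ∀ x : ZMod q, ∑ b : ZMod q, χ x * ZMod.stdAddChar (-b * x) * ZMod.stdAddChar (b * n)
      = if x = n then q * χ x else 0 := by
    intro x
    have h1 := AddChar.sum_mulShift (n - x) (ZMod.isPrimitive_stdAddChar q)
    calc _ = χ x * ∑ b : ZMod q, ZMod.stdAddChar (b * (n - x)) := by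
          rw [mul_sum]
          refine sum_congr rfl fun b _ => ?_
          rw [mul_assoc, ← AddChar.map_add_eq_mul]
          congr 2
          ring
      _ = _ := by
          rw [h1]
          by_cases hx : x = n
          · simp [hx, mul_comm]
          · rw [if_neg hx, if_neg (fun h => hx (sub_eq_zero.1 h).symm)]
            simp
  rw [sum_congr rfl fun x _ => h x]
  simp

lemma stdAddChar_eq_e {q : ℕ} [NeZero q] (m : ℤ) : ZMod.stdAddChar (m : ZMod q) = e (m / q) := by
  rw [ZMod.stdAddChar_coe, e]
  congr 1
  push_cast
  ring

lemma norm_stdAddChar_sub_one {q : ℕ} [NeZero q] (b : ZMod q) (hb : b ≠ 0) :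
    1 / ‖ZMod.stdAddChar b - 1‖ ≤ q / 4 * (1 / b.val + 1 / (-b).val) := by
  have hq : (0 : ℝ) < q := by exact_mod_cast Nat.pos_of_neZero q
  have hv0 : 0 < b.val := by rwa [ZMod.val_pos]
  have hvq := ZMod.val_lt b
  have hneg : ((-b).val : ℝ) = q - b.val := by
    rw [ZMod.neg_val, if_neg hb, Nat.cast_sub hvq.le]
  have h1 : ZMod.stdAddChar b = e (b.val / q) := by
    have := stdAddChar_eq_e (q := q) b.val
    simpa using this
  have h2 := four_mul_le_norm_e_sub_one (b.val / q)
  rw [h1, hneg]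
  set v : ℝ := (b.val : ℝ) with hv
  have hv0' : 0 < v := by rw [hv]; exact_mod_cast hv0
  have hvq' : v < q := by rw [hv]; exact_mod_cast hvq
  have h3 : v * (q - v) / q / q ≤ |v / q - round (v / q)| := by
    rcases le_or_gt (round (v / q)) 0 with hk | hk
    · have hk' : (round (v / q) : ℝ) ≤ 0 := by exact_mod_cast hk
      refine le_trans ?_ (le_abs_self _)
      refine le_trans ?_ (by linarith : v / q ≤ v / q - round (v / q))
      gcongr
      rw [div_le_iff₀ hq]
      nlinarith
    · have hk' : (1 : ℝ) ≤ round (v / q) := by exact_mod_cast hk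
      refine le_trans ?_ (neg_le_abs _)
      refine le_trans ?_ (by linarith : 1 - v / q ≤ _)
      rw [div_le_iff₀ hq, sub_mul, div_mul_cancel₀ _ hq.ne', div_le_iff₀ hq]
      nlinarith
  have h4 : 0 < v * (q - v) / q / q := by
    have : 0 < q - v := by linarith
    positivity
  calc _ ≤ 1 / (4 * (v * (q - v) / q / q)) := by
        apply one_div_le_one_div_of_le (by linarith)
        linarith
    _ = _ := by
        have : q - v ≠ 0 := by linarith
        field_simp
        ring

/-- A Pólya–Vinogradov inequality for arbitrary nonprincipal characters. -/
lemma polya {q : ℕ} [NeZero q] (χ : DirichletCharacter ℂ q) (hχ : χ ≠ 1) (a b : ℕ) :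
    ‖∑ n ∈ Ico a b, χ (n : ZMod q)‖ ≤ √q * #q.divisors * (1 + Real.log q) := by
  have hq : (0 : ℝ) < q := by exact_mod_cast Nat.pos_of_neZero q
  -- expand `χ` in additive characters; the non-primitive frequencies are weighted by `√(ann c)`
  have h1 : (q : ℂ) * ∑ n ∈ Ico a b, χ (n : ZMod q)
      = ∑ c : ZMod q, gauss χ (-c) * ∑ n ∈ Ico a b, (ZMod.stdAddChar c : ℂ) ^ n := by
    rw [mul_sum, sum_congr rfl fun (n : ℕ) _ => char_eq_sum_gauss χ (n : ZMod q), sum_comm]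
    refine sum_congr rfl fun c _ => ?_
    rw [mul_sum]
    refine sum_congr rfl fun n _ => ?_
    rw [← AddChar.map_nsmul_eq_pow, nsmul_eq_mul, mul_comm c]
  have hg0 : gauss χ 0 = 0 := by
    simp [gauss, MulChar.sum_eq_zero_of_ne_one hχ]
  have h2 : ∀ c : ZMod q, ‖gauss χ (-c) * ∑ n ∈ Ico a b, (ZMod.stdAddChar c : ℂ) ^ n‖
      ≤ √q * (q / 2) * (√(ann c) / c.val + √(ann (-c)) / (-c).val) := by
    intro c
    rcases eq_or_ne c 0 with rfl | hc
    · rw [neg_zero, hg0, zero_mul, norm_zero]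
      positivity
    · rw [norm_mul, ann_neg]
      have e1 : ‖gauss χ (-c)‖ ≤ √q * √(ann c) := by
        rw [← Real.sqrt_mul hq.le]
        refine Real.le_sqrt_of_sq_le ?_
        have := gauss_bound χ (-c)
        rwa [ann_neg] at this
      have hne : 0 < ‖(ZMod.stdAddChar c : ℂ) - 1‖ := by
        rw [norm_pos_iff, sub_ne_zero]
        intro h
        exact hc (ZMod.injective_stdAddChar (by rw [h, AddChar.map_zero_eq_one]))
      have e2 : ‖∑ n ∈ Ico a b, (ZMod.stdAddChar c : ℂ) ^ n‖ ≤ 2 * (1 / ‖(ZMod.stdAddChar c : ℂ) - 1‖) := by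
        rw [mul_one_div, le_div_iff₀ hne]
        exact norm_geom_le (AddChar.norm_apply _ _) a b
      have e3 := norm_stdAddChar_sub_one c hc
      calc _ ≤ (√q * √(ann c)) * (2 * (q / 4 * (1 / c.val + 1 / (-c).val))) := by
            gcongr
            exact e2.trans (by gcongr)
        _ = _ := by ring
  have h3 : ∑ c : ZMod q, √(ann c) / c.val ≤ #q.divisors * (1 + Real.log q) := by
    calc ∑ c : ZMod q, √(ann c) / (c.val : ℝ)
        ≤ ∑ c : ZMod q, √((c.val.gcd q : ℕ) : ℝ) / c.val := by
          refine sum_le_sum fun c _ => ?_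
          gcongr
          exact ann_le_gcd c
      _ = ∑ v ∈ range q, √((v.gcd q : ℕ) : ℝ) / v := by
          refine sum_bij' (fun c _ => c.val) (fun v _ => (v : ZMod q))
            (fun c _ => mem_range.2 (ZMod.val_lt c)) (fun _ _ => mem_univ _)
            (fun c _ => ZMod.natCast_zmod_val c)
            (fun v hv => ZMod.val_cast_of_lt (mem_range.1 hv)) (fun _ _ => rfl)
      _ ≤ ∑ v ∈ range q, ∑ g ∈ q.divisors, if g ∣ v then √(g : ℝ) / v else 0 := by
          refine sum_le_sum fun v _ => ?_
          have hmem : v.gcd q ∈ q.divisors :=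
            Nat.mem_divisors.2 ⟨Nat.gcd_dvd_right _ _, NeZero.ne q⟩
          refine le_trans ?_ (single_le_sum (fun g _ => ?_) hmem)
          · rw [if_pos (Nat.gcd_dvd_left _ _)]
          · split_ifs <;> positivity
      _ = ∑ g ∈ q.divisors, ∑ v ∈ range q, if g ∣ v then √(g : ℝ) / v else 0 := sum_comm
      _ ≤ ∑ g ∈ q.divisors, (1 + Real.log q) := by
          refine sum_le_sum fun g hg => ?_
          have hg1 : 0 < g := Nat.pos_of_mem_divisors hg
          have hg1' : (1 : ℝ) ≤ g := by exact_mod_cast hg1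
          rw [← sum_filter]
          calc _ ≤ ∑ m ∈ range q, √(g : ℝ) / ((g * m : ℕ) : ℝ) := by
                rw [← sum_image (f := fun v : ℕ => √(g : ℝ) / (v : ℝ)) (g := fun m => g * m)
                  (fun x _ y _ h => Nat.eq_of_mul_eq_mul_left hg1 h)]
                refine sum_le_sum_of_subset_of_nonneg ?_ (fun _ _ _ => by positivity)
                intro v hv
                obtain ⟨hv1, m, rfl⟩ := mem_filter.1 hv
                refine mem_image.2 ⟨m, mem_range.2 ?_, rfl⟩
                have := mem_range.1 hv1
                nlinarith
            _ ≤ ∑ m ∈ Ioc 0 q, 1 / (m : ℝ) := by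
                have : ∀ m ∈ range q, √(g : ℝ) / ((g * m : ℕ) : ℝ) ≤ 1 / (m : ℝ) := by
                  intro m _
                  rcases Nat.eq_zero_or_pos m with rfl | hm
                  · simp
                  · have hm' : (0 : ℝ) < m := by exact_mod_cast hm
                    push_cast
                    rw [div_le_div_iff₀ (by positivity) hm', one_mul]
                    gcongr
                    rw [Real.sqrt_le_left (by linarith)]
                    nlinarith
                refine (sum_le_sum this).trans ?_
                rw [range_eq_Ico, sum_eq_sum_Ico_succ_bot (Nat.pos_of_neZero q)]
                simp only [Nat.cast_zero, div_zero, zero_add]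
                refine sum_le_sum_of_subset_of_nonneg ?_ (fun _ _ _ => by positivity)
                intro m hm
                simp at hm ⊢
                omega
            _ ≤ _ := sum_inv_le_log q
      _ = _ := by rw [sum_const, nsmul_eq_mul]
  have h4 : (q : ℝ) * ‖∑ n ∈ Ico a b, χ (n : ZMod q)‖
      ≤ q * (√q * #q.divisors * (1 + Real.log q)) := by
    calc _ = ‖(q : ℂ) * ∑ n ∈ Ico a b, χ (n : ZMod q)‖ := by rw [norm_mul, Complex.norm_natCast]
      _ ≤ ∑ c : ZMod q, √q * (q / 2) * (√(ann c) / c.val + √(ann (-c)) / (-c).val) := by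
          rw [h1]
          exact (norm_sum_le _ _).trans (sum_le_sum fun c _ => h2 c)
      _ = √q * (q / 2) * (∑ c : ZMod q, √(ann c) / c.val + ∑ c : ZMod q, √(ann c) / c.val) := by
          rw [← mul_sum, sum_add_distrib]
          congr 2
          exact Equiv.sum_comp (Equiv.neg (ZMod q)) fun c => √(ann c) / (c.val : ℝ)
      _ ≤ √q * (q / 2) * (#q.divisors * (1 + Real.log q) + #q.divisors * (1 + Real.log q)) := by
          gcongr
      _ = _ := by ring
  exact le_of_mul_le_mul_left h4 hq

end

section

open Filter Finset Topology MeasureTheory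

/-! ### Lower bounds for `L(σ, χ)` with `χ` real -/

/-- The divisor bound `τ(n) ≪ n^ε`. -/
lemma divisor_bound {ε : ℝ} (hε : 0 < ε) : ∃ C : ℝ, 1 ≤ C ∧ ∀ n : ℕ, n ≠ 0 →
    (#n.divisors : ℝ) ≤ C * (n : ℝ) ^ ε := by
  -- local factors `(a+1)/p^{aε}` are at most `1` for `p ≥ Q` and at most `B` in general
  set B : ℝ := 1 + 1 / (ε * Real.log 2) with hB
  have hl2 : 0 < Real.log 2 := Real.log_pos (by norm_num)
  have hB1 : 1 ≤ B := le_add_of_nonneg_right (by positivity)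
  set Q : ℕ := ⌈(2 : ℝ) ^ (1 / ε)⌉₊ with hQ
  refine ⟨B ^ Q, one_le_pow₀ hB1, fun n hn => ?_⟩
  have hloc : ∀ p ∈ n.primeFactors, ((n.factorization p + 1 : ℕ) : ℝ)
      ≤ (if p < Q then B else 1) * ((p ^ n.factorization p : ℕ) : ℝ) ^ ε := by
    intro p hp
    have hp2 : (2 : ℝ) ≤ p := by exact_mod_cast (Nat.prime_of_mem_primeFactors hp).two_le
    set a := n.factorization p
    have hpow : ((p ^ a : ℕ) : ℝ) ^ ε = ((p : ℝ) ^ ε) ^ a := by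
      push_cast
      rw [← Real.rpow_natCast, ← Real.rpow_natCast, ← Real.rpow_mul (by linarith),
        ← Real.rpow_mul (by linarith), mul_comm]
    rw [hpow]
    push_cast
    split_ifs with h
    · have h1 : 1 + a * (ε * Real.log 2) ≤ ((p : ℝ) ^ ε) ^ a := by
        have h2 : Real.exp (ε * Real.log 2) ≤ (p : ℝ) ^ ε := by
          rw [Real.rpow_def_of_pos (by linarith), mul_comm]
          gcongr
        calc _ ≤ Real.exp (a * (ε * Real.log 2)) := by
              rw [add_comm]; exact Real.add_one_le_exp _
          _ = Real.exp (ε * Real.log 2) ^ a := by rw [← Real.exp_nat_mul]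
          _ ≤ _ := by gcongr
      have h3 : (a : ℝ) + 1 ≤ B * (1 + a * (ε * Real.log 2)) := by
        have : B * (1 + a * (ε * Real.log 2))
            = 1 + a * (ε * Real.log 2) + 1 / (ε * Real.log 2) + a := by
          rw [hB]; field_simp; ring
        rw [this]
        have : 0 ≤ a * (ε * Real.log 2) + 1 / (ε * Real.log 2) := by positivity
        linarith
      exact h3.trans (by gcongr)
    · rw [one_mul]
      have h1 : (2 : ℝ) ≤ (p : ℝ) ^ ε := by
        have h2 : (2 : ℝ) ^ (1 / ε) ≤ p := (Nat.le_ceil _).trans (by exact_mod_cast not_lt.1 h)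
        calc (2 : ℝ) = ((2 : ℝ) ^ (1 / ε)) ^ ε := by
              rw [← Real.rpow_mul (by norm_num), one_div_mul_cancel hε.ne', Real.rpow_one]
          _ ≤ _ := by gcongr
      calc (a : ℝ) + 1 ≤ 2 ^ a := by exact_mod_cast Nat.lt_two_pow_self
        _ ≤ _ := by gcongr
  rw [Nat.card_divisors hn]
  push_cast
  have := prod_le_prod (fun p _ => by positivity) hloc
  push_cast at this
  refine this.trans ?_
  rw [prod_mul_distrib]
  have hn' : (n : ℝ) ^ ε = ∏ p ∈ n.primeFactors, ((p : ℝ) ^ n.factorization p) ^ ε := by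
    conv_lhs => rw [← Nat.prod_factorization_pow_eq_self hn]
    rw [Finsupp.prod, Nat.support_factorization]
    push_cast
    exact (Real.finsetProd_rpow _ _ (fun p _ => by positivity) ε).symm
  rw [hn']
  gcongr
  rw [← prod_filter, prod_const]
  refine pow_le_pow_right₀ hB1 ?_
  calc _ ≤ #(range Q) := card_le_card fun p hp => by
        simpa using (mem_filter.1 hp).2
    _ = Q := card_range Q

/-- The regular part of `1/(e^u - 1)` at `0`, up to sign. -/
noncomputable def bern (u : ℝ) : ℝ := 1 / u - 1 / (Real.exp u - 1)

lemma bern_nonneg {u : ℝ} (hu : 0 < u) : 0 ≤ bern u := by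
  rw [bern, sub_nonneg]
  apply one_div_le_one_div_of_le hu
  linarith [Real.add_one_le_exp u]

lemma bern_le_one {u : ℝ} (hu : 0 < u) : bern u ≤ 1 := by
  have h1 : 0 < Real.exp u - 1 := by linarith [Real.add_one_le_exp u]
  rw [bern, div_sub_div _ _ hu.ne' h1.ne', div_le_one (by positivity)]
  have h2 := Real.add_one_le_exp (-u)
  have h3 : Real.exp u * Real.exp (-u) = 1 := by rw [← Real.exp_add]; simp
  nlinarith [Real.exp_pos u]

lemma bern_antitone : AntitoneOn bern (Set.Ioi 0) := by
  have hd : ∀ u ∈ Set.Ioi (0 : ℝ), HasDerivAt bern (-1 / u ^ 2 + Real.exp u / (Real.exp u - 1) ^ 2) u := by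
    intro u hu
    have hu : 0 < u := hu
    have h1 : Real.exp u - 1 ≠ 0 := by linarith [Real.add_one_le_exp u]
    have h2 := (hasDerivAt_inv hu.ne').sub (((Real.hasDerivAt_exp u).sub_const 1).inv h1)
    have h3 : bern = (fun u => u⁻¹) - (fun u => Real.exp u - 1)⁻¹ := by
      ext v; simp [bern]
    rw [h3]
    refine h2.congr_deriv ?_
    ring
  refine antitoneOn_of_deriv_nonpos (convex_Ioi 0)
    (fun u hu => (hd u hu).continuousAt.continuousWithinAt)
    (fun u hu => by rw [interior_Ioi] at hu; exact (hd u hu).differentiableAt.differentiableWithinAt) ?_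
  intro u hu
  rw [interior_Ioi] at hu
  rw [(hd u hu).deriv]
  have hu : 0 < u := hu
  have h1 : 0 < Real.exp u - 1 := by linarith [Real.add_one_le_exp u]
  have h2 : u / 2 ≤ Real.sinh (u / 2) := Real.self_le_sinh_iff.2 (by linarith)
  rw [Real.sinh_eq] at h2
  have h3 : Real.exp (u / 2) * Real.exp (u / 2) = Real.exp u := by rw [← Real.exp_add]; ring_nf
  have h4 : Real.exp (u / 2) * Real.exp (-(u / 2)) = 1 := by rw [← Real.exp_add]; simp
  have h5 : u * Real.exp (u / 2) ≤ Real.exp u - 1 := by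
    nlinarith [Real.exp_pos (u / 2)]
  have h6 : Real.exp u / (Real.exp u - 1) ^ 2 ≤ 1 / u ^ 2 := by
    rw [div_le_div_iff₀ (by positivity) (by positivity), one_mul, ← h3]
    calc Real.exp (u / 2) * Real.exp (u / 2) * u ^ 2 = (u * Real.exp (u / 2)) ^ 2 := by ring
      _ ≤ (Real.exp u - 1) ^ 2 := by gcongr
      _ = _ := by rw [h3]
  rw [neg_div]
  linarith

open ComplexOrder in
/-- For real `χ` the coefficients of `ζ(s) L(s, χ)` are at least `1` at squares, as each local factor
is `∑ χ(p)^i` over `0 ≤ i ≤ 2 a`, with `χ(p)` one of `0`, `1`, `-1`. -/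
lemma one_le_zetaMul_sq {q : ℕ} {χ : DirichletCharacter ℂ q} (hχ : χ ^ 2 = 1) {m : ℕ} (hm : m ≠ 0) :
    1 ≤ χ.zetaMul (m ^ 2) := by
  rw [χ.isMultiplicative_zetaMul.multiplicative_factorization _ (pow_ne_zero 2 hm), Finsupp.prod]
  rw [← prod_const_one (s := (m ^ 2).factorization.support)]
  refine prod_le_prod (fun _ _ => zero_le_one) fun p hp => ?_
  have hp' : p.Prime := by
    rw [Nat.support_factorization] at hp
    exact Nat.prime_of_mem_primeFactors hp
  have h2 : (m ^ 2).factorization p = 2 * m.factorization p := by simp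
  rw [h2, DirichletCharacter.zetaMul, ArithmeticFunction.coe_zeta_mul_apply,
    Nat.sum_divisors_prime_pow hp']
  have h3 : ∀ i, toArithmeticFunction (fun n : ℕ => χ n) (p ^ i) = χ p ^ i := by
    intro i
    simp [toArithmeticFunction, hp'.ne_zero]
  simp only [h3]
  rcases MulChar.isQuadratic_iff_sq_eq_one.mpr hχ p with h | h | h
  · rw [sum_range_succ', h]
    simp
  · rw [h]
    simp
    norm_cast
    positivity
  · rw [h, neg_one_geom_sum, if_neg]
    rw [Nat.even_add_one]
    simp

lemma zetaMul_eq_sum {q : ℕ} (χ : DirichletCharacter ℂ q) {n : ℕ} :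
    χ.zetaMul n = ∑ x ∈ n.divisorsAntidiagonal, χ x.1 := by
  rw [DirichletCharacter.zetaMul, ArithmeticFunction.coe_zeta_mul_apply,
    ← Nat.sum_divisorsAntidiagonal (fun i _ => toArithmeticFunction (fun n : ℕ => χ n) i)]
  refine sum_congr rfl fun x hx => ?_
  have : x.1 ≠ 0 := (Nat.ne_zero_of_mem_divisorsAntidiagonal hx).1
  simp [toArithmeticFunction, this]

/-- Lower bound for the smoothed sum of `1 * χ`, from the squares alone. -/
lemma smooth_sum_ge {q : ℕ} {χ : DirichletCharacter ℂ q} (hχ : χ ^ 2 = 1) {K D : ℕ} (hK : 1 ≤ K)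
    (hD : K ^ 2 ≤ D) :
    (K : ℝ) / 3 ≤ ‖∑ n ∈ Ioc 0 D, χ.zetaMul n * ((Real.exp (-1 / (K : ℝ) ^ 2) ^ n : ℝ) : ℂ)‖ := by
  set w := Real.exp (-1 / (K : ℝ) ^ 2) with hw
  have hre : ∀ n, 0 ≤ (χ.zetaMul n).re := fun n => (Complex.le_def.1 (DirichletCharacter.zetaMul_nonneg hχ n)).1
  have hK0 : (0 : ℝ) < K := by exact_mod_cast hK
  refine le_trans ?_ (Complex.re_le_norm _)
  rw [Complex.re_sum]
  calc (K : ℝ) / 3 ≤ ∑ m ∈ Ioc 0 K, (1 / 3 : ℝ) := by simp; linarith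
    _ ≤ ∑ m ∈ Ioc 0 K, (χ.zetaMul (m ^ 2) * ((w ^ (m ^ 2) : ℝ) : ℂ)).re := by
        refine sum_le_sum fun m hm => ?_
        obtain ⟨hm0, hmK⟩ := mem_Ioc.1 hm
        rw [Complex.re_mul_ofReal]
        have h1 : 1 ≤ (χ.zetaMul (m ^ 2)).re :=
          (Complex.le_def.1 (one_le_zetaMul_sq hχ hm0.ne')).1
        have h2 : (1 / 3 : ℝ) ≤ w ^ (m ^ 2) := by
          rw [hw, ← Real.exp_nat_mul]
          have : Real.exp (-1) ≤ Real.exp ((m ^ 2 : ℕ) * (-1 / (K : ℝ) ^ 2)) := by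
            gcongr
            push_cast
            have : (m : ℝ) ^ 2 / (K : ℝ) ^ 2 ≤ 1 := by
              rw [div_le_one (by positivity)]
              gcongr
            calc (-1 : ℝ) ≤ -((m : ℝ) ^ 2 / (K : ℝ) ^ 2) := by linarith
              _ = _ := by ring
          refine le_trans ?_ this
          rw [Real.exp_neg, one_div]
          gcongr
          linarith [Real.exp_one_lt_d9]
        nlinarith
    _ = ∑ n ∈ (Ioc 0 K).image (fun m => m ^ 2), (χ.zetaMul n * ((w ^ n : ℝ) : ℂ)).re := by
        rw [sum_image]
        intro x _ y _ h
        exact Nat.pow_left_injective (by norm_num) h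
    _ ≤ _ := by
        refine sum_le_sum_of_subset_of_nonneg ?_ fun n _ _ => ?_
        · intro n hn
          obtain ⟨m, hm, rfl⟩ := mem_image.1 hn
          obtain ⟨hm0, hmK⟩ := mem_Ioc.1 hm
          refine mem_Ioc.2 ⟨by positivity, le_trans ?_ hD⟩
          gcongr
        · rw [Complex.re_mul_ofReal]
          exact mul_nonneg (hre n) (by positivity)

/-- The smoothed sum of `1 * χ` compared with `K² ∑ χ(d)/d`. -/
lemma smooth_sum_sub_le {q : ℕ} (χ : DirichletCharacter ℂ q) {P : ℝ}
    (hP : ∀ a b : ℕ, ‖∑ n ∈ Ico a b, χ (n : ZMod q)‖ ≤ P) {K D : ℕ} (hK : 1 ≤ K) :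
    ‖∑ n ∈ Ioc 0 D, χ.zetaMul n * ((Real.exp (-1 / (K : ℝ) ^ 2) ^ n : ℝ) : ℂ)
      - (K : ℂ) ^ 2 * ∑ d ∈ Ioc 0 D, χ d * ((1 / (d : ℝ) : ℝ) : ℂ)‖
      ≤ P + D * Real.exp (-1 / (K : ℝ) ^ 2) ^ D / (1 - Real.exp (-1 / (K : ℝ) ^ 2)) := by
  set w := Real.exp (-1 / (K : ℝ) ^ 2) with hw
  have hK0 : (0 : ℝ) < K := by exact_mod_cast hK
  have hw0 : 0 < w := Real.exp_pos _
  have hw1 : w < 1 := by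
    rw [hw, Real.exp_lt_one_iff, neg_div]
    have : 0 < 1 / (K : ℝ) ^ 2 := by positivity
    linarith
  have hP0 : 0 ≤ P := (norm_nonneg _).trans (hP 0 0)
  -- the inner sums are truncated geometric series
  have h1 : ∑ n ∈ Ioc 0 D, χ.zetaMul n * ((w ^ n : ℝ) : ℂ)
      = ∑ d ∈ Ioc 0 D, χ d * ((∑ k ∈ Ioc 0 D, if d * k ≤ D then w ^ (d * k) else 0 : ℝ) : ℂ) := by
    have := sum_Ioc_antidiag D (fun d k => χ d * ((w ^ (d * k) : ℝ) : ℂ))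
    rw [← sum_congr rfl (fun n _ => ?_), this] 
    · refine sum_congr rfl fun d _ => ?_
      push_cast
      rw [mul_sum]
      refine sum_congr rfl fun k _ => ?_
      split_ifs <;> simp
    · rw [zetaMul_eq_sum, sum_mul]
      refine sum_congr rfl fun x hx => ?_
      rw [(Nat.mem_divisorsAntidiagonal.1 hx).1]
  have h2 : ∀ d ∈ Ioc 0 D, |(∑ k ∈ Ioc 0 D, if d * k ≤ D then w ^ (d * k) else 0)
      - ((K : ℝ) ^ 2 * (1 / d) - bern (d / (K : ℝ) ^ 2))| ≤ w ^ D / (1 - w) := by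
    intro d hd
    obtain ⟨hd0, hdD⟩ := mem_Ioc.1 hd
    have hd0' : (0 : ℝ) < d := by exact_mod_cast hd0
    have hwd : w ^ d ≤ w := by
      calc w ^ d ≤ w ^ 1 := pow_le_pow_of_le_one hw0.le hw1.le hd0
        _ = w := pow_one w
    have e1 : (K : ℝ) ^ 2 * (1 / d) - bern (d / (K : ℝ) ^ 2) = w ^ d / (1 - w ^ d) := by
      have : w ^ d = (Real.exp (d / (K : ℝ) ^ 2))⁻¹ := by
        rw [hw, ← Real.exp_nat_mul, ← Real.exp_neg]
        congr 1
        ring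
      rw [this, bern]
      have h3 : 1 < Real.exp (d / (K : ℝ) ^ 2) := Real.one_lt_exp_iff.2 (by positivity)
      have h4 : Real.exp (d / (K : ℝ) ^ 2) - 1 ≠ 0 := by linarith
      have h5 : 1 - (Real.exp (d / (K : ℝ) ^ 2))⁻¹ ≠ 0 := by
        have := inv_lt_one_of_one_lt₀ h3
        linarith
      rw [one_div_div, mul_one_div, sub_sub_cancel]
      field_simp
    have e2 : (∑ k ∈ Ioc 0 D, if d * k ≤ D then w ^ (d * k) else 0)
        = (w ^ d - (w ^ d) ^ (D / d + 1)) / (1 - w ^ d) := by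
      have : (∑ k ∈ Ioc 0 D, if d * k ≤ D then w ^ (d * k) else 0)
          = ∑ k ∈ Ico 1 (D / d + 1), (w ^ d) ^ k := by
        rw [← sum_filter]
        refine sum_congr ?_ fun k _ => by rw [pow_mul]
        ext k
        simp only [mem_filter, mem_Ioc, mem_Ico]
        rw [Nat.lt_succ_iff, Nat.le_div_iff_mul_le hd0, mul_comm k d]
        constructor
        · rintro ⟨⟨h1, _⟩, h2⟩
          exact ⟨h1, h2⟩
        · rintro ⟨h1, h2⟩
          exact ⟨⟨h1, by nlinarith⟩, h2⟩
      rw [this, geom_sum_Ico' (by linarith) (Nat.le_add_left 1 _), pow_one]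
    rw [e1, e2, ← sub_div, sub_right_comm, sub_self, zero_sub, abs_div, abs_neg,
      abs_of_pos (by positivity : 0 < (w ^ d) ^ (D / d + 1)), abs_of_pos (by linarith : 0 < 1 - w ^ d)]
    have hpow : (w ^ d) ^ (D / d + 1) ≤ w ^ D := by
      rw [← pow_mul]
      refine pow_le_pow_of_le_one hw0.le hw1.le ?_
      have := Nat.lt_mul_div_succ D hd0
      omega
    have : 0 < 1 - w := by linarith
    gcongr
  have h3 : ‖∑ d ∈ Ioc 0 D, χ d * ((bern (d / (K : ℝ) ^ 2) : ℝ) : ℂ)‖ ≤ P := by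
    have hI : Ioc 0 D = Ico 1 (D + 1) := by ext; simp; omega
    rw [hI]
    refine (abel_antitone_le (fun d => χ d) (fun d => bern (d / (K : ℝ) ^ 2)) 1 (D + 1) (by omega) P
      (fun m _ _ => hP _ _) (fun n hn => ?_) (fun n hn => ?_)).trans ?_
    · have hn' : (0 : ℝ) < n := by exact_mod_cast hn
      apply bern_antitone
      · exact Set.mem_Ioi.2 (by positivity)
      · exact Set.mem_Ioi.2 (by positivity)
      · gcongr
        omega
    · have hn' : (0 : ℝ) < n := by exact_mod_cast hn
      exact bern_nonneg (by positivity)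
    · have := bern_le_one (show 0 < ((1 : ℕ) : ℝ) / (K : ℝ) ^ 2 by positivity)
      nlinarith
  have h4 : ∑ n ∈ Ioc 0 D, χ.zetaMul n * ((w ^ n : ℝ) : ℂ)
      - (K : ℂ) ^ 2 * ∑ d ∈ Ioc 0 D, χ d * ((1 / (d : ℝ) : ℝ) : ℂ)
      = ∑ d ∈ Ioc 0 D, χ d * (((∑ k ∈ Ioc 0 D, if d * k ≤ D then w ^ (d * k) else 0)
      - ((K : ℝ) ^ 2 * (1 / d) - bern (d / (K : ℝ) ^ 2)) : ℝ) : ℂ)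
      - ∑ d ∈ Ioc 0 D, χ d * ((bern (d / (K : ℝ) ^ 2) : ℝ) : ℂ) := by
    rw [h1, mul_sum, ← sum_sub_distrib, ← sum_sub_distrib]
    refine sum_congr rfl fun d _ => ?_
    push_cast
    ring
  rw [h4, add_comm P]
  refine (norm_sub_le _ _).trans (add_le_add ?_ h3)
  calc _ ≤ ∑ d ∈ Ioc 0 D, w ^ D / (1 - w) := by
        refine (norm_sum_le _ _).trans (sum_le_sum fun d hd => ?_)
        rw [norm_mul, Complex.norm_real, Real.norm_eq_abs]
        exact (mul_le_of_le_one_left (abs_nonneg _) (norm_char_nat_le χ d)).trans (h2 d hd)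
    _ = _ := by simp; ring

end

section

open Filter Finset Topology MeasureTheory

/-- Partial summation for the tail of a Dirichlet series at a real point. -/
lemma lseries_sub_partial_le {q : ℕ} (χ : DirichletCharacter ℂ q) {P : ℝ}
    (hP : ∀ a b : ℕ, ‖∑ n ∈ Ico a b, χ (n : ZMod q)‖ ≤ P) (D : ℕ) {σ : ℝ} (hσ : 1 < σ) :
    ‖LSeries (fun n => χ n) σ - ∑ d ∈ Ioc 0 D, χ d * (((d : ℝ) ^ (-σ) : ℝ) : ℂ)‖ ≤ P / (D + 1) := by
  have hP0 : 0 ≤ P := (norm_nonneg _).trans (hP 0 0)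
  have hsum : LSeriesSummable (fun n => χ n) (σ : ℂ) :=
    LSeriesSummable_of_bounded_of_one_lt_re (m := 1) (fun n _ => norm_char_nat_le χ n) (by simpa)
  have hlim := hsum.hasSum.tendsto_sum_nat
  have hterm : ∀ n : ℕ, n ≠ 0 → LSeries.term (fun n => χ n) (σ : ℂ) n
      = χ n * (((n : ℝ) ^ (-σ) : ℝ) : ℂ) := by
    intro n hn
    rw [LSeries.term_of_ne_zero hn, Real.rpow_neg (by positivity), Complex.ofReal_inv,
      Complex.ofReal_cpow (by positivity), div_eq_mul_inv, Complex.ofReal_natCast]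
  have hfirst : ∑ d ∈ Ioc 0 D, χ d * (((d : ℝ) ^ (-σ) : ℝ) : ℂ)
      = ∑ n ∈ range (D + 1), LSeries.term (fun n => χ n) (σ : ℂ) n := by
    rw [sum_range_eq_add_Ico _ (by omega : 0 < D + 1), LSeries.term_zero, zero_add]
    have hI : Ioc 0 D = Ico 1 (D + 1) := by ext; simp; omega
    rw [hI]
    refine sum_congr rfl fun n hn => ?_
    rw [hterm n (by have := (mem_Ico.1 hn).1; omega)]
  rw [hfirst]
  refine le_of_tendsto ((hlim.sub_const _).norm) ?_
  filter_upwards [eventually_ge_atTop (D + 1)] with n hn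
  rw [← sum_Ico_eq_sub _ hn, sum_congr rfl
    (fun m hm => hterm m (by have := (mem_Ico.1 hm).1; omega))]
  refine (abel_antitone_le (fun d => χ d) (fun d => (d : ℝ) ^ (-σ)) (D + 1) n hn P
      (fun m _ _ => hP _ _) (fun m hm => ?_) (fun m hm => ?_)).trans ?_
  · have : (0 : ℝ) < m := by exact_mod_cast (by omega : 0 < m)
    exact Real.rpow_le_rpow_of_nonpos this (by push_cast; linarith) (by linarith)
  · positivity
  · rw [div_eq_mul_inv]
    gcongr
    rw [← Real.rpow_neg_one]
    push_cast
    exact Real.rpow_le_rpow_of_exponent_le (by linarith [Nat.cast_nonneg (α := ℝ) D]) (by linarith)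

/-- A lower bound for `L(σ, χ)` near `σ = 1`, for real `χ`, in terms of a bound `P` for the
character sums. -/
lemma real_lower_near {q : ℕ} {χ : DirichletCharacter ℂ q} (hχ : χ ^ 2 = 1) {P : ℝ} (hP1 : 1 ≤ P)
    (hP : ∀ a b : ℕ, ‖∑ n ∈ Ico a b, χ (n : ZMod q)‖ ≤ P) :
    ∀ᶠ σ : ℝ in 𝓝[>] 1, 1 / (200 * P) ≤ ‖LSeries (fun n => χ n) σ‖ := by
  set K := ⌈6 * P⌉₊ with hK
  have hK6 : 6 * P ≤ K := Nat.le_ceil _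
  have hK7 : (K : ℝ) ≤ 7 * P := by
    have := Nat.ceil_lt_add_one (by linarith : 0 ≤ 6 * P)
    linarith
  have hK1 : 1 ≤ K := by
    have : (1 : ℝ) ≤ K := by linarith
    exact_mod_cast this
  set w := Real.exp (-1 / (K : ℝ) ^ 2) with hw
  have hK0 : (0 : ℝ) < K := by exact_mod_cast hK1
  have hw1 : w < 1 := by
    rw [hw, Real.exp_lt_one_iff, neg_div]
    have : 0 < 1 / (K : ℝ) ^ 2 := by positivity
    linarith
  have hlim1 : Tendsto (fun D : ℕ => D * w ^ D / (1 - w)) atTop (𝓝 0) := by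
    have := (tendsto_self_mul_const_pow_of_lt_one (Real.exp_pos _).le hw1).div_const (1 - w)
    simpa using this
  have hlim2 : Tendsto (fun D : ℕ => P / ((D : ℝ) + 1)) atTop (𝓝 0) := by
    have := (tendsto_one_div_add_atTop_nhds_zero_nat (𝕜 := ℝ)).const_mul P
    simpa [div_eq_mul_inv] using this
  have hpos : 0 < 1 / (400 * P) := by positivity
  obtain ⟨D, hD1, hD2, hD3⟩ := ((hlim1.eventually (gt_mem_nhds (by linarith : 0 < P / 4))).and
    ((hlim2.eventually (gt_mem_nhds hpos)).and (eventually_ge_atTop (K ^ 2)))).exists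
  have h1 := smooth_sum_ge hχ hK1 hD3
  have h2 := smooth_sum_sub_le χ hP (K := K) (D := D) hK1
  rw [← hw] at h1 h2
  have h3 : 1 / (100 * P) < ‖∑ d ∈ Ioc 0 D, χ d * ((1 / (d : ℝ) : ℝ) : ℂ)‖ := by
    have h4 := norm_sub_norm_le (∑ n ∈ Ioc 0 D, χ.zetaMul n * ((w ^ n : ℝ) : ℂ))
      ((K : ℂ) ^ 2 * ∑ d ∈ Ioc 0 D, χ d * ((1 / (d : ℝ) : ℝ) : ℂ))
    rw [norm_mul, norm_pow, Complex.norm_natCast] at h4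
    set Z := ‖∑ d ∈ Ioc 0 D, χ d * ((1 / (d : ℝ) : ℝ) : ℂ)‖
    have h5 : 3 * P / 4 ≤ (K : ℝ) ^ 2 * Z := by linarith
    have h6 : (K : ℝ) ^ 2 * Z ≤ (7 * P) ^ 2 * Z := by
      gcongr
    rw [div_lt_iff₀ (by positivity)]
    by_contra! h7
    nlinarith
  have hcont : Tendsto (fun σ : ℝ => ‖∑ d ∈ Ioc 0 D, χ d * (((d : ℝ) ^ (-σ) : ℝ) : ℂ)‖) (𝓝 1)
      (𝓝 ‖∑ d ∈ Ioc 0 D, χ d * ((1 / (d : ℝ) : ℝ) : ℂ)‖) := by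
    refine (tendsto_finsetSum _ fun d hd => ?_).norm
    have hd0 : (d : ℝ) ≠ 0 := by
      have := (mem_Ioc.1 hd).1
      positivity
    refine Tendsto.const_mul _ ?_
    refine (Complex.continuous_ofReal.tendsto _).comp ?_
    have : Tendsto (fun σ : ℝ => (d : ℝ) ^ (-σ)) (𝓝 1) (𝓝 ((d : ℝ) ^ (-1 : ℝ))) :=
      ((Real.continuousAt_const_rpow hd0).comp continuous_neg.continuousAt).tendsto
    rwa [Real.rpow_neg_one, ← one_div] at this
  have hev := nhdsWithin_le_nhds (s := Set.Ioi 1) (hcont.eventually (lt_mem_nhds h3))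
  filter_upwards [hev, self_mem_nhdsWithin] with σ hσ hσ1
  have h8 := lseries_sub_partial_le χ hP D hσ1
  have h9 := norm_sub_norm_le (∑ d ∈ Ioc 0 D, χ d * (((d : ℝ) ^ (-σ) : ℝ) : ℂ))
    (LSeries (fun n => χ n) σ)
  rw [norm_sub_rev] at h9
  have h10 : 1 / (100 * P) = 4 * (1 / (400 * P)) := by field_simp; norm_num
  have h11 : 1 / (200 * P) = 2 * (1 / (400 * P)) := by field_simp; norm_num
  linarith

/-- `L(1, χ) ≫ q^{-1/2-ε}` for real non-principal `χ`, phrased on the right of `1`. -/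
lemma real_lower {ε : ℝ} (hε : 0 < ε) : ∃ c : ℝ, 0 < c ∧ ∀ q : ℕ, q ≠ 0 →
    ∀ χ : DirichletCharacter ℂ q, χ ≠ 1 → χ ^ 2 = 1 →
    ∀ᶠ σ : ℝ in 𝓝[>] 1, c * (q : ℝ) ^ (-(1 / 2 + ε)) ≤ ‖LSeries (fun n => χ n) σ‖ := by
  obtain ⟨C, hC1, hC⟩ := divisor_bound (half_pos hε)
  refine ⟨1 / (200 * (C * (1 + 2 / ε))), by positivity, fun q hq χ hχ1 hχ => ?_⟩
  have : NeZero q := ⟨hq⟩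
  have hq1 : (1 : ℝ) ≤ q := by exact_mod_cast Nat.one_le_iff_ne_zero.2 hq
  set P := C * (1 + 2 / ε) * (q : ℝ) ^ (1 / 2 + ε) with hPdef
  have hq2 : (1 : ℝ) ≤ (q : ℝ) ^ (1 / 2 + ε) := Real.one_le_rpow hq1 (by linarith)
  have hε2 : 0 < 2 / ε := by positivity
  have hP1 : 1 ≤ P := by
    rw [hPdef]
    refine one_le_mul_of_one_le_of_one_le (one_le_mul_of_one_le_of_one_le hC1 (by linarith)) hq2
  have hP : ∀ a b : ℕ, ‖∑ n ∈ Ico a b, χ (n : ZMod q)‖ ≤ P := by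
    intro a b
    refine (polya χ hχ1 a b).trans ?_
    have h1 : 1 + Real.log q ≤ (1 + 2 / ε) * (q : ℝ) ^ (ε / 2) := by
      have h2 := Real.log_le_rpow_div (by linarith : (0 : ℝ) ≤ q) (half_pos hε)
      have h3 : (1 : ℝ) ≤ (q : ℝ) ^ (ε / 2) := Real.one_le_rpow hq1 (by linarith)
      calc 1 + Real.log q ≤ (q : ℝ) ^ (ε / 2) + (q : ℝ) ^ (ε / 2) / (ε / 2) := by linarith
        _ = _ := by field_simp
    calc √q * #q.divisors * (1 + Real.log q)
        ≤ √q * (C * (q : ℝ) ^ (ε / 2)) * ((1 + 2 / ε) * (q : ℝ) ^ (ε / 2)) := by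
          gcongr
          exact hC q hq
      _ = C * (1 + 2 / ε) * ((q : ℝ) ^ (1 / 2 : ℝ) * (q : ℝ) ^ (ε / 2) * (q : ℝ) ^ (ε / 2)) := by
          rw [Real.sqrt_eq_rpow]; ring
      _ = P := by
          rw [hPdef, ← Real.rpow_add (by linarith), ← Real.rpow_add (by linarith)]
          ring_nf
  filter_upwards [real_lower_near hχ hP1 hP] with σ hσ
  refine le_trans (le_of_eq ?_) hσ
  rw [hPdef, Real.rpow_neg (by linarith)]
  field_simp

end

section

open Filter Finset Topology MeasureTheory

/-! ### Upper bounds for `1 / L(s, χ)` -/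

/-- A bound for the derivative of a Dirichlet series in a box gives a Lipschitz bound there. -/
lemma lseries_lip {a : ℕ → ℂ} (ha : ∀ n, ‖a n‖ ≤ 1) {T G : ℝ}
    (hG : ∀ s : ℂ, 1 < s.re → s.re ≤ 2 → |s.im| ≤ T → ‖LSeries (LSeries.logMul a) s‖ ≤ G)
    {s s' : ℂ} (hs : 1 < s.re) (hs2 : s.re ≤ 2) (hsT : |s.im| ≤ T) (hs' : 1 < s'.re)
    (hs2' : s'.re ≤ 2) (hsT' : |s'.im| ≤ T) :
    ‖LSeries a s - LSeries a s'‖ ≤ G * ‖s - s'‖ := by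
  have hconv : Convex ℝ (({z : ℂ | 1 < z.re} ∩ {z : ℂ | z.re ≤ 2}) ∩
      ({z : ℂ | -T ≤ z.im} ∩ {z : ℂ | z.im ≤ T})) :=
    ((convex_halfSpace_re_gt 1).inter (convex_halfSpace_re_le 2)).inter
      ((convex_halfSpace_im_ge (-T)).inter (convex_halfSpace_im_le T))
  refine Convex.norm_image_sub_le_of_norm_hasDerivWithin_le
    (fun z hz => (LSeries_hasDerivAt (abscissa_lt ha hz.1.1)).hasDerivWithinAt)
    (fun z hz => ?_) hconv ⟨⟨hs', hs2'⟩, abs_le.1 hsT'⟩ ⟨⟨hs, hs2⟩, abs_le.1 hsT⟩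
  rw [norm_neg]
  exact hG z hz.1.1 hz.1.2 (abs_le.2 hz.2)

/-- The `3-4-1` inequality in quantitative form: upper bounds for `L'(χ)` at height `t` and for
`L(χ²)` at height `2 t` give a lower bound for `L(χ)` at height `t`. -/
lemma lower_341 {q : ℕ} (χ : DirichletCharacter ℂ q) {C G m t : ℝ} (hC1 : 1 ≤ C)
    (hC : ∀ a : ℕ → ℂ, (∀ n, ‖a n‖ ≤ 1) → ∀ s : ℂ, 1 < s.re → s.re ≤ 2 →
      ‖LSeries a s‖ ≤ C / (s.re - 1))
    (hG1 : 1 ≤ G) (hm0 : 0 < m) (hm1 : m ≤ 1)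
    (h2 : ∀ s : ℂ, 1 < s.re → s.re ≤ 2 → s.im = 2 * t →
      ‖LSeries (fun n => (χ ^ 2) n) s‖ ≤ G / m)
    (h3 : ∀ s : ℂ, 1 < s.re → s.re ≤ 2 → s.im = t →
      ‖LSeries (LSeries.logMul (fun n => χ n)) s‖ ≤ G)
    {s : ℂ} (hs : 1 < s.re) (hs2 : s.re ≤ 2) (hst : s.im = t) :
    m / (16 * C ^ 3 * G ^ 4) ≤ ‖LSeries (fun n => χ n) s‖ := by
  set f : ℝ → ℝ := fun x => ‖LSeries (fun n => χ n) (1 + x + Complex.I * t)‖ with hf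
  set x0 : ℝ := m / (16 * C ^ 3 * G ^ 5) with hx0
  have hx0p : 0 < x0 := by positivity
  have hx01 : x0 ≤ 1 := by
    rw [hx0, div_le_one (by positivity)]
    have h4 : 1 ≤ C ^ 3 := one_le_pow₀ hC1
    have h5 : 1 ≤ G ^ 5 := one_le_pow₀ hG1
    nlinarith
  have hbig : ∀ x, x0 ≤ x → x ≤ 1 → 2 * (G * x0) ≤ f x := by
    intro x hx hx1
    have hxp : 0 < x := hx0p.trans_le hx
    have h4 := χ.norm_LSeries_product_ge_one hxp t
    rw [norm_mul, norm_mul, norm_pow, norm_pow] at h4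
    have h5 := hC (fun n => (1 : DirichletCharacter ℂ q) n) (norm_char_nat_le 1) (1 + x)
      (by simpa) (by simp; linarith)
    have h6 := h2 (1 + x + 2 * Complex.I * t) (by simpa) (by simp; linarith) (by simp)
    simp only [Complex.add_re, Complex.one_re, Complex.ofReal_re, add_sub_cancel_left] at h5
    have h7 : 1 ≤ (C / x) ^ 3 * f x ^ 4 * (G / m) := by
      refine le_trans h4 ?_
      gcongr
    have h8 : x ^ 3 * m ≤ C ^ 3 * f x ^ 4 * G := by
      have : (C / x) ^ 3 * f x ^ 4 * (G / m) = (C ^ 3 * f x ^ 4 * G) / (x ^ 3 * m) := by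
        field_simp
      rwa [this, one_le_div (by positivity)] at h7
    have h9 : (2 * (G * x0)) ^ 4 ≤ f x ^ 4 := by
      have h10 : (2 * (G * x0)) ^ 4 = x0 ^ 3 * m / (C ^ 3 * G) := by
        rw [show (2 * (G * x0)) ^ 4 = x0 ^ 3 * (16 * G ^ 4 * x0) by ring]
        nth_rw 2 [hx0]
        field_simp
      rw [h10, div_le_iff₀ (by positivity)]
      calc x0 ^ 3 * m ≤ x ^ 3 * m := by gcongr
        _ ≤ _ := h8
        _ = _ := by ring
    exact le_of_pow_le_pow_left₀ (by norm_num) (norm_nonneg _) h9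
  have hgoal : m / (16 * C ^ 3 * G ^ 4) = G * x0 := by
    rw [hx0]; field_simp
  have hsx : s = 1 + ((s.re - 1 : ℝ) : ℂ) + Complex.I * t := by
    apply Complex.ext <;> simp [hst]
  have hfs : ‖LSeries (fun n => χ n) s‖ = f (s.re - 1) := by
    simp only [hf]; rw [← hsx]
  rw [hgoal, hfs]
  rcases le_or_gt x0 (s.re - 1) with h | h
  · have := hbig _ h (by linarith)
    have : 0 < G * x0 := by positivity
    linarith
  · have h4 := hbig x0 le_rfl hx01
    -- move horizontally from `1 + x0 + it` to `s`
    have hw : Convex ℝ (({z : ℂ | 1 < z.re} ∩ {z : ℂ | z.re ≤ 2}) ∩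
      ({z : ℂ | t ≤ z.im} ∩ {z : ℂ | z.im ≤ t})) :=
      ((convex_halfSpace_re_gt 1).inter (convex_halfSpace_re_le 2)).inter
      ((convex_halfSpace_im_ge t).inter (convex_halfSpace_im_le t))
    have h5 : ‖LSeries (fun n => χ n) (1 + x0 + Complex.I * t) - LSeries (fun n => χ n) s‖
        ≤ G * ‖(1 + x0 + Complex.I * t) - s‖ := by
      refine Convex.norm_image_sub_le_of_norm_hasDerivWithin_le
        (fun z hz => (LSeries_hasDerivAt
          (abscissa_lt (norm_char_nat_le χ) hz.1.1)).hasDerivWithinAt)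
        (fun z hz => ?_) hw ⟨⟨hs, hs2⟩, hst.ge, hst.le⟩
        ⟨⟨?_, ?_⟩, ?_, ?_⟩
      · rw [norm_neg]
        exact h3 z hz.1.1 hz.1.2 (le_antisymm hz.2.2 hz.2.1)
      all_goals simp
      all_goals linarith
    have h6 : ‖(1 + x0 + Complex.I * t : ℂ) - s‖ ≤ x0 := by
      have : (1 + x0 + Complex.I * t : ℂ) - s = ((x0 - (s.re - 1) : ℝ) : ℂ) := by
        apply Complex.ext <;> simp [hst]; ring
      rw [this, Complex.norm_real, Real.norm_eq_abs, abs_of_pos (by linarith)]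
      linarith
    have h7 : G * ‖(1 + x0 + Complex.I * t : ℂ) - s‖ ≤ G * x0 := by gcongr
    have h8 := norm_sub_norm_le (LSeries (fun n => χ n) (1 + x0 + Complex.I * t))
      (LSeries (fun n => χ n) s)
    rw [← hfs]
    simp only [hf] at h4
    linarith

/-- The coefficients `χ(n) μ(n)` of `1 / L(s, χ)`. -/
noncomputable def muChar {q : ℕ} (χ : DirichletCharacter ℂ q) (n : ℕ) : ℂ :=
  χ n * (ArithmeticFunction.moebius n : ℂ)

lemma norm_muChar_le {q : ℕ} (χ : DirichletCharacter ℂ q) (n : ℕ) : ‖muChar χ n‖ ≤ 1 := by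
  rw [muChar, norm_mul]
  refine mul_le_one₀ (norm_char_nat_le χ n) (norm_nonneg _) ?_
  rw [Complex.norm_intCast]
  exact_mod_cast ArithmeticFunction.abs_moebius_le_one

lemma mul_muChar {q : ℕ} (χ : DirichletCharacter ℂ q) {s : ℂ} (hs : 1 < s.re) :
    LSeries (fun n => χ n) s * LSeries (muChar χ) s = 1 :=
  DirichletCharacter.LSeries.mul_mu_eq_one χ hs

lemma norm_muChar_lseries_le {q : ℕ} (χ : DirichletCharacter ℂ q) {s : ℂ} (hs : 1 < s.re) {c : ℝ}
    (hc : 0 < c) (h : c ≤ ‖LSeries (fun n => χ n) s‖) : ‖LSeries (muChar χ) s‖ ≤ 1 / c := by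
  have h1 := congrArg norm (mul_muChar χ hs)
  rw [norm_mul, norm_one] at h1
  rw [le_div_iff₀ hc]
  calc ‖LSeries (muChar χ) s‖ * c ≤ ‖LSeries (muChar χ) s‖ * ‖LSeries (fun n => χ n) s‖ := by gcongr
    _ = 1 := by rw [mul_comm, h1]

/-- `1/L(s,χ) ≪ (q(2+|t|))^ε` for complex `χ`. -/
lemma nonreal_inv {ε : ℝ} (hε : 0 < ε) : ∃ C : ℝ, 1 ≤ C ∧ ∀ q : ℕ, q ≠ 0 →
    ∀ χ : DirichletCharacter ℂ q, χ ^ 2 ≠ 1 → ∀ s : ℂ, 1 < s.re → s.re ≤ 2 →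
    ‖LSeries (muChar χ) s‖ ≤ C * (q * (2 + |s.im|)) ^ ε := by
  obtain ⟨C, hC1, hC⟩ := lseries_le_inv
  obtain ⟨D0, hD01, hD0⟩ := char_upper_bound 0 (by positivity : 0 < ε / 4)
  obtain ⟨D1, hD11, hD1⟩ := char_upper_bound 1 (by positivity : 0 < ε / 4)
  set B := (D0 * 2 ^ (ε / 4) + D1) with hB
  have h2p : (0 : ℝ) < 2 ^ (ε / 4) := by positivity
  have hB1 : 1 ≤ B := by nlinarith
  refine ⟨16 * C ^ 3 * B ^ 4, ?_, fun q hq χ hχ s hs hs2 => ?_⟩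
  · have h4 : 1 ≤ C ^ 3 := one_le_pow₀ hC1
    have h5 : 1 ≤ B ^ 4 := one_le_pow₀ hB1
    nlinarith
  have hχ1 : χ ≠ 1 := by
    rintro rfl
    exact hχ (one_pow 2)
  have hq1 : (1 : ℝ) ≤ q := by exact_mod_cast Nat.one_le_iff_ne_zero.2 hq
  set X := q * (2 + |s.im|) with hX
  have hX1 : 1 ≤ X := by
    rw [hX]
    nlinarith [abs_nonneg s.im]
  have hXe : 1 ≤ X ^ (ε / 4) := Real.one_le_rpow hX1 (by positivity)
  have h := lower_341 χ hC1 hC (G := B * X ^ (ε / 4)) (m := 1) (t := s.im)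
    (one_le_mul_of_one_le_of_one_le hB1 hXe) one_pos le_rfl (fun z hz hz2 hzt => ?_)
    (fun z hz hz2 hzt => ?_) hs hs2 rfl
  · refine (norm_muChar_lseries_le χ hs (by positivity) h).trans (le_of_eq ?_)
    rw [mul_pow, ← Real.rpow_mul_natCast (by linarith)]
    rw [show ε / 4 * (4 : ℕ) = ε by push_cast; ring, one_div_div]
    ring
  · have h1 := hD0 q hq (χ ^ 2) hχ z hz hz2
    rw [div_one]
    refine h1.trans ?_
    calc D0 * (q * (2 + |z.im|)) ^ (ε / 4) ≤ D0 * (2 * X) ^ (ε / 4) := by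
          have : q * (2 + |z.im|) ≤ 2 * X := by
            rw [hX, hzt, abs_mul, abs_two]
            nlinarith [abs_nonneg s.im]
          gcongr
      _ = D0 * 2 ^ (ε / 4) * X ^ (ε / 4) := by rw [Real.mul_rpow (by norm_num) (by linarith)]; ring
      _ ≤ _ := by gcongr; linarith
  · have h1 := hD1 q hq χ hχ1 z hz hz2
    rw [Function.iterate_one, hzt] at h1
    refine h1.trans ?_
    gcongr
    nlinarith

end

section

open Filter Finset Topology MeasureTheory

/-- `1/L(s,χ) ≪ q^{1/2} (q(2+|t|))^ε` for real non-principal `χ`. Away from the real point `1` this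
is the `3-4-1` inequality; close to it, it comes from the lower bound for `L(1, χ)`. -/
lemma real_inv {ε : ℝ} (hε : 0 < ε) : ∃ C : ℝ, 1 ≤ C ∧ ∀ q : ℕ, q ≠ 0 →
    ∀ χ : DirichletCharacter ℂ q, χ ≠ 1 → χ ^ 2 = 1 → ∀ s : ℂ, 1 < s.re → s.re ≤ 2 →
    ‖LSeries (muChar χ) s‖ ≤ C * (q : ℝ) ^ (1 / 2 : ℝ) * (q * (2 + |s.im|)) ^ ε := by
  obtain ⟨C, hC1, hC⟩ := lseries_le_inv
  have hε6 : 0 < ε / 6 := by positivity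
  obtain ⟨Dp, hDp1, hDp⟩ := principal_upper_bound hε6
  obtain ⟨D1, hD11, hD1⟩ := char_upper_bound 1 hε6
  obtain ⟨c0, hc00, hc0⟩ := real_lower hε6
  set c := min c0 1 with hc
  have hcp : 0 < c := lt_min hc00 one_pos
  have hc1 : c ≤ 1 := min_le_right _ _
  set B := (2 * Dp * 2 ^ (ε / 6) + D1) with hB
  have h2p : (0 : ℝ) < 2 ^ (ε / 6) := by positivity
  have hB1 : 1 ≤ B := by nlinarith
  have hC3 : 1 ≤ C ^ 3 := one_le_pow₀ hC1
  refine ⟨128 * C ^ 3 * B ^ 5 / c, ?_, fun q hq χ hχ1 hχ s hs hs2 => ?_⟩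
  · rw [one_le_div hcp]
    have h5 : 1 ≤ B ^ 5 := one_le_pow₀ hB1
    nlinarith
  have hq1 : (1 : ℝ) ≤ q := by exact_mod_cast Nat.one_le_iff_ne_zero.2 hq
  set X := q * (2 + |s.im|) with hX
  have hX1 : 1 ≤ X := by
    rw [hX]
    nlinarith [abs_nonneg s.im]
  have hqX : q ≤ X := by
    rw [hX]
    nlinarith [abs_nonneg s.im]
  have hXe : 1 ≤ X ^ (ε / 6) := Real.one_le_rpow hX1 (by positivity)
  set G := B * X ^ (ε / 6) with hG
  have hG1 : 1 ≤ G := one_le_mul_of_one_le_of_one_le hB1 hXe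
  have hG4 : 1 ≤ G ^ 4 := one_le_pow₀ hG1
  set c' := c * (q : ℝ) ^ (-(1 / 2 + ε / 6)) with hc'
  have hqp : (0 : ℝ) < (q : ℝ) ^ (-(1 / 2 + ε / 6)) := by positivity
  have hc'p : 0 < c' := by positivity
  have hc'1 : c' ≤ 1 := by
    have : (q : ℝ) ^ (-(1 / 2 + ε / 6)) ≤ 1 := Real.rpow_le_one_of_one_le_of_nonpos hq1 (by linarith)
    exact mul_le_one₀ hc1 hqp.le this
  have hderiv : ∀ z : ℂ, 1 < z.re → z.re ≤ 2 → |z.im| ≤ |s.im| →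
      ‖LSeries (LSeries.logMul (fun n => χ n)) z‖ ≤ G := by
    intro z hz hz2 hzt
    have h1 := hD1 q hq χ hχ1 z hz hz2
    rw [Function.iterate_one] at h1
    refine h1.trans ?_
    calc D1 * (q * (2 + |z.im|)) ^ (ε / 6) ≤ D1 * X ^ (ε / 6) := by rw [hX]; gcongr
      _ ≤ G := by
        rw [hG]
        gcongr
        nlinarith
  suffices hmain : ‖LSeries (muChar χ) s‖ ≤ 128 * C ^ 3 * G ^ 5 / c' by
    refine hmain.trans ?_
    have hGX : G ^ 5 = B ^ 5 * X ^ (5 * (ε / 6)) := by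
      rw [hG, mul_pow, ← Real.rpow_mul_natCast (by linarith)]
      push_cast
      ring_nf
    calc 128 * C ^ 3 * G ^ 5 / c'
        = 128 * C ^ 3 * B ^ 5 / c * ((q : ℝ) ^ (1 / 2 : ℝ) * (q : ℝ) ^ (ε / 6)) * X ^ (5 * (ε / 6)) := by
          rw [hGX, hc', Real.rpow_neg (by linarith), ← Real.rpow_add (by linarith)]
          field_simp
      _ ≤ 128 * C ^ 3 * B ^ 5 / c * ((q : ℝ) ^ (1 / 2 : ℝ) * X ^ (ε / 6)) * X ^ (5 * (ε / 6)) := by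
          gcongr
      _ = 128 * C ^ 3 * B ^ 5 / c * (q : ℝ) ^ (1 / 2 : ℝ) * (X ^ (ε / 6) * X ^ (5 * (ε / 6))) := by ring
      _ = _ := by
          rw [← Real.rpow_add (by linarith)]
          ring_nf
  set τ := c' / (8 * G) with hτ
  have hτp : 0 < τ := by positivity
  have hτ1 : τ ≤ 1 := by
    rw [hτ, div_le_one (by positivity)]
    linarith
  rcases le_or_gt τ |s.im| with hcase | hcase
  · -- far from the real axis
    set m := min 1 |s.im| with hm
    have hmτ : τ ≤ m := le_min hτ1 hcase
    have hm0 : 0 < m := hτp.trans_le hmτ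
    have h := lower_341 χ hC1 hC (G := G) (m := m) (t := s.im) hG1 hm0 (min_le_left _ _)
      (fun z hz hz2 hzt => ?_) (fun z hz hz2 hzt => hderiv z hz hz2 (by rw [hzt])) hs hs2 rfl
    · have h5 : c' / (128 * C ^ 3 * G ^ 5) ≤ ‖LSeries (fun n => χ n) s‖ := by
        refine le_trans ?_ h
        calc c' / (128 * C ^ 3 * G ^ 5) = τ / (16 * C ^ 3 * G ^ 4) := by
              rw [hτ]; field_simp; norm_num
          _ ≤ _ := by gcongr
      refine (norm_muChar_lseries_le χ hs (by positivity) h5).trans (le_of_eq ?_)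
      rw [one_div_div]
    · have h1 := hDp q hq z hz hz2
      rw [hχ]
      refine h1.trans ?_
      have hz1 : m ≤ ‖z - 1‖ := by
        have h6 := Complex.abs_im_le_norm (z - 1)
        rw [Complex.sub_im, Complex.one_im, sub_zero, hzt, abs_mul, abs_two] at h6
        have : m ≤ |s.im| := min_le_right _ _
        linarith [abs_nonneg s.im]
      have hz2 : 1 + 1 / ‖z - 1‖ ≤ 2 / m := by
        have h7 : 1 / ‖z - 1‖ ≤ 1 / m := by gcongr
        have h8 : 1 ≤ 1 / m := (one_le_div hm0).2 (min_le_left _ _)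
        calc _ ≤ 1 / m + 1 / m := by linarith
          _ = _ := by ring
      have hz3 : q * (2 + |z.im|) ≤ 2 * X := by
        rw [hX, hzt, abs_mul, abs_two]
        nlinarith [abs_nonneg s.im]
      calc Dp * (1 + 1 / ‖z - 1‖) * (q * (2 + |z.im|)) ^ (ε / 6)
          ≤ Dp * (2 / m) * (2 * X) ^ (ε / 6) := by gcongr
        _ = (2 * Dp * 2 ^ (ε / 6)) * X ^ (ε / 6) / m := by
            rw [Real.mul_rpow (by norm_num) (by linarith)]; ring
        _ ≤ _ := by rw [hG]; gcongr; linarith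
  · rcases le_or_gt (s.re - 1) τ with hx | hx
    · -- close to the point `1`
      have hev : ∀ᶠ σ : ℝ in 𝓝[>] 1, σ < 1 + τ :=
        nhdsWithin_le_nhds (gt_mem_nhds (by linarith))
      obtain ⟨σ, ⟨hσ1, hσ2⟩, hσ3⟩ := (((hc0 q hq χ hχ1 hχ).and hev).and self_mem_nhdsWithin).exists
      have hσ3 : 1 < σ := hσ3
      have h1 : c' ≤ ‖LSeries (fun n => χ n) σ‖ := by
        refine le_trans ?_ hσ1
        rw [hc']
        gcongr
        exact min_le_left _ _
      have h2 := lseries_lip (norm_char_nat_le χ) hderiv (s := σ) (s' := s) (by simpa)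
        (by simp; linarith) (by simp) hs hs2 le_rfl
      have h3 : ‖(σ : ℂ) - s‖ ≤ 2 * τ := by
        refine (Complex.norm_le_abs_re_add_abs_im _).trans ?_
        have h4 : |σ - s.re| ≤ τ := abs_le.2 ⟨by linarith, by linarith⟩
        simp only [Complex.sub_re, Complex.ofReal_re, Complex.sub_im, Complex.ofReal_im, zero_sub,
          abs_neg]
        linarith
      have h4 : G * ‖(σ : ℂ) - s‖ ≤ c' / 4 := by
        calc G * ‖(σ : ℂ) - s‖ ≤ G * (2 * τ) := by gcongr
          _ = c' / 4 := by rw [hτ]; field_simp; norm_num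
      have h5 := norm_sub_norm_le (LSeries (fun n => χ n) σ) (LSeries (fun n => χ n) s)
      have h6 : c' / 2 ≤ ‖LSeries (fun n => χ n) s‖ := by linarith
      refine (norm_muChar_lseries_le χ hs (by positivity) h6).trans ?_
      rw [one_div_div]
      gcongr
      have h7 : 1 ≤ G ^ 5 := one_le_pow₀ hG1
      have h8 : 1 ≤ C ^ 3 * G ^ 5 := one_le_mul_of_one_le_of_one_le hC3 h7
      linarith
    · refine (hC (muChar χ) (norm_muChar_le χ) s hs hs2).trans ?_
      calc C / (s.re - 1) ≤ C / τ := by gcongr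
        _ = 8 * C * G / c' := by rw [hτ]; field_simp
        _ ≤ _ := by
            gcongr ?_ / _
            have h7 : G ≤ G ^ 5 := le_self_pow₀ hG1 (by norm_num)
            have h8 : C ≤ C ^ 3 := le_self_pow₀ hC1 (by norm_num)
            calc 8 * C * G ≤ 8 * C ^ 3 * G ^ 5 := by gcongr
              _ ≤ _ := by gcongr; norm_num

/-- `1/ζ(s) ≪ (2+|t|)^ε` for `|t| ≥ 1`. -/
lemma zeta_inv {ε : ℝ} (hε : 0 < ε) : ∃ C : ℝ, 1 ≤ C ∧ ∀ s : ℂ, 1 < s.re → s.re ≤ 2 → 1 ≤ |s.im| →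
    ‖LSeries (muChar (1 : DirichletCharacter ℂ 1)) s‖ ≤ C * (2 + |s.im|) ^ ε := by
  obtain ⟨C, hC1, hC⟩ := lseries_le_inv
  have hε4 : 0 < ε / 4 := by positivity
  obtain ⟨Dp, hDp1, hDp⟩ := principal_upper_bound hε4
  obtain ⟨D1, hD11, hD1⟩ := zeta_upper_bound 1 hε4
  set B := (2 * Dp * 2 ^ (ε / 4) + 4 * D1) with hB
  have h2p : (0 : ℝ) < 2 ^ (ε / 4) := by positivity
  have hB1 : 1 ≤ B := by nlinarith
  refine ⟨16 * C ^ 3 * B ^ 4, ?_, fun s hs hs2 hst => ?_⟩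
  · have h4 : 1 ≤ C ^ 3 := one_le_pow₀ hC1
    have h5 : 1 ≤ B ^ 4 := one_le_pow₀ hB1
    nlinarith
  set X := (2 + |s.im|) with hX
  have hX1 : 1 ≤ X := by
    rw [hX]
    linarith
  have hXe : 1 ≤ X ^ (ε / 4) := Real.one_le_rpow hX1 (by positivity)
  have h := lower_341 (1 : DirichletCharacter ℂ 1) hC1 hC (G := B * X ^ (ε / 4)) (m := 1) (t := s.im)
    (one_le_mul_of_one_le_of_one_le hB1 hXe) one_pos le_rfl (fun z hz hz2 hzt => ?_)
    (fun z hz hz2 hzt => ?_) hs hs2 rfl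
  · refine (norm_muChar_lseries_le _ hs (by positivity) h).trans (le_of_eq ?_)
    rw [mul_pow, ← Real.rpow_mul_natCast (by linarith)]
    rw [show ε / 4 * (4 : ℕ) = ε by push_cast; ring, one_div_div]
    ring
  · have h1 := hDp 1 one_ne_zero z hz hz2
    rw [div_one, one_pow]
    refine h1.trans ?_
    have hz1 : 1 ≤ ‖z - 1‖ := by
      have h6 := Complex.abs_im_le_norm (z - 1)
      rw [Complex.sub_im, Complex.one_im, sub_zero, hzt, abs_mul, abs_two] at h6
      linarith [abs_nonneg s.im]
    have hz2 : 1 + 1 / ‖z - 1‖ ≤ 2 := by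
      have h7 : 1 / ‖z - 1‖ ≤ 1 := (div_le_one (by linarith)).2 hz1
      linarith
    have hz3 : ((1 : ℕ) : ℝ) * (2 + |z.im|) ≤ 2 * X := by
      rw [hX, hzt, abs_mul, abs_two]
      push_cast
      nlinarith [abs_nonneg s.im]
    calc Dp * (1 + 1 / ‖z - 1‖) * ((1 : ℕ) * (2 + |z.im|)) ^ (ε / 4)
        ≤ Dp * 2 * (2 * X) ^ (ε / 4) := by gcongr
      _ = (2 * Dp * 2 ^ (ε / 4)) * X ^ (ε / 4) := by
          rw [Real.mul_rpow (by norm_num) (by linarith)]; ring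
      _ ≤ _ := by gcongr; linarith
  · have h1 := hD1 z hz hz2
    have h0 : (fun n : ℕ => (1 : DirichletCharacter ℂ 1) n) = 1 := by
      funext n
      rw [Subsingleton.elim (n : ZMod 1) 1]
      simp
    rw [Function.iterate_one, hzt] at h1
    rw [h0]
    refine h1.trans ?_
    have hz1 : 1 ≤ ‖z - 1‖ := by
      have h6 := Complex.abs_im_le_norm (z - 1)
      rw [Complex.sub_im, Complex.one_im, sub_zero, hzt] at h6
      linarith
    have hz2 : 1 + 1 / ‖z - 1‖ ≤ 2 := by
      have h7 : 1 / ‖z - 1‖ ≤ 1 := (div_le_one (by linarith)).2 hz1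
      linarith
    calc D1 * (1 + 1 / ‖z - 1‖) ^ (1 + 1) * X ^ (ε / 4) ≤ D1 * 2 ^ (1 + 1) * X ^ (ε / 4) := by gcongr
      _ ≤ _ := by
          gcongr
          calc D1 * 2 ^ (1 + 1) = 4 * D1 := by ring
            _ ≤ B := le_add_of_nonneg_left (by positivity)

end

section

open Filter Finset Topology MeasureTheory

/-! ### Summatory functions of `μχ` -/

lemma analyticAt_lseries {a : ℕ → ℂ} (ha : ∀ n, ‖a n‖ ≤ 1) {s : ℂ} (hs : 1 < s.re) :
    AnalyticAt ℂ (LSeries a) s :=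
  LSeries_analyticOnNhd a s (abscissa_lt ha hs)

/-- Leibniz' rule applied to `L(s,χ) · 1/L(s,χ) = 1`: the derivatives of `1/L` are controlled by
`1/L` and by the derivatives of `L`. -/
lemma inv_deriv_le {D : ℕ → ℝ} (hD : ∀ j, 1 ≤ D j) (k : ℕ) : ∃ C : ℝ, 1 ≤ C ∧ ∀ j ≤ k, ∀ q : ℕ,
    ∀ χ : DirichletCharacter ℂ q, ∀ s : ℂ, 1 < s.re → ∀ V Y : ℝ, 1 ≤ V → 1 ≤ Y →
    ‖LSeries (muChar χ) s‖ ≤ V →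
    (∀ i, ‖iteratedDeriv i (LSeries (fun n => χ n)) s‖ ≤ D i * Y) →
    ‖iteratedDeriv j (LSeries (muChar χ)) s‖ ≤ C * (V ^ (j + 1) * Y ^ j) := by
  induction k with
  | zero =>
    refine ⟨1, le_rfl, fun j hj q χ s hs V Y hV hY hVs _ => ?_⟩
    obtain rfl : j = 0 := by omega
    simpa using hVs
  | succ k ih =>
    obtain ⟨C, hC1, hC⟩ := ih
    have hsum : 0 ≤ ∑ i ∈ range (k + 1), ((k + 1).choose (i + 1) : ℝ) * (D (i + 1) * C) := by
      refine sum_nonneg fun i _ => ?_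
      have := hD (i + 1)
      positivity
    refine ⟨C + ∑ i ∈ range (k + 1), ((k + 1).choose (i + 1) : ℝ) * (D (i + 1) * C), by linarith,
      fun j hj q χ s hs V Y hV hY hVs hf => ?_⟩
    have hVY : 0 ≤ V ^ (j + 1) * Y ^ j := by positivity
    rcases Nat.lt_or_ge j (k + 1) with hlt | hge
    · refine (hC j (by omega) q χ s hs V Y hV hY hVs hf).trans ?_
      gcongr
      linarith
    · obtain rfl : j = k + 1 := by omega
      have hfA := (analyticAt_lseries (norm_char_nat_le χ) hs).contDiffAt (n := ((k + 1 : ℕ) : WithTop ℕ∞))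
      have hgA := (analyticAt_lseries (norm_muChar_le χ) hs).contDiffAt (n := ((k + 1 : ℕ) : WithTop ℕ∞))
      have hL := iteratedDeriv_mul hfA hgA
      have hone : iteratedDeriv (k + 1) (LSeries (fun n => χ n) * LSeries (muChar χ)) s = 0 := by
        have hev : (LSeries (fun n => χ n) * LSeries (muChar χ)) =ᶠ[𝓝 s] fun _ => (1 : ℂ) := by
          filter_upwards [(isOpen_lt continuous_const Complex.continuous_re).mem_nhds hs] with z hz
          exact mul_muChar χ hz
        rw [hev.iteratedDeriv_eq]
        simp [iteratedDeriv_const]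
      rw [hone, sum_range_succ'] at hL
      simp only [Nat.choose_zero_right, Nat.cast_one, one_mul, iteratedDeriv_zero, Nat.sub_zero] at hL
      set g := LSeries (muChar χ)
      set f := LSeries (fun n => χ n)
      have hfg : g s * f s = 1 := by rw [mul_comm]; exact mul_muChar χ hs
      have hmain : iteratedDeriv (k + 1) g s = - (g s * ∑ i ∈ range (k + 1),
          ((k + 1).choose (i + 1) : ℂ) * iteratedDeriv (i + 1) f s
            * iteratedDeriv (k + 1 - (i + 1)) g s) := by
        linear_combination g s * hL.symm - iteratedDeriv (k + 1) g s * hfg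
      rw [hmain, norm_neg, norm_mul]
      calc ‖g s‖ * _ ≤ V * ∑ i ∈ range (k + 1), ((k + 1).choose (i + 1) : ℝ) * (D (i + 1) * Y)
            * (C * (V ^ (k + 1) * Y ^ k)) := by
            gcongr
            refine (norm_sum_le _ _).trans (sum_le_sum fun i hi => ?_)
            rw [norm_mul, norm_mul, Complex.norm_natCast]
            have hi' := mem_range.1 hi
            have h1 := hC (k + 1 - (i + 1)) (by omega) q χ s hs V Y hV hY hVs hf
            have h2 : C * (V ^ (k + 1 - (i + 1) + 1) * Y ^ (k + 1 - (i + 1)))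
                ≤ C * (V ^ (k + 1) * Y ^ k) := by
              gcongr
              · omega
              · omega
            have := hD (i + 1)
            gcongr
            · exact hf (i + 1)
            · exact h1.trans h2
        _ = (∑ i ∈ range (k + 1), ((k + 1).choose (i + 1) : ℝ) * (D (i + 1) * C))
            * (V ^ (k + 1 + 1) * Y ^ (k + 1)) := by
            rw [mul_sum, sum_mul]
            refine sum_congr rfl fun i _ => ?_
            ring
        _ ≤ _ := by
            gcongr
            linarith

/-- The derivatives of `L(s, χ)` in terms of `char_upper_bound`, uniformly over the order. -/
lemma exists_deriv_bound {ε : ℝ} (hε : 0 < ε) : ∃ D : ℕ → ℝ, (∀ j, 1 ≤ D j) ∧ ∀ j, ∀ q : ℕ, q ≠ 0 →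
    ∀ χ : DirichletCharacter ℂ q, χ ≠ 1 → ∀ s : ℂ, 1 < s.re → s.re ≤ 2 →
    ‖iteratedDeriv j (LSeries (fun n => χ n)) s‖ ≤ D j * (q * (2 + |s.im|)) ^ ε := by
  choose D hD1 hD using fun j => char_upper_bound j hε
  refine ⟨D, hD1, fun j q hq χ hχ s hs hs2 => ?_⟩
  rw [LSeries_iteratedDeriv j (abscissa_lt (norm_char_nat_le χ) hs), norm_mul, norm_pow, norm_neg,
    norm_one, one_pow, one_mul]
  exact hD j q hq χ hχ s hs hs2

/-- From a polynomial bound for the `k`-th derivative of `1/L` to the summatory function of `μχ`. -/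
lemma sum_muChar_le (k A : ℕ) {C : ℝ} (hC1 : 1 ≤ C) : ∃ C' : ℝ, 0 < C' ∧ ∀ q : ℕ,
    ∀ χ : DirichletCharacter ℂ q, ∀ W : ℝ, 1 ≤ W →
    (∀ s : ℂ, 1 < s.re → s.re ≤ 2 →
      ‖iteratedDeriv k (LSeries (muChar χ)) s‖ ≤ C * W * (2 + |s.im|) ^ (1 / 4 : ℝ)) →
    ∀ N : ℕ, 9 ≤ N → W * Real.log N ^ (2 * A) ≤ Real.log N ^ k →
    ∀ x ≤ N, ‖∑ n ∈ Icc 1 x, muChar χ n‖ ≤ C' * (N / Real.log N ^ A) := by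
  obtain ⟨C', hC'0, hC'⟩ := tauber k
  refine ⟨C' * √C, by positivity, fun q χ W hW h N hN hWN x hx => ?_⟩
  have h1 := hC' (muChar χ) (norm_muChar_le χ) (C * W) (one_le_mul_of_one_le_of_one_le hC1 hW)
    (by simpa using h) N hN x hx
  refine h1.trans ?_
  have hL : 0 < Real.log N := Real.log_pos (by exact_mod_cast (by omega : 1 < N))
  have h2 : √W / √(Real.log N ^ k) ≤ 1 / Real.log N ^ A := by
    rw [div_le_div_iff₀ (by positivity) (by positivity), one_mul]
    calc √W * Real.log N ^ A = √(W * Real.log N ^ (2 * A)) := by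
          rw [Real.sqrt_mul (by linarith), mul_comm 2 A, pow_mul, Real.sqrt_sq (by positivity)]
      _ ≤ _ := Real.sqrt_le_sqrt hWN
  calc C' * (N * √(C * W) / √(Real.log N ^ k)) = C' * √C * (N * (√W / √(Real.log N ^ k))) := by
        rw [Real.sqrt_mul (by linarith)]; ring
    _ ≤ C' * √C * (N * (1 / Real.log N ^ A)) := by gcongr
    _ = _ := by ring

lemma one_le_log_of_nine_le {N : ℕ} (hN : 9 ≤ N) : 1 ≤ Real.log N := by
  have h : (9 : ℝ) ≤ N := by exact_mod_cast hN
  rw [Real.le_log_iff_exp_le (by linarith)]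
  linarith [Real.exp_one_lt_d9]

/-- Siegel–Walfisz for `μχ`, `χ` complex. -/
lemma nonreal_sum (A : ℕ) : ∃ C : ℝ, 0 < C ∧ ∀ N : ℕ, 9 ≤ N → ∀ q : ℕ, q ≠ 0 →
    (q : ℝ) ≤ Real.log N ^ 8 → ∀ χ : DirichletCharacter ℂ q, χ ^ 2 ≠ 1 →
    ∀ x ≤ N, ‖∑ n ∈ Icc 1 x, muChar χ n‖ ≤ C * (N / Real.log N ^ A) := by
  set k := 2 * A + 8 with hk
  set ε : ℝ := 1 / (4 * (2 * k + 1)) with hε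
  have hε0 : 0 < ε := by positivity
  obtain ⟨D, hD1, hD⟩ := exists_deriv_bound hε0
  obtain ⟨C0, hC01, hC0⟩ := nonreal_inv hε0
  obtain ⟨C1, hC11, hC1⟩ := inv_deriv_le hD1 k
  obtain ⟨C2, hC20, hC2⟩ := sum_muChar_le k A (C := C1 * C0 ^ (k + 1))
    (one_le_mul_of_one_le_of_one_le hC11 (one_le_pow₀ hC01))
  refine ⟨C2, hC20, fun N hN q hq hqN χ hχ x hx => ?_⟩
  have hχ1 : χ ≠ 1 := by
    rintro rfl
    exact hχ (one_pow 2)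
  have hq1 : (1 : ℝ) ≤ q := by exact_mod_cast Nat.one_le_iff_ne_zero.2 hq
  have hL := one_le_log_of_nine_le hN
  refine hC2 q χ ((q : ℝ) ^ (1 / 4 : ℝ)) (Real.one_le_rpow hq1 (by norm_num)) (fun s hs hs2 => ?_)
    N hN ?_ x hx
  · set X := (q : ℝ) * (2 + |s.im|) with hX
    have hX1 : 1 ≤ X := by
      rw [hX]
      nlinarith [abs_nonneg s.im]
    have hXe : 1 ≤ X ^ ε := Real.one_le_rpow hX1 hε0.le
    refine (hC1 k le_rfl q χ s hs (C0 * X ^ ε) (X ^ ε) (one_le_mul_of_one_le_of_one_le hC01 hXe) hXe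
      (hC0 q hq χ hχ s hs hs2) (fun i => hD i q hq χ hχ1 s hs hs2)).trans (le_of_eq ?_)
    have : X ^ (1 / 4 : ℝ) = (X ^ ε) ^ (2 * k + 1) := by
      rw [← Real.rpow_mul_natCast (by linarith), hε]
      congr 1
      push_cast
      field_simp
    rw [mul_assoc _ ((q : ℝ) ^ (1 / 4 : ℝ)), ← Real.mul_rpow (by linarith) (by positivity), ← hX, this]
    ring
  · calc (q : ℝ) ^ (1 / 4 : ℝ) * Real.log N ^ (2 * A) ≤ Real.log N ^ 8 * Real.log N ^ (2 * A) := by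
          gcongr
          refine le_trans ?_ hqN
          exact Real.rpow_le_self_of_one_le hq1 (by norm_num)
      _ = _ := by rw [← pow_add, hk, add_comm]

/-- Siegel–Walfisz for `μχ`, `χ` real non-principal, in the range `q ≤ (log N)^{6/5}` where
the effective lower bound for `L(1, χ)` suffices. -/
lemma real_sum {A : ℕ} (hA : 1 ≤ A) : ∃ C : ℝ, 0 < C ∧ ∀ N : ℕ, 9 ≤ N → ∀ q : ℕ, q ≠ 0 →
    (q : ℝ) ^ 5 ≤ Real.log N ^ 6 → ∀ χ : DirichletCharacter ℂ q, χ ≠ 1 → χ ^ 2 = 1 →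
    ∀ x ≤ N, ‖∑ n ∈ Icc 1 x, muChar χ n‖ ≤ C * (N / Real.log N ^ A) := by
  obtain ⟨k, hk⟩ : ∃ k, k + 2 = 10 * A := ⟨10 * A - 2, by omega⟩
  set ε : ℝ := 1 / (4 * (2 * k + 1)) with hε
  have hε0 : 0 < ε := by positivity
  obtain ⟨D, hD1, hD⟩ := exists_deriv_bound hε0
  obtain ⟨C0, hC01, hC0⟩ := real_inv hε0
  obtain ⟨C1, hC11, hC1⟩ := inv_deriv_le hD1 k
  obtain ⟨C2, hC20, hC2⟩ := sum_muChar_le k A (C := C1 * C0 ^ (k + 1))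
    (one_le_mul_of_one_le_of_one_le hC11 (one_le_pow₀ hC01))
  refine ⟨C2, hC20, fun N hN q hq hqN χ hχ1 hχ x hx => ?_⟩
  have hq1 : (1 : ℝ) ≤ q := by exact_mod_cast Nat.one_le_iff_ne_zero.2 hq
  have hL := one_le_log_of_nine_le hN
  have hqh : (1 : ℝ) ≤ (q : ℝ) ^ (1 / 2 : ℝ) := Real.one_le_rpow hq1 (by norm_num)
  refine hC2 q χ (((q : ℝ) ^ (1 / 2 : ℝ)) ^ (k + 1) * (q : ℝ) ^ (1 / 4 : ℝ))
    (one_le_mul_of_one_le_of_one_le (one_le_pow₀ hqh) (Real.one_le_rpow hq1 (by norm_num)))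
    (fun s hs hs2 => ?_) N hN ?_ x hx
  · set X := (q : ℝ) * (2 + |s.im|) with hX
    have hX1 : 1 ≤ X := by
      rw [hX]
      nlinarith [abs_nonneg s.im]
    have hXe : 1 ≤ X ^ ε := Real.one_le_rpow hX1 hε0.le
    refine (hC1 k le_rfl q χ s hs (C0 * (q : ℝ) ^ (1 / 2 : ℝ) * X ^ ε) (X ^ ε)
      (one_le_mul_of_one_le_of_one_le (one_le_mul_of_one_le_of_one_le hC01 hqh) hXe) hXe
      (hC0 q hq χ hχ1 hχ s hs hs2) (fun i => hD i q hq χ hχ1 s hs hs2)).trans (le_of_eq ?_)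
    have : X ^ (1 / 4 : ℝ) = (X ^ ε) ^ (2 * k + 1) := by
      rw [← Real.rpow_mul_natCast (by linarith), hε]
      congr 1
      push_cast
      field_simp
    rw [mul_assoc _ (_ * _) (_ ^ _), mul_assoc _ ((q : ℝ) ^ (1 / 4 : ℝ)),
      ← Real.mul_rpow (by linarith) (by positivity), ← hX, this]
    ring
  · calc ((q : ℝ) ^ (1 / 2 : ℝ)) ^ (k + 1) * (q : ℝ) ^ (1 / 4 : ℝ) * Real.log N ^ (2 * A)
        ≤ ((q : ℝ) ^ (1 / 2 : ℝ)) ^ (k + 1) * (q : ℝ) ^ (1 / 2 : ℝ) * Real.log N ^ (2 * A) := by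
          gcongr
          norm_num
      _ = ((q : ℝ) ^ 5) ^ A * Real.log N ^ (2 * A) := by
          rw [← pow_succ, hk, show 10 * A = 2 * (5 * A) by ring, pow_mul _ 2,
            ← Real.rpow_natCast _ 2, ← Real.rpow_mul (by linarith)]
          norm_num
          exact Or.inl (pow_mul _ _ _)
      _ ≤ (Real.log N ^ 6) ^ A * Real.log N ^ (2 * A) := by gcongr
      _ = Real.log N ^ (8 * A) := by rw [← pow_mul, ← pow_add]; ring_nf
      _ ≤ _ := pow_le_pow_right₀ hL (by omega)

end

section

open Filter Finset Topology MeasureTheory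

lemma muChar_one_eq (n : ℕ) : muChar (1 : DirichletCharacter ℂ 1) n
    = (ArithmeticFunction.moebius n : ℂ) := by
  rw [muChar, Subsingleton.elim (n : ZMod 1) 1]
  simp

/-- `1/ζ` extends analytically across `1`, so its derivatives are bounded on compact pieces of
`Re s ≥ 1`. -/
lemma zeta_inv_deriv_near (k : ℕ) : ∃ C : ℝ, 1 ≤ C ∧ ∀ s : ℂ, 1 < s.re → s.re ≤ 2 → |s.im| ≤ 1 →
    ‖iteratedDeriv k (LSeries (muChar (1 : DirichletCharacter ℂ 1))) s‖ ≤ C := by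
  set Z := DirichletCharacter.LFunctionTrivChar₁ 1 with hZ
  have hZd : Differentiable ℂ Z := DirichletCharacter.differentiable_LFunctionTrivChar₁ 1
  have hZ0 : ∀ s : ℂ, 1 ≤ s.re → Z s ≠ 0 := by
    intro s hs
    rcases eq_or_ne s 1 with rfl | h
    · exact DirichletCharacter.LFunctionTrivChar₁_apply_one_ne_zero 1
    · rw [hZ, DirichletCharacter.LFunctionTrivChar₁, Function.update_of_ne h]
      exact mul_ne_zero (sub_ne_zero.2 h)
        (DirichletCharacter.LFunction_ne_zero_of_one_le_re _ (Or.inr h) hs)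
  set F : ℂ → ℂ := fun s => (s - 1) / Z s with hF
  have hFan : ∀ s : ℂ, 1 ≤ s.re → AnalyticAt ℂ F s := fun s hs =>
    ((differentiable_id.sub_const 1).analyticAt s).div (hZd.analyticAt s) (hZ0 s hs)
  set B := ({z : ℂ | 1 ≤ z.re} ∩ {z : ℂ | z.re ≤ 2}) ∩ ({z : ℂ | -1 ≤ z.im} ∩ {z : ℂ | z.im ≤ 1})
    with hB
  have hBc : IsCompact B := by
    refine Metric.isCompact_of_isClosed_isBounded ?_ ?_
    · exact ((isClosed_le continuous_const Complex.continuous_re).inter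
        (isClosed_le Complex.continuous_re continuous_const)).inter
        ((isClosed_le continuous_const Complex.continuous_im).inter
        (isClosed_le Complex.continuous_im continuous_const))
    · refine (Metric.isBounded_iff_subset_closedBall 0).2 ⟨3, fun z hz => ?_⟩
      obtain ⟨⟨h1, h2⟩, h3, h4⟩ := hz
      simp only [Set.mem_ofPred_eq] at h1 h2 h3 h4
      rw [mem_closedBall_zero_iff]
      have h5 : |z.re| ≤ 2 := abs_le.2 ⟨by linarith, h2⟩
      have h6 : |z.im| ≤ 1 := abs_le.2 ⟨h3, h4⟩
      linarith [Complex.norm_le_abs_re_add_abs_im z]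
  have hcont : ContinuousOn (iteratedDeriv k F) B := fun s hs =>
    ((hFan s hs.1.1).iterated_deriv k |>.continuousAt.continuousWithinAt.congr
      (fun z _ => by rw [iteratedDeriv_eq_iterate]) (by rw [iteratedDeriv_eq_iterate]))
  obtain ⟨C, hC⟩ := hBc.exists_bound_of_continuousOn hcont
  refine ⟨max C 1, le_max_right _ _, fun s hs hs2 hst => ?_⟩
  have hev : LSeries (muChar (1 : DirichletCharacter ℂ 1)) =ᶠ[𝓝 s] F := by
    filter_upwards [(isOpen_lt continuous_const Complex.continuous_re).mem_nhds hs] with z hz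
    have hz : 1 < z.re := hz
    have hz1 : z ≠ 1 := by
      rintro rfl
      simp at hz
    have h1 := mul_muChar (1 : DirichletCharacter ℂ 1) hz
    rw [← DirichletCharacter.LFunction_eq_LSeries _ hz] at h1
    have h2 : Z z = (z - 1) * DirichletCharacter.LFunction (1 : DirichletCharacter ℂ 1) z := by
      rw [hZ, DirichletCharacter.LFunctionTrivChar₁, Function.update_of_ne hz1]
    rw [hF]
    simp only
    rw [eq_div_iff (hZ0 z hz.le), h2]
    linear_combination (z - 1) * h1
  rw [hev.iteratedDeriv_eq]
  exact (hC s ⟨⟨hs.le, hs2⟩, abs_le.1 hst⟩).trans (le_max_left _ _)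

/-- The prime number theorem for `μ`, with an arbitrary power of the logarithm. -/
lemma zeta_sum (A : ℕ) : ∃ C : ℝ, 0 < C ∧ ∀ N : ℕ, 9 ≤ N → ∀ x ≤ N,
    ‖∑ n ∈ Icc 1 x, (ArithmeticFunction.moebius n : ℂ)‖ ≤ C * (N / Real.log N ^ A) := by
  set k := 2 * A with hk
  set ε : ℝ := 1 / (4 * (2 * k + 1)) with hε
  have hε0 : 0 < ε := by positivity
  choose D hD1 hD using fun j => zeta_upper_bound j hε0
  obtain ⟨C0, hC01, hC0⟩ := zeta_inv hε0
  obtain ⟨C1, hC11, hC1⟩ := inv_deriv_le (D := fun j => D j * 2 ^ (j + 1))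
    (fun j => one_le_mul_of_one_le_of_one_le (hD1 j) (one_le_pow₀ (by norm_num))) k
  obtain ⟨C3, hC31, hC3⟩ := zeta_inv_deriv_near k
  have hbig : 1 ≤ C1 * C0 ^ (k + 1) := one_le_mul_of_one_le_of_one_le hC11 (one_le_pow₀ hC01)
  obtain ⟨C2, hC20, hC2⟩ := sum_muChar_le k A (C := C1 * C0 ^ (k + 1) + C3) (by linarith)
  refine ⟨C2, hC20, fun N hN x hx => ?_⟩
  have h0 : (fun n : ℕ => (1 : DirichletCharacter ℂ 1) n) = 1 := by
    funext n
    rw [Subsingleton.elim (n : ZMod 1) 1]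
    simp
  have := hC2 1 1 1 le_rfl (fun s hs hs2 => ?_) N hN (by rw [one_mul]) x hx
  · simpa only [muChar_one_eq] using this
  · set X := (2 + |s.im|) with hX
    have hX1 : 1 ≤ X := by
      rw [hX]
      linarith [abs_nonneg s.im]
    have hXe : 1 ≤ X ^ ε := Real.one_le_rpow hX1 hε0.le
    have hX4 : 1 ≤ X ^ (1 / 4 : ℝ) := Real.one_le_rpow hX1 (by norm_num)
    rw [mul_one]
    rcases le_total |s.im| 1 with hst | hst
    · calc _ ≤ C3 := hC3 s hs hs2 hst
        _ ≤ C3 * X ^ (1 / 4 : ℝ) := le_mul_of_one_le_right (by linarith) hX4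
        _ ≤ _ := by gcongr; linarith
    · have hf : ∀ i, ‖iteratedDeriv i (LSeries (fun n => (1 : DirichletCharacter ℂ 1) n)) s‖
          ≤ D i * 2 ^ (i + 1) * X ^ ε := by
        intro i
        rw [LSeries_iteratedDeriv i (abscissa_lt (norm_char_nat_le 1) hs), norm_mul, norm_pow,
          norm_neg, norm_one, one_pow, one_mul, h0]
        refine (hD i s hs hs2).trans ?_
        have hz1 : 1 ≤ ‖s - 1‖ := by
          have h6 := Complex.abs_im_le_norm (s - 1)
          rw [Complex.sub_im, Complex.one_im, sub_zero] at h6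
          linarith
        have hz2 : 1 + 1 / ‖s - 1‖ ≤ 2 := by
          have h7 : 1 / ‖s - 1‖ ≤ 1 := (div_le_one (by linarith)).2 hz1
          linarith
        have := hD1 i
        gcongr
      refine (hC1 k le_rfl 1 1 s hs (C0 * X ^ ε) (X ^ ε) (one_le_mul_of_one_le_of_one_le hC01 hXe) hXe
        (hC0 s hs hs2 hst) hf).trans ?_
      have : X ^ (1 / 4 : ℝ) = (X ^ ε) ^ (2 * k + 1) := by
        rw [← Real.rpow_mul_natCast (by linarith), hε]
        congr 1
        push_cast
        field_simp
      rw [this]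
      calc _ = C1 * C0 ^ (k + 1) * (X ^ ε) ^ (2 * k + 1) := by ring
        _ ≤ _ := by gcongr; linarith

end

section

open Filter Finset Topology MeasureTheory

/-- The sum of `μ(n)` over `n ≤ y` coprime to `q`. -/
noncomputable def copSum (q y : ℕ) : ℂ :=
  ∑ n ∈ Icc 1 y, if n.Coprime q then (ArithmeticFunction.moebius n : ℂ) else 0

lemma moebius_prime_mul {p m : ℕ} (hp : p.Prime) : ArithmeticFunction.moebius (p * m)
    = if p ∣ m then 0 else -ArithmeticFunction.moebius m := by
  split_ifs with h
  · rw [ArithmeticFunction.moebius_eq_zero_of_not_squarefree]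
    intro hs
    obtain ⟨c, rfl⟩ := h
    have := hs p ⟨c, by ring⟩
    exact hp.not_isUnit this
  · rw [ArithmeticFunction.isMultiplicative_moebius.map_mul_of_coprime
      ((Nat.Prime.coprime_iff_not_dvd hp).2 h), ArithmeticFunction.moebius_apply_prime hp]
    ring

/-- Sieving out one further prime. -/
lemma copSum_prime_mul {p q : ℕ} (hp : p.Prime) (hpq : ¬ p ∣ q) (y : ℕ) :
    copSum (p * q) y = copSum q y + copSum (p * q) (y / p) := by
  have hcop : p.Coprime q := (Nat.Prime.coprime_iff_not_dvd hp).2 hpq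
  have h1 : ∑ n ∈ Icc 1 y with p ∣ n, (if n.Coprime q then (ArithmeticFunction.moebius n : ℂ) else 0)
      = - copSum (p * q) (y / p) := by
    have himg : {n ∈ Icc 1 y | p ∣ n} = (Icc 1 (y / p)).image (fun m => p * m) := by
      ext n
      simp only [mem_filter, mem_Icc, mem_image]
      constructor
      · rintro ⟨⟨h1, h2⟩, c, rfl⟩
        refine ⟨c, ⟨?_, ?_⟩, rfl⟩
        · exact Nat.pos_of_ne_zero (by rintro rfl; simp at h1)
        · rw [Nat.le_div_iff_mul_le hp.pos, mul_comm]
          exact h2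
      · rintro ⟨m, ⟨h1, h2⟩, rfl⟩
        rw [Nat.le_div_iff_mul_le hp.pos, mul_comm] at h2
        exact ⟨⟨Nat.mul_pos hp.pos h1, h2⟩, dvd_mul_right _ _⟩
    rw [himg, sum_image (fun a _ b _ h => Nat.eq_of_mul_eq_mul_left hp.pos h), copSum, ← sum_neg_distrib]
    refine sum_congr rfl fun m _ => ?_
    rw [moebius_prime_mul hp]
    have e1 : (p * m).Coprime q ↔ m.Coprime q := by
      rw [Nat.coprime_mul_iff_left]
      exact ⟨fun h => h.2, fun h => ⟨hcop, h⟩⟩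
    have e2 : m.Coprime (p * q) ↔ ¬ p ∣ m ∧ m.Coprime q := by
      rw [Nat.coprime_mul_iff_right, Nat.coprime_comm, Nat.Prime.coprime_iff_not_dvd hp]
    simp only [e1, e2]
    by_cases h : p ∣ m <;> by_cases h2 : m.Coprime q <;> simp [h, h2]
    split_ifs
    simp
  have h2 : ∑ n ∈ Icc 1 y with ¬ p ∣ n,
      (if n.Coprime q then (ArithmeticFunction.moebius n : ℂ) else 0) = copSum (p * q) y := by
    rw [sum_filter, copSum]
    refine sum_congr rfl fun m _ => ?_
    have e2 : m.Coprime (p * q) ↔ ¬ p ∣ m ∧ m.Coprime q := by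
      rw [Nat.coprime_mul_iff_right, Nat.coprime_comm, Nat.Prime.coprime_iff_not_dvd hp]
    simp only [e2]
    by_cases h : p ∣ m <;> by_cases h' : m.Coprime q <;> simp [h, h']
  have h3 := sum_filter_add_sum_filter_not (Icc 1 y) (fun n => p ∣ n)
    (fun n => if n.Coprime q then (ArithmeticFunction.moebius n : ℂ) else 0)
  rw [h1, h2] at h3
  rw [show copSum q y = -copSum (p * q) (y / p) + copSum (p * q) y from h3.symm]
  ring

/-- A bound for the sums of `μ` passes to the sums restricted to integers coprime to `q`, by induction
on the prime factors of `q`; the factor `q ^ 2` is a crude bound for the accumulated loss. -/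
lemma copSum_le {B : ℝ} (hB : 0 ≤ B) {N : ℕ} (h : ∀ y ≤ N, ‖copSum 1 y‖ ≤ B * √y) (q : ℕ) :
    q ≠ 0 → ∀ y ≤ N, ‖copSum q y‖ ≤ (q : ℝ) ^ 2 * B * √y := by
  induction q using induction_on_primes with
  | zero => exact fun h => absurd rfl h
  | one => simpa using h
  | prime_mul p a hp ih =>
    intro hpa
    have ha : a ≠ 0 := right_ne_zero_of_mul hpa
    have ih := ih ha
    have hp2 : (2 : ℝ) ≤ p := by exact_mod_cast hp.two_le
    by_cases hd : p ∣ a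
    · intro y hy
      have : copSum (p * a) y = copSum a y := by
        rw [copSum, copSum]
        refine sum_congr rfl fun n _ => ?_
        have : n.Coprime (p * a) ↔ n.Coprime a := by
          rw [Nat.coprime_mul_iff_right]
          exact ⟨fun h => h.2, fun h => ⟨h.coprime_dvd_right hd, h⟩⟩
        simp only [this]
      rw [this]
      refine (ih y hy).trans ?_
      gcongr
      exact Nat.le_mul_of_pos_left a hp.pos
    · intro y
      induction y using Nat.strong_induction_on with
      | _ y ihy =>
        intro hy
        rcases Nat.eq_zero_or_pos y with rfl | hy0
        · simp [copSum]
        rw [copSum_prime_mul hp hd]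
        have h1 := ihy (y / p) (Nat.div_lt_self hy0 hp.one_lt) ((Nat.div_le_self _ _).trans hy)
        have h2 : √((y / p : ℕ) : ℝ) ≤ 3 / 4 * √y := by
          rw [Real.sqrt_le_left (by positivity), mul_pow, Real.sq_sqrt (by positivity)]
          have : ((y / p : ℕ) : ℝ) ≤ (y : ℝ) / p := Nat.cast_div_le
          refine this.trans ?_
          rw [div_le_iff₀ (by linarith)]
          nlinarith [Nat.cast_nonneg (α := ℝ) y]
        calc _ ≤ (a : ℝ) ^ 2 * B * √y + ((p * a : ℕ) : ℝ) ^ 2 * B * (3 / 4 * √y) := by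
              refine (norm_add_le _ _).trans (add_le_add (ih y hy) (h1.trans ?_))
              gcongr
          _ ≤ ((p * a : ℕ) : ℝ) ^ 2 * B * √y := by
              push_cast
              have h3 : 0 ≤ (a : ℝ) ^ 2 * B * √y := by positivity
              have h4 : (4 : ℝ) ≤ (p : ℝ) ^ 2 := by nlinarith
              nlinarith

lemma sum_muChar_one (q x : ℕ) :
    ∑ n ∈ Icc 1 x, muChar (1 : DirichletCharacter ℂ q) n = copSum q x := by
  rw [copSum]
  refine sum_congr rfl fun n _ => ?_
  rw [muChar]
  split_ifs with h
  · rw [MulChar.one_apply ((ZMod.isUnit_iff_coprime n q).2 h), one_mul]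
  · rw [MulChar.map_nonunit _ (fun hu => h ((ZMod.isUnit_iff_coprime n q).1 hu)), zero_mul]

/-- The analogue of `zeta_sum` for principal characters, with an explicit loss in `q`. -/
lemma principal_sum (A : ℕ) : ∃ C : ℝ, 0 < C ∧ ∀ N : ℕ, 9 ≤ N → ∀ q : ℕ, q ≠ 0 →
    ∀ x ≤ N, ‖∑ n ∈ Icc 1 x, muChar (1 : DirichletCharacter ℂ q) n‖
      ≤ C * (q : ℝ) ^ 2 * (N / Real.log N ^ A) := by
  obtain ⟨C, hC0, hC⟩ := zeta_sum (2 * A)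
  refine ⟨√C, by positivity, fun N hN q hq x hx => ?_⟩
  have hL := one_le_log_of_nine_le hN
  rw [sum_muChar_one]
  have h1 : ∀ y ≤ N, ‖copSum 1 y‖ ≤ √(C * N) / Real.log N ^ A * √y := by
    intro y hy
    have e1 : copSum 1 y = ∑ n ∈ Icc 1 y, (ArithmeticFunction.moebius n : ℂ) := by
      rw [copSum]
      simp
    have h2 := hC N hN y hy
    have h3 : ‖∑ n ∈ Icc 1 y, (ArithmeticFunction.moebius n : ℂ)‖ ≤ y := by
      refine (norm_sum_le _ _).trans ?_
      calc _ ≤ ∑ n ∈ Icc 1 y, (1 : ℝ) := by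
            refine sum_le_sum fun n _ => ?_
            rw [Complex.norm_intCast]
            exact_mod_cast ArithmeticFunction.abs_moebius_le_one
        _ = y := by simp
    rw [e1]
    set Z := ‖∑ n ∈ Icc 1 y, (ArithmeticFunction.moebius n : ℂ)‖
    have h4 : √(C * N) / Real.log N ^ A * √y = √(C * (N / Real.log N ^ (2 * A)) * y) := by
      rw [Real.sqrt_mul (x := C * (N / _)) (by positivity), ← mul_div_assoc, Real.sqrt_div (by positivity), mul_comm 2 A,
        pow_mul _ A 2, Real.sqrt_sq (by positivity)]
    rw [h4]
    refine Real.le_sqrt_of_sq_le ?_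
    rw [sq]
    exact mul_le_mul h2 h3 (norm_nonneg _) (by positivity)
  refine (copSum_le (by positivity) h1 q hq x hx).trans ?_
  have h5 : √(x : ℝ) ≤ √N := Real.sqrt_le_sqrt (by exact_mod_cast hx)
  calc (q : ℝ) ^ 2 * (√(C * N) / Real.log N ^ A) * √x
      ≤ (q : ℝ) ^ 2 * (√(C * N) / Real.log N ^ A) * √N := by gcongr
    _ = √C * (q : ℝ) ^ 2 * (√N * √N / Real.log N ^ A) := by
        rw [Real.sqrt_mul hC0.le]; ring
    _ = _ := by rw [Real.mul_self_sqrt (by positivity)]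

end

section

open Filter Finset Topology MeasureTheory

/-! ### Major arcs -/

lemma moebius_mul_of_gcd {q d m : ℕ} (hq : q ≠ 0) (hd : d ∣ q) :
    (if (d * m).gcd q = d then (ArithmeticFunction.moebius (d * m) : ℂ) else 0)
      = ArithmeticFunction.moebius d *
        if m.Coprime q then (ArithmeticFunction.moebius m : ℂ) else 0 := by
  obtain ⟨q', rfl⟩ := hd
  have hd0 : 0 < d := Nat.pos_of_ne_zero (left_ne_zero_of_mul hq)
  have h1 : (d * m).gcd (d * q') = d ↔ m.Coprime q' := by
    rw [Nat.gcd_mul_left, Nat.Coprime]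
    constructor
    · intro h
      exact Nat.eq_of_mul_eq_mul_left hd0 (by rw [h, mul_one])
    · intro h
      rw [h, mul_one]
  simp only [h1, Nat.coprime_mul_iff_right]
  by_cases hmq : m.Coprime q'
  · by_cases hmd : m.Coprime d
    · rw [if_pos hmq, if_pos ⟨hmd, hmq⟩,
        ArithmeticFunction.isMultiplicative_moebius.map_mul_of_coprime hmd.symm]
      push_cast
      rfl
    · rw [if_pos hmq, if_neg (fun h => hmd h.1), mul_zero,
        ArithmeticFunction.moebius_eq_zero_of_not_squarefree]
      · simp
      · intro hs
        exact hmd (Nat.squarefree_mul_iff.1 hs).1.symm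
  · rw [if_neg hmq, if_neg (fun h => hmq h.2), mul_zero]

/-- Sorting `n` by its greatest common divisor `d` with `q`: only `n = d m` with `m` coprime to
`q` contributes, since otherwise `n` is not square-free. -/
lemma sum_moebius_gcd_split (g : ℕ → ℂ) {q : ℕ} (hq : q ≠ 0) (N : ℕ) :
    ∑ n ∈ Icc 1 N, (ArithmeticFunction.moebius n : ℂ) * g n
      = ∑ d ∈ q.divisors, (ArithmeticFunction.moebius d : ℂ) * ∑ m ∈ Icc 1 (N / d),
          (if m.Coprime q then (ArithmeticFunction.moebius m : ℂ) else 0) * g (d * m) := by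
  rw [← sum_fiberwise_of_maps_to (s := Icc 1 N) (t := q.divisors) (g := fun n => n.gcd q)
    (fun n _ => Nat.mem_divisors.2 ⟨Nat.gcd_dvd_right _ _, hq⟩)]
  refine sum_congr rfl fun d hd => ?_
  have hdq := Nat.dvd_of_mem_divisors hd
  have hd0 : 0 < d := Nat.pos_of_mem_divisors hd
  have h1 : ∀ m, (ArithmeticFunction.moebius d : ℂ) *
      ((if m.Coprime q then (ArithmeticFunction.moebius m : ℂ) else 0) * g (d * m))
      = if (d * m).gcd q = d then (ArithmeticFunction.moebius (d * m) : ℂ) * g (d * m) else 0 := by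
    intro m
    rw [← mul_assoc, ← moebius_mul_of_gcd hq hdq, ite_mul, zero_mul]
  rw [mul_sum, sum_congr rfl (fun m _ => h1 m), ← sum_filter]
  refine sum_nbij' (· / d) (d * ·) ?_ ?_ ?_ ?_ ?_
  · intro n hn
    rw [mem_filter, mem_Icc] at hn ⊢
    have hdn : d ∣ n := hn.2 ▸ Nat.gcd_dvd_left n q
    rw [Nat.mul_div_cancel' hdn]
    exact ⟨⟨Nat.div_pos (Nat.le_of_dvd hn.1.1 hdn) hd0, Nat.div_le_div_right hn.1.2⟩, hn.2⟩
  · intro m hm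
    rw [mem_filter, mem_Icc] at hm ⊢
    refine ⟨⟨Nat.mul_pos hd0 hm.1.1, ?_⟩, hm.2⟩
    rw [mul_comm]
    exact (Nat.le_div_iff_mul_le hd0).1 hm.1.2
  · intro n hn
    have hdn : d ∣ n := (mem_filter.1 hn).2 ▸ Nat.gcd_dvd_left n q
    exact Nat.mul_div_cancel' hdn
  · intro m _
    exact Nat.mul_div_cancel_left m hd0
  · intro n hn
    have hdn : d ∣ n := (mem_filter.1 hn).2 ▸ Nat.gcd_dvd_left n q
    simp only [Nat.mul_div_cancel' hdn]

/-- Expansion of an additive character modulo `q`, on residues coprime to `q`, in Dirichlet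
characters. -/
lemma stdAddChar_expand {q : ℕ} [NeZero q] (b : ZMod q) {m : ℕ} (hm : m.Coprime q) :
    ZMod.stdAddChar (b * (m : ZMod q))
      = ∑ χ : DirichletCharacter ℂ q, (q.totient : ℂ)⁻¹ * gauss χ⁻¹ b * χ m := by
  have hu : IsUnit (m : ZMod q) := (ZMod.isUnit_iff_coprime m q).2 hm
  have hφ : (q.totient : ℂ) ≠ 0 := by
    exact_mod_cast (Nat.totient_pos.2 (Nat.pos_of_ne_zero (NeZero.ne q))).ne'
  have h1 : ∀ x : ZMod q, ∑ χ : DirichletCharacter ℂ q, χ⁻¹ x * χ m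
      = if x = m then (q.totient : ℂ) else 0 := by
    intro x
    by_cases hx : IsUnit x
    · rw [← DirichletCharacter.sum_char_inv_mul_char_eq ℂ hx (m : ZMod q)]
      refine sum_congr rfl fun χ _ => ?_
      rw [MulChar.inv_apply, ← hx.choose_spec]; simp
    · rw [if_neg (fun h : x = m => hx (h ▸ hu))]
      exact sum_eq_zero fun χ _ => by rw [MulChar.map_nonunit _ hx, zero_mul]
  have h2 : ∑ χ : DirichletCharacter ℂ q, (q.totient : ℂ)⁻¹ * gauss χ⁻¹ b * χ m
      = (q.totient : ℂ)⁻¹ * ∑ x : ZMod q, ZMod.stdAddChar (b * x) *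
        ∑ χ : DirichletCharacter ℂ q, χ⁻¹ x * χ m := by
    simp only [gauss, mul_sum, sum_mul]
    rw [sum_comm]
    refine sum_congr rfl fun x _ => sum_congr rfl fun χ _ => ?_
    ring
  rw [h2]
  simp only [h1, mul_ite, mul_zero, sum_ite_eq', mem_univ, if_true]
  field_simp

lemma norm_e_sub_one_le (x : ℝ) : ‖e x - 1‖ ≤ 2 * Real.pi * |x| := by
  have := Real.norm_exp_I_mul_ofReal_sub_one_le (x := 2 * Real.pi * x)
  have h2 : Complex.exp (Complex.I * ((2 * Real.pi * x : ℝ) : ℂ)) = e x := by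
    rw [e]; congr 1; push_cast; ring
  rw [h2] at this
  refine this.trans (le_of_eq ?_)
  rw [Real.norm_eq_abs, abs_mul, abs_of_pos Real.two_pi_pos]

/-- Partial summation removes the slowly varying factor `e(m β)`. -/
lemma twist_le (f : ℕ → ℂ) (β : ℝ) (y : ℕ) (P : ℝ) (hP : ∀ m ≤ y, ‖∑ n ∈ Icc 1 m, f n‖ ≤ P) :
    ‖∑ m ∈ Icc 1 y, f m * e (m * β)‖ ≤ P * (1 + 2 * Real.pi * |β| * y) := by
  have hI : ∀ m, Icc 1 m = Ico 1 (m + 1) := fun m => by ext; simp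
  have h := abel_le f (fun m => e (m * β)) 1 (y + 1) (by omega) P (by
    intro m h1 h2
    obtain ⟨k, rfl⟩ : ∃ k, m = k + 1 := ⟨m - 1, by omega⟩
    rw [← hI]
    exact hP k (by omega))
  rw [← hI] at h
  refine h.trans (mul_le_mul_of_nonneg_left ?_ ((norm_nonneg _).trans (hP 0 (Nat.zero_le _))))
  rw [norm_e]
  have h3 : ∀ n ∈ Icc 1 y, ‖e ((n + 1 : ℕ) * β) - e (n * β)‖ ≤ 2 * Real.pi * |β| := by
    intro n _
    have : e ((n + 1 : ℕ) * β) - e (n * β) = e (n * β) * (e β - 1) := by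
      rw [mul_sub, ← e_add, mul_one]
      congr 2
      push_cast
      ring
    rw [this, norm_mul, norm_e, one_mul]
    exact norm_e_sub_one_le β
  have h4 := sum_le_sum h3
  rw [sum_const, Nat.card_Icc, nsmul_eq_mul] at h4
  simp only [Nat.add_sub_cancel] at h4
  linarith

end

section

open Filter Finset Topology MeasureTheory

lemma muChar_eq_zero {q : ℕ} (χ : DirichletCharacter ℂ q) {m : ℕ} (hm : ¬ m.Coprime q) :
    muChar χ m = 0 := by
  rw [muChar, MulChar.map_nonunit _ (fun h => hm ((ZMod.isUnit_iff_coprime m q).1 h)), zero_mul]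

lemma norm_gauss_le {q : ℕ} [NeZero q] (χ : DirichletCharacter ℂ q) {a : ℤ}
    (ha : IsCoprime a (q : ℤ)) {d : ℕ} (hd : 0 < d) :
    ‖gauss χ ((a : ZMod q) * (d : ZMod q))‖ ≤ √(q * d) := by
  obtain ⟨x, y, hxy⟩ := ha
  have hx : (x : ZMod q) * (a : ZMod q) = 1 := by
    have := congrArg (Int.cast : ℤ → ZMod q) hxy
    push_cast at this
    simpa using this
  refine Real.le_sqrt_of_sq_le ((gauss_bound χ _).trans ?_)
  refine mul_le_mul_of_nonneg_left ?_ (Nat.cast_nonneg _)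
  exact_mod_cast ann_le ((a : ZMod q) * (d : ZMod q)) d hd (x : ZMod q)
    (by rw [← mul_assoc, hx, one_mul])

/-- The exponential sum near a rational with denominator `q`, in terms of Dirichlet characters
modulo `q`. -/
lemma major_expand {q : ℕ} [NeZero q] {a : ℤ} (ha : IsCoprime a (q : ℤ)) (β : ℝ) (N : ℕ) :
    ‖S N (a / q + β)‖ ≤ ∑ d ∈ q.divisors, ∑ χ : DirichletCharacter ℂ q,
      √(q * d) / q.totient * ‖∑ m ∈ Icc 1 (N / d), muChar χ m * e (m * (d * β))‖ := by
  have hq : q ≠ 0 := NeZero.ne q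
  rw [S, sum_moebius_gcd_split (fun n => e (n * (a / q + β))) hq]
  refine (norm_sum_le _ _).trans (sum_le_sum fun d hd => ?_)
  have hd0 : 0 < d := Nat.pos_of_mem_divisors hd
  have h1 : ∀ m : ℕ, (if m.Coprime q then (ArithmeticFunction.moebius m : ℂ) else 0) *
      e ((d * m : ℕ) * (a / q + β))
      = ∑ χ : DirichletCharacter ℂ q, (q.totient : ℂ)⁻¹ *
        gauss χ⁻¹ ((a : ZMod q) * (d : ZMod q)) * (muChar χ m * e (m * (d * β))) := by
    intro m
    split_ifs with hm
    · have h2 : e ((d * m : ℕ) * (a / q + β))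
          = ZMod.stdAddChar ((a : ZMod q) * (d : ZMod q) * (m : ZMod q)) * e (m * (d * β)) := by
        have h3 : ((a : ZMod q) * (d : ZMod q) * (m : ZMod q)) = ((a * d * m : ℤ) : ZMod q) := by
          push_cast
          rfl
        rw [h3, stdAddChar_eq_e, ← e_add]
        congr 1
        push_cast
        ring
      rw [h2, stdAddChar_expand _ hm, sum_mul, mul_sum]
      refine sum_congr rfl fun χ _ => ?_
      rw [muChar]
      ring
    · rw [zero_mul]
      exact (sum_eq_zero fun χ _ => by rw [muChar_eq_zero χ hm, zero_mul, mul_zero]).symm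
  rw [sum_congr rfl (fun m _ => h1 m), sum_comm, norm_mul]
  have h4 : ‖(ArithmeticFunction.moebius d : ℂ)‖ ≤ 1 := by
    rw [Complex.norm_intCast]
    exact_mod_cast ArithmeticFunction.abs_moebius_le_one
  refine (mul_le_of_le_one_left (norm_nonneg _) h4).trans ((norm_sum_le _ _).trans ?_)
  refine sum_le_sum fun χ _ => ?_
  rw [← mul_sum, norm_mul, norm_mul, norm_inv, Complex.norm_natCast, div_eq_inv_mul]
  gcongr
  exact norm_gauss_le χ⁻¹ ha hd0

lemma le_totient_mul_card_divisors (q : ℕ) : q ≤ q.totient * #q.divisors := by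
  rcases Nat.eq_zero_or_pos q with rfl | hq
  · simp
  conv_lhs => rw [← Nat.sum_totient q]
  refine (sum_le_card_nsmul _ _ q.totient fun d hd => ?_).trans (by rw [smul_eq_mul, mul_comm])
  exact Nat.le_of_dvd (Nat.totient_pos.2 hq)
    (Nat.totient_dvd_of_dvd (Nat.dvd_of_mem_divisors hd))

/-- Both elements of `ZMod q` generate the ideal of their common gcd with `q`. -/
lemma dvd_of_gcd_eq {q : ℕ} [NeZero q] {b c : ZMod q} (h : b.val.gcd q = c.val.gcd q) : b ∣ c := by
  have h1 : b ∣ ((b.val.gcd q : ℕ) : ZMod q) := by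
    have h2 := congrArg (Int.cast : ℤ → ZMod q) (Nat.gcd_eq_gcd_ab b.val q)
    push_cast at h2
    rw [ZMod.natCast_zmod_val, ZMod.natCast_self, zero_mul, add_zero] at h2
    exact ⟨_, h2⟩
  refine h1.trans ?_
  rw [h]
  obtain ⟨k, hk⟩ := Nat.gcd_dvd_left c.val q
  refine ⟨(k : ZMod q), ?_⟩
  rw [← Nat.cast_mul, ← hk, ZMod.natCast_zmod_val]

/-- A square root `u` of `1` modulo `q` is determined by `gcd (u - 1, q)` up to solutions of
`2 z = 0`. -/
lemma card_sq_eq_one_le (q : ℕ) [NeZero q] :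
    #{u : ZMod q | u ^ 2 = 1} ≤ 2 * #q.divisors := by
  refine card_le_mul_card_image_of_maps_to (f := fun u : ZMod q => (u - 1).val.gcd q)
    (fun u _ => Nat.mem_divisors.2 ⟨Nat.gcd_dvd_right _ _, NeZero.ne q⟩) 2 fun g _ => ?_
  rcases Finset.eq_empty_or_nonempty
    {u ∈ ({u : ZMod q | u ^ 2 = 1} : Finset (ZMod q)) | (u - 1).val.gcd q = g} with h0 | ⟨v, hv⟩
  · rw [h0]; simp
  refine le_trans (card_le_card_of_injOn (fun u => u - v) (t := {z : ZMod q | 2 * z = 0}) ?_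
    (fun x _ y _ h => sub_left_injective h)) (ann_le (2 : ZMod q) 2 two_pos 1 (by simp))
  intro u hu
  simp only [coe_filter, mem_filter, mem_univ, true_and, Set.mem_ofPred_eq] at hu hv ⊢
  obtain ⟨k, hk⟩ := dvd_of_gcd_eq (hu.2.trans hv.2.symm)
  obtain ⟨l, hl⟩ := dvd_of_gcd_eq (hv.2.trans hu.2.symm)
  linear_combination (-k) * hu.1 + l * hv.1 - (u + 1) * hk + (v + 1) * hl

lemma card_real_char_le (q : ℕ) [NeZero q] :
    #{χ : DirichletCharacter ℂ q | χ ^ 2 = 1} ≤ 2 * #q.divisors := by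
  obtain ⟨φ⟩ := DirichletCharacter.mulEquiv_units ℂ q
  refine le_trans (card_le_card_of_injOn (fun χ => ((φ χ : (ZMod q)ˣ) : ZMod q)) ?_
    (fun x _ y _ h => φ.injective (Units.ext h))) (card_sq_eq_one_le q)
  intro χ hχ
  simp only [coe_filter, mem_univ, true_and, Set.mem_ofPred_eq] at hχ ⊢
  rw [← Units.val_pow_eq_pow_val, ← map_pow, hχ, map_one, Units.val_one]

end

section

open Filter Finset Topology MeasureTheory

lemma card_char_le (q : ℕ) [NeZero q] (s : Finset (DirichletCharacter ℂ q)) : #s ≤ q := by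
  refine (card_le_univ s).trans ?_
  rw [← Nat.card_eq_fintype_card, DirichletCharacter.card_eq_totient_of_hasEnoughRootsOfUnity ℂ q]
  exact Nat.totient_le q

lemma major_good {q : ℕ} [NeZero q] (β : ℝ) (N : ℕ) (s : Finset (DirichletCharacter ℂ q)) {P : ℝ}
    (hP : ∀ χ ∈ s, ∀ x ≤ N, ‖∑ n ∈ Icc 1 x, muChar χ n‖ ≤ P) (hP0 : 0 ≤ P) :
    ∑ d ∈ q.divisors, ∑ χ ∈ s,
      √(q * d) / q.totient * ‖∑ m ∈ Icc 1 (N / d), muChar χ m * e (m * (d * β))‖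
      ≤ (q : ℝ) ^ 3 * (P * (1 + 2 * Real.pi * |β| * N)) := by
  have hq : 0 < q := Nat.pos_of_ne_zero (NeZero.ne q)
  have hφ : (1 : ℝ) ≤ q.totient := by exact_mod_cast Nat.totient_pos.2 hq
  set R := P * (1 + 2 * Real.pi * |β| * N) with hR
  have hR0 : 0 ≤ R := by positivity
  have h1 : ∀ d ∈ q.divisors, ∀ χ ∈ s,
      √(q * d) / q.totient * ‖∑ m ∈ Icc 1 (N / d), muChar χ m * e (m * (d * β))‖ ≤ q * R := by
    intro d hd χ hχ
    have hd0 : 0 < d := Nat.pos_of_mem_divisors hd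
    have hdq : (d : ℝ) ≤ q := by exact_mod_cast Nat.divisor_le hd
    have h2 : √(q * d) / q.totient ≤ q := by
      refine (div_le_self (Real.sqrt_nonneg _) hφ).trans ?_
      rw [Real.sqrt_le_left (Nat.cast_nonneg _), sq]
      gcongr
    have h3 := twist_le (muChar χ) (d * β) (N / d) P
      (fun m hm => hP χ hχ m (hm.trans (Nat.div_le_self _ _)))
    have h4 : |(d : ℝ) * β| * (N / d : ℕ) ≤ |β| * N := by
      rw [abs_mul, Nat.abs_cast]
      have : ((N / d : ℕ) : ℝ) * d ≤ N := by exact_mod_cast Nat.div_mul_le_self N d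
      calc (d : ℝ) * |β| * (N / d : ℕ) = |β| * (((N / d : ℕ) : ℝ) * d) := by ring
        _ ≤ |β| * N := by gcongr
    refine mul_le_mul h2 (h3.trans ?_) (norm_nonneg _) (Nat.cast_nonneg _)
    rw [hR]
    refine mul_le_mul_of_nonneg_left ?_ hP0
    rw [mul_assoc, mul_assoc (2 * Real.pi)]
    gcongr
  refine (sum_le_sum fun d hd => sum_le_sum fun χ hχ => h1 d hd χ hχ).trans ?_
  simp only [sum_const, nsmul_eq_mul]
  have h5 : (#q.divisors : ℝ) ≤ q := by exact_mod_cast Nat.card_divisors_le_self q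
  have h6 : (#s : ℝ) ≤ q := by exact_mod_cast card_char_le q s
  calc (#q.divisors : ℝ) * (#s * (q * R)) ≤ q * (q * (q * R)) := by gcongr
    _ = q ^ 3 * R := by ring

/-- The trivial bound for the contribution of the real characters, which is nontrivial once `q`
is large, because there are few real characters. -/
lemma major_bad {q : ℕ} [NeZero q] (β : ℝ) (N : ℕ) :
    ∑ d ∈ q.divisors, ∑ χ : DirichletCharacter ℂ q with χ ^ 2 = 1,
      √(q * d) / q.totient * ‖∑ m ∈ Icc 1 (N / d), muChar χ m * e (m * (d * β))‖
      ≤ 2 * (#q.divisors : ℝ) ^ 3 / √q * N := by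
  have hq : 0 < q := Nat.pos_of_ne_zero (NeZero.ne q)
  have hq' : (0 : ℝ) < q := by exact_mod_cast hq
  have hφ : (0 : ℝ) < q.totient := by exact_mod_cast Nat.totient_pos.2 hq
  set t : ℝ := (#q.divisors : ℝ) with ht
  have h1 : ∀ d ∈ q.divisors, ∀ χ ∈ ({χ | χ ^ 2 = 1} : Finset (DirichletCharacter ℂ q)),
      √(q * d) / q.totient * ‖∑ m ∈ Icc 1 (N / d), muChar χ m * e (m * (d * β))‖
        ≤ t / √q * N := by
    intro d hd χ hχ
    have hd0 : 0 < d := Nat.pos_of_mem_divisors hd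
    have hd1 : (1 : ℝ) ≤ d := by exact_mod_cast hd0
    have h2 : ‖∑ m ∈ Icc 1 (N / d), muChar χ m * e (m * (d * β))‖ ≤ N / d := by
      refine (norm_sum_le_of_le (f := fun m : ℕ => muChar χ m * e (m * (d * β))) _
        (n := fun _ => 1) fun m _ => ?_).trans ?_
      · rw [norm_mul, norm_e, mul_one]
        exact norm_muChar_le χ m
      · rw [sum_const, Nat.card_Icc, nsmul_eq_mul, mul_one]
        simp only [Nat.add_sub_cancel]
        exact Nat.cast_div_le
    have h3 : (q : ℝ) ≤ q.totient * t := by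
      rw [ht]
      exact_mod_cast le_totient_mul_card_divisors q
    have h4 : √q / q.totient ≤ t / √q := by
      rw [div_le_div_iff₀ hφ (Real.sqrt_pos.2 hq'), Real.mul_self_sqrt hq'.le]
      linarith
    have h5 : √d / d ≤ 1 := by
      rw [div_le_one (by positivity), Real.sqrt_le_left (by positivity)]
      nlinarith
    calc √(q * d) / q.totient * ‖∑ m ∈ Icc 1 (N / d), muChar χ m * e (m * (d * β))‖
        ≤ √(q * d) / q.totient * (N / d) := by gcongr
      _ = √q / q.totient * (√d / d) * N := by
          rw [Real.sqrt_mul hq'.le]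
          ring
      _ ≤ t / √q * 1 * N := by gcongr
      _ = t / √q * N := by ring
  refine (sum_le_sum fun d hd => sum_le_sum fun χ hχ => h1 d hd χ hχ).trans ?_
  simp only [sum_const, nsmul_eq_mul]
  have h6 : (#{χ : DirichletCharacter ℂ q | χ ^ 2 = 1} : ℝ) ≤ 2 * t := by
    rw [ht]
    exact_mod_cast card_real_char_le q
  calc t * ((#{χ : DirichletCharacter ℂ q | χ ^ 2 = 1} : ℝ) * (t / √q * N))
      ≤ t * ((2 * t) * (t / √q * N)) := by gcongr
    _ = _ := by ring

lemma rpow_of_large {q L C t : ℝ} (hL : 1 ≤ L) (hC : 0 ≤ C) (hq : 1 ≤ q) (h : L ^ 6 < q ^ 5)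
    (ht : t ≤ C * q ^ (1 / 72 : ℝ)) (ht0 : 0 ≤ t) :
    t ^ 3 / √q ≤ C ^ 3 * L ^ (-(11 / 20) : ℝ) := by
  have hq0 : 0 < q := by linarith
  have h1 : t ^ 3 / √q ≤ C ^ 3 * q ^ (-(11 / 24) : ℝ) := by
    calc t ^ 3 / √q ≤ (C * q ^ (1 / 72 : ℝ)) ^ 3 / √q := by gcongr
      _ = C ^ 3 * ((q ^ (1 / 72 : ℝ)) ^ 3 / q ^ (1 / 2 : ℝ)) := by
          rw [Real.sqrt_eq_rpow, mul_pow]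
          ring
      _ = C ^ 3 * q ^ (-(11 / 24) : ℝ) := by
          rw [← Real.rpow_natCast (q ^ (1 / 72 : ℝ)), ← Real.rpow_mul hq0.le, ← Real.rpow_sub hq0]
          norm_num
  refine h1.trans (mul_le_mul_of_nonneg_left ?_ (by positivity))
  have h2 : L ^ (6 / 5 : ℝ) ≤ q := by
    have : L ^ (6 / 5 : ℝ) = (L ^ 6) ^ (1 / 5 : ℝ) := by
      rw [← Real.rpow_natCast, ← Real.rpow_mul (by linarith)]
      norm_num
    rw [this]
    calc (L ^ 6) ^ (1 / 5 : ℝ) ≤ (q ^ 5) ^ (1 / 5 : ℝ) :=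
          Real.rpow_le_rpow (by positivity) h.le (by norm_num)
      _ = q := by
          rw [← Real.rpow_natCast, ← Real.rpow_mul hq0.le]
          norm_num
  calc q ^ (-(11 / 24) : ℝ) ≤ (L ^ (6 / 5 : ℝ)) ^ (-(11 / 24) : ℝ) :=
        Real.rpow_le_rpow_of_nonpos (by positivity) h2 (by norm_num)
    _ = L ^ (-(11 / 20) : ℝ) := by
        rw [← Real.rpow_mul (by linarith)]
        norm_num

lemma inv_le_rpow {L : ℝ} (hL : 1 ≤ L) : 1 / L ≤ L ^ (-(11 / 20) : ℝ) := by
  rw [one_div, ← Real.rpow_neg_one]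
  exact Real.rpow_le_rpow_of_exponent_le hL (by norm_num)

lemma major_arith {q L C N b : ℝ} (hL : 1 ≤ L) (hC : 0 ≤ C) (hq : 0 ≤ q) (hqL : q ≤ L ^ 8)
    (hN : 0 ≤ N) (hb0 : 0 ≤ b) (hb : b * N ≤ L ^ 8) :
    q ^ 3 * (C * q ^ 2 * (N / L ^ 49) * (1 + 2 * Real.pi * b * N)) ≤ 8 * C * (N / L) := by
  have hL0 : 0 < L := by linarith
  have h1 : 1 + 2 * Real.pi * b * N ≤ 8 * L ^ 8 := by
    have h2 : (1 : ℝ) ≤ L ^ 8 := one_le_pow₀ hL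
    have := Real.pi_lt_d2
    have h3 : 2 * Real.pi * (b * N) ≤ 2 * 3.15 * L ^ 8 := by gcongr
    nlinarith
  calc q ^ 3 * (C * q ^ 2 * (N / L ^ 49) * (1 + 2 * Real.pi * b * N))
      ≤ (L ^ 8) ^ 3 * (C * (L ^ 8) ^ 2 * (N / L ^ 49) * (8 * L ^ 8)) := by
        have := Real.pi_pos
        gcongr
    _ = 8 * C * (N / L) := by
        field_simp

/-- The estimate on the major arcs: `θ` close to a rational with small denominator. -/
lemma major_arc : ∃ C : ℝ, 0 < C ∧ ∀ N : ℕ, 9 ≤ N → ∀ q : ℕ, q ≠ 0 →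
    (q : ℝ) ≤ Real.log N ^ 8 → ∀ a : ℤ, IsCoprime a (q : ℤ) → ∀ β : ℝ,
    |β| * N ≤ Real.log N ^ 8 →
      ‖S N (a / q + β)‖ ≤ C * N * (Real.log N) ^ (-(11 / 20) : ℝ) := by
  obtain ⟨C1, hC1, h1⟩ := nonreal_sum 49
  obtain ⟨C2, hC2, h2⟩ := real_sum (A := 49) (by norm_num)
  obtain ⟨C3, hC3, h3⟩ := principal_sum 49
  obtain ⟨D, hD, hdiv⟩ := divisor_bound (ε := 1 / 72) (by norm_num)
  set K := C1 + C2 + C3 with hK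
  refine ⟨2 * D ^ 3 + 8 * K, by positivity, fun N hN q hq hqL a ha β hβ => ?_⟩
  have : NeZero q := ⟨hq⟩
  have hL := one_le_log_of_nine_le hN
  set L := Real.log N with hLdef
  have hq1 : (1 : ℝ) ≤ q := by exact_mod_cast Nat.one_le_iff_ne_zero.2 hq
  have hN0 : (0 : ℝ) ≤ N := Nat.cast_nonneg _
  have hL0 : 0 < L := by linarith
  have hq2 : (1 : ℝ) ≤ (q : ℝ) ^ 2 := one_le_pow₀ hq1
  have hX0 : 0 ≤ (N : ℝ) / L ^ 49 := by positivity
  have hup : ∀ c : ℝ, 0 ≤ c → c ≤ K → c * (N / L ^ 49) ≤ K * (q : ℝ) ^ 2 * (N / L ^ 49) := by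
    intro c hc hcK
    refine mul_le_mul_of_nonneg_right ?_ hX0
    nlinarith
  have hP0 : 0 ≤ K * (q : ℝ) ^ 2 * (N / L ^ 49) := by positivity
  have hgood : ∀ s : Finset (DirichletCharacter ℂ q),
      (∀ χ ∈ s, ∀ x ≤ N, ‖∑ n ∈ Icc 1 x, muChar χ n‖ ≤ K * (q : ℝ) ^ 2 * (N / L ^ 49)) →
      ∑ d ∈ q.divisors, ∑ χ ∈ s,
        √(q * d) / q.totient * ‖∑ m ∈ Icc 1 (N / d), muChar χ m * e (m * (d * β))‖
        ≤ 8 * K * N * L ^ (-(11 / 20) : ℝ) := by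
    intro s hs
    refine (major_good β N s hs hP0).trans ((major_arith hL (by positivity) (by positivity) hqL
      hN0 (abs_nonneg β) hβ).trans ?_)
    calc 8 * K * (N / L) = 8 * K * N * (1 / L) := by ring
      _ ≤ _ := mul_le_mul_of_nonneg_left (inv_le_rpow hL) (by positivity)
  have hnonreal : ∀ χ : DirichletCharacter ℂ q, χ ^ 2 ≠ 1 → ∀ x ≤ N,
      ‖∑ n ∈ Icc 1 x, muChar χ n‖ ≤ K * (q : ℝ) ^ 2 * (N / L ^ 49) := fun χ hχ x hx =>
    (h1 N hN q hq hqL χ hχ x hx).trans (hup C1 hC1.le (by rw [hK]; linarith))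
  have hE0 : 0 ≤ (N : ℝ) * L ^ (-(11 / 20) : ℝ) := by positivity
  refine (major_expand ha β N).trans ?_
  by_cases hsmall : (q : ℝ) ^ 5 ≤ L ^ 6
  · refine (hgood univ fun χ _ x hx => ?_).trans ?_
    · by_cases hχ : χ ^ 2 = 1
      · by_cases hχ1 : χ = 1
        · subst hχ1
          refine (h3 N hN q hq x hx).trans ?_
          gcongr
          rw [hK]
          linarith
        · exact (h2 N hN q hq hsmall χ hχ1 hχ x hx).trans (hup C2 hC2.le (by rw [hK]; linarith))
      · exact hnonreal χ hχ x hx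
    · have : 0 ≤ D ^ 3 := by positivity
      nlinarith
  · rw [not_le] at hsmall
    have hsplit : ∀ F : ℕ → DirichletCharacter ℂ q → ℝ,
        ∑ d ∈ q.divisors, ∑ χ : DirichletCharacter ℂ q, F d χ
          = ∑ d ∈ q.divisors, ∑ χ : DirichletCharacter ℂ q with χ ^ 2 = 1, F d χ
            + ∑ d ∈ q.divisors, ∑ χ : DirichletCharacter ℂ q with ¬ χ ^ 2 = 1, F d χ := by
      intro F
      rw [← sum_add_distrib]
      exact sum_congr rfl fun d _ => (sum_filter_add_sum_filter_not _ _ _).symm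
    rw [hsplit]
    have hb := major_bad (q := q) β N
    have hr := rpow_of_large hL (by linarith : (0 : ℝ) ≤ D) hq1 hsmall (hdiv q hq)
      (Nat.cast_nonneg _)
    have hg := hgood {χ | ¬ χ ^ 2 = 1} fun χ hχ => hnonreal χ (mem_filter.1 hχ).2
    have hb' : 2 * (#q.divisors : ℝ) ^ 3 / √q * N ≤ 2 * D ^ 3 * N * L ^ (-(11 / 20) : ℝ) := by
      calc 2 * (#q.divisors : ℝ) ^ 3 / √q * N = 2 * N * ((#q.divisors : ℝ) ^ 3 / √q) := by ring
        _ ≤ 2 * N * (D ^ 3 * L ^ (-(11 / 20) : ℝ)) := by gcongr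
        _ = _ := by ring
    refine (add_le_add (hb.trans hb') hg).trans (le_of_eq ?_)
    ring

end

section

open Filter Finset Topology MeasureTheory

/-! ### Davenport's bound -/

lemma norm_S_le (N : ℕ) (θ : ℝ) : ‖S N θ‖ ≤ N := by
  rw [S]
  refine (norm_sum_le_of_le (f := fun n : ℕ => (ArithmeticFunction.moebius n : ℂ) * e (n * θ)) _
    (n := fun _ => 1) fun n _ => ?_).trans (by simp)
  rw [norm_mul, norm_e, mul_one, Complex.norm_intCast]
  exact_mod_cast ArithmeticFunction.abs_moebius_le_one

/-- The bound of `minor_arc` with `U` of size about `L ^ 8` is `O(N L ^ (-11/20))`. -/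
lemma minor_arith {s N L u : ℝ} (hL : 2 ≤ L) (hN : 0 ≤ N) (hu1 : L ^ 8 / 2 ≤ u)
    (hu2 : u ≤ L ^ 8)
    (h : s * L ≤ N * (1 + (Real.log 4 + 4) * (1 + Real.log u)
        + Real.log u * (1 + Real.log u)) + 7 * (L * (1 + L) * N) / √√u) :
    s ≤ 2000 * N * L ^ (-(11 / 20) : ℝ) := by
  have hL0 : 0 < L := by linarith
  have hu : 1 ≤ u := by
    have : (2 : ℝ) ^ 8 ≤ L ^ 8 := by gcongr
    linarith
  have hu0 : 0 < u := by linarith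
  set w := L ^ (9 / 40 : ℝ) with hw
  have hw1 : 1 ≤ w := Real.one_le_rpow (by linarith) (by norm_num)
  have hlogu0 : 0 ≤ Real.log u := Real.log_nonneg hu
  have hlogu : Real.log u ≤ 40 * w := by
    have h1 : Real.log u ≤ 8 * Real.log L := by
      have := Real.log_le_log hu0 hu2
      rwa [Real.log_pow] at this
    have h2 : Real.log L ≤ w / (9 / 40) := Real.log_le_rpow_div hL0.le (by norm_num)
    have h3 : w / (9 / 40) ≤ 5 * w := by
      rw [div_le_iff₀ (by norm_num)]
      linarith
    linarith
  have hlog4 : Real.log 4 ≤ 2 := by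
    rw [show (4 : ℝ) = 2 ^ 2 by norm_num, Real.log_pow]
    have := Real.log_two_lt_d9
    norm_num
    linarith
  have hroot : L ^ 2 / 2 ≤ √√u := by
    refine Real.le_sqrt_of_sq_le (Real.le_sqrt_of_sq_le ?_)
    have : 0 ≤ L ^ 8 := by positivity
    calc ((L ^ 2 / 2) ^ 2) ^ 2 = L ^ 8 / 16 := by ring
      _ ≤ u := by linarith
  have h7 : 7 * (L * (1 + L) * N) / √√u ≤ 28 * N := by
    rw [div_le_iff₀ (lt_of_lt_of_le (by positivity) hroot)]
    calc 7 * (L * (1 + L) * N) ≤ 7 * (L * (L + L) * N) := by gcongr; linarith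
      _ = 28 * N * (L ^ 2 / 2) := by ring
      _ ≤ 28 * N * √√u := by gcongr
  have h8 : s * L ≤ N * (2000 * w ^ 2) := by
    have h9 : 1 + (Real.log 4 + 4) * (1 + Real.log u) + Real.log u * (1 + Real.log u)
        ≤ 1 + (2 + 4) * (1 + 40 * w) + 40 * w * (1 + 40 * w) := by gcongr
    have h10 := mul_le_mul_of_nonneg_left h9 hN
    have h11 : N * (1 + (2 + 4) * (1 + 40 * w) + 40 * w * (1 + 40 * w)) + 28 * N
        ≤ N * (2000 * w ^ 2) := by
      have h12 : 35 + 280 * w + 1600 * w ^ 2 ≤ 2000 * w ^ 2 := by nlinarith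
      have := mul_le_mul_of_nonneg_left h12 hN
      nlinarith
    linarith
  have h13 : w ^ 2 = L ^ (-(11 / 20) : ℝ) * L := by
    rw [hw, ← Real.rpow_natCast, ← Real.rpow_mul hL0.le, ← Real.rpow_add_one hL0.ne']
    norm_num
  rw [h13] at h8
  refine le_of_mul_le_mul_right ?_ hL0
  linarith

/-- Dirichlet's approximation theorem places every `θ` on a minor or a major arc. -/
lemma davenport_large : ∃ C : ℝ, 0 < C ∧ ∀ N : ℕ, 9 ≤ N → Real.log N ^ 8 ≤ N → ∀ θ : ℝ,
    ‖S N θ‖ ≤ C * N * (Real.log N) ^ (-(11 / 20) : ℝ) := by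
  obtain ⟨C, hC, hmaj⟩ := major_arc
  refine ⟨C + 2000, by positivity, fun N hN hLN θ => ?_⟩
  have hN0 : (0 : ℝ) < N := by exact_mod_cast (by omega : 0 < N)
  have hL : 2 ≤ Real.log N := by
    rw [Real.le_log_iff_exp_le hN0]
    have h1 : Real.exp 2 = Real.exp 1 ^ 2 := by rw [← Real.exp_nat_mul]; norm_num
    have h2 := Real.exp_one_lt_d9
    have h3 : (9 : ℝ) ≤ N := by exact_mod_cast hN
    rw [h1]
    have h4 : Real.exp 1 ^ 2 ≤ 3 ^ 2 := by
      have := Real.exp_pos 1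
      gcongr
      linarith
    linarith
  set L := Real.log N with hLdef
  have hL0 : 0 < L := by linarith
  have hL8 : (2 : ℝ) ^ 8 ≤ L ^ 8 := by gcongr
  set U := ⌊L ^ 8⌋₊ with hU
  have hU2 : (U : ℝ) ≤ L ^ 8 := Nat.floor_le (by positivity)
  have hU1 : L ^ 8 / 2 ≤ U := by
    have := Nat.lt_floor_add_one (L ^ 8)
    rw [← hU] at this
    linarith
  have hUtwo : 2 ≤ U := by
    have : (2 : ℝ) ≤ U := by linarith
    exact_mod_cast this
  have hUN : U ≤ N := by exact_mod_cast hU2.trans hLN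
  have hn : 0 < N / U := Nat.div_pos hUN (by omega)
  obtain ⟨r, hr, hrn⟩ := Real.exists_rat_abs_sub_le_and_den_le θ hn
  set q := r.den with hq
  have hq0 : q ≠ 0 := r.den_nz
  have hq0' : (0 : ℝ) < q := by exact_mod_cast r.den_pos
  have hcop : IsCoprime r.num (q : ℤ) := by
    rw [Int.isCoprime_iff_nat_coprime]
    exact r.reduced
  have hrcast : (r : ℝ) = r.num / q := Rat.cast_def r
  rw [hrcast] at hr
  have hE : 0 ≤ (N : ℝ) * L ^ (-(11 / 20) : ℝ) := by positivity
  rcases le_or_gt U q with hUq | hUq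
  · have hqN : q * U ≤ N := (Nat.le_div_iff_mul_le (by omega)).1 hrn
    have hθ : |θ - r.num / q| ≤ 1 / (q : ℝ) ^ 2 := by
      refine hr.trans ?_
      have : (q : ℝ) ≤ (N / U : ℕ) := by exact_mod_cast hrn
      rw [sq]
      gcongr
      linarith
    have h1 := minor_arc N U q θ r.num (by omega) (hUtwo.trans hUq) hUq hqN hcop hθ
    have h2 := minor_arith hL hN0.le hU1 hU2 h1
    nlinarith
  · have hqU : (q : ℝ) ≤ U := by exact_mod_cast hUq.le
    have hβ : |θ - r.num / q| * N ≤ L ^ 8 := by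
      have h1 : (N : ℝ) ≤ ((N / U : ℕ) + 1) * U := by
        have : N ≤ (N / U + 1) * U := by
          have := Nat.lt_div_mul_add (a := N) (b := U) (by omega)
          rw [add_mul, one_mul]
          exact this.le
        exact_mod_cast this
      have hn0 : (0 : ℝ) < (N / U : ℕ) + 1 := by positivity
      have hq1 : (1 : ℝ) ≤ q := by exact_mod_cast r.den_pos
      have h2 : |θ - r.num / q| ≤ 1 / ((N / U : ℕ) + 1) := hr.trans (by
        gcongr
        nlinarith)
      calc |θ - r.num / q| * N ≤ 1 / ((N / U : ℕ) + 1) * (((N / U : ℕ) + 1) * U) := by gcongr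
        _ = U := by field_simp
        _ ≤ L ^ 8 := hU2
    have h1 := hmaj N hN q hq0 (hqU.trans hU2) r.num hcop (θ - r.num / q) hβ
    rw [add_sub_cancel] at h1
    nlinarith

/-- `davenport_large` extended to all `N ≥ 2`: the finitely many small `N` only affect the constant. -/
theorem davenport : DavenportBound := by
  obtain ⟨C, hC, h⟩ := davenport_large
  have h1 : ∀ᶠ N : ℕ in atTop, Real.log N ^ 8 ≤ N := by
    have := (Real.isLittleO_pow_log_id_atTop (n := 8)).bound (c := 1) one_pos
    filter_upwards [tendsto_natCast_atTop_atTop.eventually this, eventually_ge_atTop 1]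
      with N hN hN1
    simp only [Real.norm_eq_abs, id, one_mul, Nat.abs_cast] at hN
    exact (le_abs_self _).trans hN
  obtain ⟨M, hM⟩ := eventually_atTop.1 h1
  refine ⟨C + Real.log (M + 9) ^ (11 / 20 : ℝ), fun N hN θ => ?_⟩
  have hL : 0 < Real.log N := Real.log_pos (by exact_mod_cast hN)
  have hM0 : 0 < Real.log (M + 9) := Real.log_pos (by
    have : (0 : ℝ) ≤ M := Nat.cast_nonneg _
    linarith)
  have hN0 : (0 : ℝ) ≤ N := Nat.cast_nonneg _
  have hE : 0 ≤ (N : ℝ) * (Real.log N) ^ (-(11 / 20) : ℝ) := by positivity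
  rcases le_or_gt (M + 9) N with hMN | hMN
  · have h2 := h N (by omega) (hM N (by omega)) θ
    have : 0 ≤ Real.log (M + 9) ^ (11 / 20 : ℝ) * ((N : ℝ) * (Real.log N) ^ (-(11 / 20) : ℝ)) := by
      positivity
    nlinarith
  · have h2 := norm_S_le N θ
    have h3 : 1 ≤ Real.log (M + 9) ^ (11 / 20 : ℝ) * (Real.log N) ^ (-(11 / 20) : ℝ) := by
      rw [Real.rpow_neg hL.le, ← div_eq_mul_inv, one_le_div (by positivity)]
      refine Real.rpow_le_rpow hL.le (Real.log_le_log (by positivity) ?_) (by norm_num)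
      exact_mod_cast hMN.le
    nlinarith

end

end MoebiusWeight

open MeasureTheory Filter Finset

/-- **The Möbius function is a good weight with limit zero for the pointwise
ergodic theorem** (measure-theoretic Sarnak conjecture): for a measure-preserving
transformation `T` of a probability space `(X, ν)` and `f ∈ L¹(X, ν)`, for
ν-a.e. `x` the averages `(1/N) ∑_{n=1}^{N} μ(n) f(T^{n} x)` converge to `0`. -/
theorem moebius_good_weight_pointwise
    {X : Type*} [MeasurableSpace X] (ν : Measure X) [IsProbabilityMeasure ν]
    (T : X → X) (hT : MeasurePreserving T ν ν)
    (f : X → ℝ) (hf : Integrable f ν) :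
    ∀ᵐ x ∂ν, Tendsto
      (fun N : ℕ => (1 / (N : ℝ)) *
        ∑ n ∈ Finset.Icc 1 N,
          (ArithmeticFunction.moebius n : ℝ) * f (T^[n] x))
      atTop (nhds 0) := by
  exact MoebiusWeight.ergodic_reduction MoebiusWeight.davenport hT f hf
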